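/- arXiv:2206.12801 — 2 statements merged into one kernel-verified Lean document; each statement's English description precedes it below -/
import Mathlib

section
/- Let 𝒮₀ be a nonempty decreasing subset of 𝒮, let z∈V_S with z⁻=v₁, and let h:𝒫(V_S)→ℝ be bounded and continuous. Then lim_{n→∞} W^n_{𝒮₀}(z) = inf_{μ∈𝒞(𝒮₀)} ( Λ^z_{δ,𝒮₀}(μ) + h(μ) ), as an equality in (−∞,+∞] (with inf over the empty set equal to +∞). -/
open scoped BigOperators Classical ENNReal
open Filter Topology

noncomputable section
namespace ORRW

/-- Probability measures on a finite type `A`, topologized as a subset of `ℝ^A`. -/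
abbrev ProbMeas (A : Type) [Fintype A] : Type :=
  {p : A → ℝ // (∀ a, 0 ≤ p a) ∧ ∑ a, p a = 1}

/-- Relative entropy `R(γ‖ρ)` between two finitely supported "rows", valued in `EReal`,
with `+∞` when absolute continuity fails. -/
def relEnt {A : Type} [Fintype A] (γ ρ : A → ℝ) : EReal :=
  if ∀ a, ρ a = 0 → γ a = 0 then ((∑ a, γ a * Real.log (γ a / ρ a) : ℝ) : EReal)
  else (⊤ : EReal)

/-- `∫ R(q‖p) dν = Σ_a ν(a) · R(q(a,·)‖p(a,·))`. -/
def relEntInt {A : Type} [Fintype A] (ν : A → ℝ) (q p : A → A → ℝ) : EReal :=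
  ∑ a, (ν a : EReal) * relEnt (q a) (p a)

/-- `ν` is an invariant measure of the kernel `q`. -/
def Invariant {A : Type} [Fintype A] (ν : A → ℝ) (q : A → A → ℝ) : Prop :=
  ∀ y, ∑ x, ν x * q x y = ν y

/-- Extended-real logarithm: `⊥` at nonpositive arguments. -/
def elog (x : ℝ) : EReal := if x ≤ 0 then (⊥ : EReal) else ((Real.log x : ℝ) : EReal)

/-- Empirical measure of a finite trajectory `f : Fin (n+1) → A`. -/
def empMeas {A : Type} [Fintype A] [DecidableEq A] (n : ℕ) (f : Fin (n + 1) → A) :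
    ProbMeas A :=
  ⟨fun a => ((Finset.univ.filter (fun i => f i = a)).card : ℝ) / (n + 1),
    fun a => by positivity, by
      have key : ∑ a : A, ((Finset.univ.filter (fun i => f i = a)).card) = n + 1 := by
        have h := Finset.card_eq_sum_card_fiberwise
          (s := (Finset.univ : Finset (Fin (n + 1)))) (t := (Finset.univ : Finset A))
          (f := f) (fun i _ => Finset.mem_univ (f i))
        simpa using h.symm
      have key' : ∑ a : A, (((Finset.univ.filter (fun i => f i = a)).card : ℝ)) = (n : ℝ) + 1 := by
        have h2 := congrArg (fun m : ℕ => (m : ℝ)) key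
        push_cast at h2
        simpa using h2
      rw [← Finset.sum_div, key', div_self (by positivity)]⟩

section Graph

variable {V : Type} [Fintype V] [DecidableEq V]

/-- Weight of an edge given the set `F` of already traversed edges. -/
def gw (δ : ℝ) (F : Finset (Sym2 V)) (e : Sym2 V) : ℝ := if e ∈ F then δ else 1

/-- The transition kernel `p̂_F` on `V`. -/
def phat (G : SimpleGraph V) [DecidableRel G.Adj] (δ : ℝ) (F : Finset (Sym2 V))
    (x y : V) : ℝ :=
  if G.Adj x y then gw δ F s(x, y) / ∑ z ∈ G.neighborFinset x, gw δ F s(x, z) else 0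

/-- Two edges are adjacent iff they share a vertex. -/
def edgeAdj (e e' : Sym2 V) : Prop := ∃ v, v ∈ e ∧ v ∈ e'

/-- `x` is a vertex of the edge set `F`. -/
def memVerts (F : Finset (Sym2 V)) (x : V) : Prop := ∃ e ∈ F, x ∈ e

/-- `𝒯_G`: stochastic matrices on `V` adapted to `G`. -/
def TG (G : SimpleGraph V) : Set (V → V → ℝ) :=
  {q | (∀ x y, 0 ≤ q x y) ∧ (∀ x, ∑ y, q x y = 1) ∧ ∀ x y, q x y ≠ 0 → G.Adj x y}

/-- `𝒯(F)`: stochastic kernels from the vertex set of `F` to `V`, supported on `F`. -/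
def TE (F : Finset (Sym2 V)) : Set (V → V → ℝ) :=
  {q | (∀ x y, 0 ≤ q x y) ∧ (∀ x, memVerts F x → ∑ y, q x y = 1) ∧
    ∀ x y, q x y ≠ 0 → s(x, y) ∈ F}

/-- `ℰ`: admissible increasing sequences of traversed edge sets. -/
def seqE (G : SimpleGraph V) [DecidableRel G.Adj] (v₁ : V) :
    Set (Fin G.edgeFinset.card → Finset (Sym2 V)) :=
  {Es | (∀ k, Es k ⊆ G.edgeFinset) ∧ (∀ k, (Es k).card = (k : ℕ) + 1) ∧
    (∀ k l : Fin G.edgeFinset.card, (k : ℕ) + 1 = (l : ℕ) → Es k ⊂ Es l) ∧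
    (∀ k : Fin G.edgeFinset.card, (k : ℕ) = 0 → ∃ e ∈ Es k, v₁ ∈ e) ∧
    (∀ k l : Fin G.edgeFinset.card, (k : ℕ) + 1 = (l : ℕ) →
      ∀ e ∈ Es l \ Es k, ∃ e' ∈ Es k, edgeAdj e e')}

/-- The rate function `I_δ`. -/
def Ifun (G : SimpleGraph V) [DecidableRel G.Adj] (v₁ : V) (δ : ℝ) (ν : ProbMeas V) : EReal :=
  sInf { c : EReal |
    ∃ (νs : Fin G.edgeFinset.card → ProbMeas V) (r : Fin G.edgeFinset.card → ℝ)
      (Es : Fin G.edgeFinset.card → Finset (Sym2 V))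
      (qs : Fin G.edgeFinset.card → V → V → ℝ),
      Es ∈ seqE G v₁ ∧ (∀ k, 0 ≤ r k) ∧ (∑ k, r k = 1) ∧
      (∀ k x, (νs k).1 x ≠ 0 → memVerts (Es k) x) ∧
      (∀ x, ∑ k, r k * (νs k).1 x = ν.1 x) ∧
      (∀ k, qs k ∈ TE (Es k)) ∧ (∀ k, Invariant (νs k).1 (qs k)) ∧
      c = ∑ k, ((r k : ℝ) : EReal) * relEntInt (νs k).1 (qs k) (phat G δ (Es k)) }

/-- Edges traversed along a path, given as a list of consecutively visited vertices. -/
def pathEdges : List V → Finset (Sym2 V)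
  | [] => ∅
  | [_] => ∅
  | x :: y :: t => insert s(x, y) (pathEdges (y :: t))

/-- Product of one-step ORRW transition probabilities along a trajectory,
the trajectory being listed in reverse chronological order. -/
def stepsProb (G : SimpleGraph V) [DecidableRel G.Adj] (δ : ℝ) : List V → ℝ
  | [] => 1
  | [_] => 1
  | y :: x :: t => phat G δ (pathEdges (x :: t).reverse) x y * stepsProb G δ (x :: t)

/-- The law of `(X_0, …, X_n)` for the `δ`-ORRW started at `v₁`. -/
def trajProb (G : SimpleGraph V) [DecidableRel G.Adj] (δ : ℝ) (v₁ : V) (n : ℕ)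
    (f : Fin (n + 1) → V) : ℝ :=
  if f 0 = v₁ then stepsProb G δ (List.ofFn f).reverse else 0

/-- `P_{v₁}(L_{n+1} ∈ C)`: the probability that the empirical measure of the first
`n+1` positions of the `δ`-ORRW lies in `C`. -/
def probEmp (G : SimpleGraph V) [DecidableRel G.Adj] (δ : ℝ) (v₁ : V) (n : ℕ)
    (C : Set (ProbMeas V)) : ℝ :=
  ∑ f : Fin (n + 1) → V, if empMeas n f ∈ C then trajProb G δ v₁ n f else 0

/-- The family `𝒮` of edge sets of connected subgraphs having an edge at `v₁`. -/
def scrS (G : SimpleGraph V) [DecidableRel G.Adj] (v₁ : V) : Set (Finset (Sym2 V)) :=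
  {F | F ⊆ G.edgeFinset ∧ (∃ e ∈ F, v₁ ∈ e) ∧
    ∀ x y : V, memVerts F x → memVerts F y →
      (SimpleGraph.fromEdgeSet (↑F : Set (Sym2 V))).Reachable x y}

/-- `𝒮₀` is a decreasing subset of `𝒮`. -/
def DecreasingIn (G : SimpleGraph V) [DecidableRel G.Adj] (v₁ : V)
    (S0 : Set (Finset (Sym2 V))) : Prop :=
  ∀ F₁ F₂, F₁ ∈ scrS G v₁ → F₂ ∈ scrS G v₁ → F₁ ⊆ F₂ → F₂ ∈ S0 → F₁ ∈ S0

/-- `P_{v₁}(T_{𝒮₀} > n)`. -/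
def probTgt (G : SimpleGraph V) [DecidableRel G.Adj] (δ : ℝ) (v₁ : V)
    (S0 : Set (Finset (Sym2 V))) (n : ℕ) : ℝ :=
  ∑ f : Fin (n + 1) → V,
    if ∀ k, 1 ≤ k → k ≤ n → pathEdges ((List.ofFn f).take (k + 1)) ∈ S0 then
      trajProb G δ v₁ n f
    else 0

/-- `P_{v₁}(C_E > n)` for the edge cover time `C_E`. -/
def probCgt (G : SimpleGraph V) [DecidableRel G.Adj] (δ : ℝ) (v₁ : V) (n : ℕ) : ℝ :=
  ∑ f : Fin (n + 1) → V,
    if ¬ G.edgeFinset ⊆ pathEdges (List.ofFn f) then trajProb G δ v₁ n f else 0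

/-- `E_{v₁}[exp (α T_{𝒮₀})]`, valued in `ℝ≥0∞`; the stopping time takes values in
`{1, 2, …} ∪ {∞}`. -/
def expT (G : SimpleGraph V) [DecidableRel G.Adj] (δ : ℝ) (v₁ : V)
    (S0 : Set (Finset (Sym2 V))) (α : ℝ) : ℝ≥0∞ :=
  (∑' n : ℕ, ENNReal.ofReal
      (Real.exp (α * (n + 1)) * (probTgt G δ v₁ S0 n - probTgt G δ v₁ S0 (n + 1)))) +
    (if 0 < α then (⊤ : ℝ≥0∞) else if α = 0 then 1 else 0) *
      ENNReal.ofReal (⨅ n : ℕ, probTgt G δ v₁ S0 n)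

/-- `E_{v₁}[exp (α C_E)]`, valued in `ℝ≥0∞`. -/
def expC (G : SimpleGraph V) [DecidableRel G.Adj] (δ : ℝ) (v₁ : V) (α : ℝ) : ℝ≥0∞ :=
  (∑' n : ℕ, ENNReal.ofReal
      (Real.exp (α * (n + 1)) * (probCgt G δ v₁ n - probCgt G δ v₁ (n + 1)))) +
    (if 0 < α then (⊤ : ℝ≥0∞) else if α = 0 then 1 else 0) *
      ENNReal.ofReal (⨅ n : ℕ, probCgt G δ v₁ n)

/-- The critical exponent `α_c(δ)` attached to a family `𝒮₀` of edge sets. -/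
def alphaC (G : SimpleGraph V) [DecidableRel G.Adj] (δ : ℝ)
    (S0 : Set (Finset (Sym2 V))) : EReal :=
  sInf { c : EReal | ∃ (ν : ProbMeas V) (F : Finset (Sym2 V)) (q : V → V → ℝ),
    F ∈ S0 ∧ q ∈ TE F ∧ (∀ x, ν.1 x ≠ 0 → memVerts F x) ∧ Invariant ν.1 q ∧
    c = relEntInt ν.1 q (phat G δ F) }

/-- `α_c^1(δ)`: the critical exponent for the cover time. -/
def alphaC1 (G : SimpleGraph V) [DecidableRel G.Adj] (v₁ : V) (δ : ℝ) : EReal :=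
  alphaC G δ (scrS G v₁ \ {G.edgeFinset})

end Graph

section Lifted

variable {V : Type} [Fintype V] [LinearOrder V]

/-- Smaller endpoint of an unordered pair. -/
def sym2lo (e : Sym2 V) : V := Sym2.lift ⟨fun a b => min a b, fun a b => min_comm a b⟩ e

/-- Larger endpoint of an unordered pair. -/
def sym2hi (e : Sym2 V) : V := Sym2.lift ⟨fun a b => max a b, fun a b => max_comm a b⟩ e

/-- `V_S = E × {-1, 1}`: vertex set of the lifted directed graph `S`
(`true` plays the role of `+1`). -/
abbrev VSet (G : SimpleGraph V) [DecidableRel G.Adj] : Type :=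
  {e : Sym2 V // e ∈ G.edgeFinset} × Bool

/-- Tail `z⁻` of an oriented edge. -/
def zm (G : SimpleGraph V) [DecidableRel G.Adj] (z : VSet G) : V :=
  if z.2 then sym2lo z.1.1 else sym2hi z.1.1

/-- Head `z⁺` of an oriented edge. -/
def zp (G : SimpleGraph V) [DecidableRel G.Adj] (z : VSet G) : V :=
  if z.2 then sym2hi z.1.1 else sym2lo z.1.1

/-- The kernel `p_F` on the lifted directed graph `S`. -/
def pS (G : SimpleGraph V) [DecidableRel G.Adj] (δ : ℝ) (F : Finset (Sym2 V))
    (z₁ z₂ : VSet G) : ℝ :=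
  if zp G z₁ = zm G z₂ then
    gw δ F z₂.1.1 / ∑ w : VSet G, (if zp G z₁ = zm G w then gw δ F w.1.1 else 0)
  else 0

/-- `𝒯_S`: stochastic matrices on `V_S` moving along orientations. -/
def TS (G : SimpleGraph V) [DecidableRel G.Adj] : Set (VSet G → VSet G → ℝ) :=
  {q | (∀ z w, 0 ≤ q z w) ∧ (∀ z, ∑ w, q z w = 1) ∧ ∀ z w, q z w ≠ 0 → zp G z = zm G w}

/-- `𝒞(𝒮₀)`: probability measures on `V_S` whose first marginal is supported in
some member of `𝒮₀`. -/
def CC (G : SimpleGraph V) [DecidableRel G.Adj] (S0 : Set (Finset (Sym2 V))) :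
    Set (ProbMeas (VSet G)) :=
  {μ | ∃ F ∈ S0, ∀ z : VSet G, μ.1 z ≠ 0 → z.1.1 ∈ F}

/-- `Λ_{δ,𝒮₀}`. -/
def Lam (G : SimpleGraph V) [DecidableRel G.Adj] (v₁ : V) (δ : ℝ)
    (S0 : Set (Finset (Sym2 V))) (μ : ProbMeas (VSet G)) : EReal :=
  sInf { c : EReal |
    ∃ (μs : Fin G.edgeFinset.card → ProbMeas (VSet G)) (r : Fin G.edgeFinset.card → ℝ)
      (Es : Fin G.edgeFinset.card → Finset (Sym2 V))
      (qs : Fin G.edgeFinset.card → VSet G → VSet G → ℝ),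
      Es ∈ seqE G v₁ ∧ (∀ k, 0 ≤ r k) ∧ (∀ k, Es k ∉ S0 → r k = 0) ∧ (∑ k, r k = 1) ∧
      (∀ k z, (μs k).1 z ≠ 0 → z.1.1 ∈ Es k) ∧
      (∀ z, ∑ k, r k * (μs k).1 z = μ.1 z) ∧
      (∀ k, qs k ∈ TS G) ∧ (∀ k, Invariant (μs k).1 (qs k)) ∧
      c = ∑ k, ((r k : ℝ) : EReal) * relEntInt (μs k).1 (qs k) (pS G δ (Es k)) }

/-- `Λ^z_{δ,𝒮₀}`. -/
def LamZ (G : SimpleGraph V) [DecidableRel G.Adj] (v₁ : V) (δ : ℝ)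
    (S0 : Set (Finset (Sym2 V))) (z : VSet G) (μ : ProbMeas (VSet G)) : EReal :=
  sInf { c : EReal |
    ∃ (μs : Fin G.edgeFinset.card → ProbMeas (VSet G)) (r : Fin G.edgeFinset.card → ℝ)
      (Es : Fin G.edgeFinset.card → Finset (Sym2 V))
      (qs : Fin G.edgeFinset.card → VSet G → VSet G → ℝ),
      Es ∈ seqE G v₁ ∧ (∀ k : Fin G.edgeFinset.card, (k : ℕ) = 0 → Es k = {z.1.1}) ∧
      (∀ k, 0 ≤ r k) ∧ (∀ k, Es k ∉ S0 → r k = 0) ∧ (∑ k, r k = 1) ∧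
      (∀ k w, (μs k).1 w ≠ 0 → w.1.1 ∈ Es k) ∧
      (∀ w, ∑ k, r k * (μs k).1 w = μ.1 w) ∧
      (∀ k, qs k ∈ TS G) ∧ (∀ k, Invariant (μs k).1 (qs k)) ∧
      c = ∑ k, ((r k : ℝ) : EReal) * relEntInt (μs k).1 (qs k) (pS G δ (Es k)) }

/-- `Λ₁`: the Donsker–Varadhan functional for the simple random walk on `S`
(whose kernel is `pS` with `δ = 1`). -/
def Lam1 (G : SimpleGraph V) [DecidableRel G.Adj] (μ : ProbMeas (VSet G)) : EReal :=
  sInf { c : EReal | ∃ q ∈ TS G, Invariant μ.1 q ∧ c = relEntInt μ.1 q (pS G 1 ∅) }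

/-- Boundary `∂F` of an edge set: edges of `F` adjacent to some edge outside `F`. -/
def bdry (G : SimpleGraph V) [DecidableRel G.Adj] (F : Finset (Sym2 V)) : Finset (Sym2 V) :=
  F.filter fun e => ∃ e' ∈ G.edgeFinset \ F, edgeAdj e e'

/-- Out-degree `d(z)` of `z` in `S`. -/
def outDeg (G : SimpleGraph V) [DecidableRel G.Adj] (z : VSet G) : ℕ :=
  (Finset.univ.filter (fun w : VSet G => zp G z = zm G w)).card

/-- Number `k(z)` of out-neighbours of `z` lying in `F × {-1, 1}`. -/
def outDegIn (G : SimpleGraph V) [DecidableRel G.Adj] (F : Finset (Sym2 V))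
    (z : VSet G) : ℕ :=
  (Finset.univ.filter (fun w : VSet G => zp G z = zm G w ∧ w.1.1 ∈ F)).card

/-- The law of `(Z_0, …, Z_n)` for the lifted `δ`-ORRW conditioned on `Z_0 = z`. -/
def liftTraj (G : SimpleGraph V) [DecidableRel G.Adj] (δ : ℝ) (z : VSet G) (n : ℕ)
    (g : Fin (n + 1) → VSet G) : ℝ :=
  if g 0 = z then
    ∏ i : Fin n,
      pS G δ ((Finset.Iic i.castSucc).image (fun j => (g j).1.1))
        (g i.castSucc) (g i.succ)
  else 0

/-- The restricted logarithmic Laplace functional `W^{n+1}_{𝒮₀}(z)`. -/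
def Wres (G : SimpleGraph V) [DecidableRel G.Adj] (δ : ℝ) (z : VSet G)
    (S0 : Set (Finset (Sym2 V))) (h : ProbMeas (VSet G) → ℝ) (n : ℕ) : EReal :=
  if 0 < ∑ g : Fin (n + 1) → VSet G,
      (if empMeas n g ∈ CC G S0 then liftTraj G δ z n g else 0) then
    ((-((((n : ℝ) + 1))⁻¹ * Real.log (∑ g : Fin (n + 1) → VSet G,
      if empMeas n g ∈ CC G S0 then
        Real.exp (-((n : ℝ) + 1) * h (empMeas n g)) * liftTraj G δ z n g
      else 0)) : ℝ) : EReal)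
  else (⊤ : EReal)

end Lifted

section Basics
variable {V : Type} [Fintype V] [LinearOrder V] {G : SimpleGraph V} [DecidableRel G.Adj]

/-- Reversal of an oriented edge. -/
def rev (z : VSet G) : VSet G := (z.1, !z.2)

lemma zm_rev (z : VSet G) : zm G (rev z) = zp G z := by
  obtain ⟨e, b⟩ := z
  cases b <;> simp [rev, zm, zp]

lemma zp_rev (z : VSet G) : zp G (rev z) = zm G z := by
  obtain ⟨e, b⟩ := z
  cases b <;> simp [rev, zm, zp]

lemma sym2_lohi (e : Sym2 V) : s(sym2lo e, sym2hi e) = e := by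
  induction e using Sym2.ind with
  | _ a b =>
    simp only [sym2lo, sym2hi, Sym2.lift_mk]
    rcases le_total a b with h | h
    · simp [h]
    · simp [h, Sym2.eq_swap]

lemma edge_eq (z : VSet G) : s(zm G z, zp G z) = z.1.1 := by
  obtain ⟨e, b⟩ := z
  cases b
  · simp only [zm, zp]
    rw [Sym2.eq_swap]
    simpa using sym2_lohi e.1
  · simpa [zm, zp] using sym2_lohi e.1

lemma zm_mem (z : VSet G) : zm G z ∈ z.1.1 := by
  rw [← edge_eq z]; simp

lemma zp_mem (z : VSet G) : zp G z ∈ z.1.1 := by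
  rw [← edge_eq z]; simp

lemma exists_lift {x y : V} (hxy : G.Adj x y) :
    ∃ w : VSet G, zm G w = x ∧ zp G w = y ∧ w.1.1 = s(x, y) := by
  rcases le_total x y with h | h
  · refine ⟨(⟨s(x, y), by simpa using hxy⟩, true), ?_, ?_, rfl⟩ <;> simp [zm, zp, sym2lo, sym2hi, h]
  · refine ⟨(⟨s(x, y), by simpa using hxy⟩, false), ?_, ?_, rfl⟩ <;>
      simp [zm, zp, sym2lo, sym2hi, h]

lemma gw_pos {δ : ℝ} (hδ : 0 < δ) (F : Finset (Sym2 V)) (e : Sym2 V) : 0 < gw δ F e := by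
  unfold gw; split_ifs <;> linarith

lemma pS_den_pos {δ : ℝ} (hδ : 0 < δ) (F : Finset (Sym2 V)) (z : VSet G) :
    0 < ∑ w : VSet G, (if zp G z = zm G w then gw δ F w.1.1 else 0) := by
  refine Finset.sum_pos' (fun w _ => ?_) ⟨rev z, Finset.mem_univ _, ?_⟩
  · split_ifs
    · exact (gw_pos hδ _ _).le
    · exact le_rfl
  · rw [zm_rev, if_pos rfl]; exact gw_pos hδ _ _

lemma pS_pos {δ : ℝ} (hδ : 0 < δ) (F : Finset (Sym2 V)) {z w : VSet G} (h : zp G z = zm G w) :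
    0 < pS G δ F z w := by
  unfold pS
  rw [if_pos h]
  exact div_pos (gw_pos hδ _ _) (pS_den_pos hδ F z)

lemma pS_zero {δ : ℝ} (F : Finset (Sym2 V)) {z w : VSet G} (h : ¬ zp G z = zm G w) :
    pS G δ F z w = 0 := by
  unfold pS
  rw [if_neg h]

lemma pS_nonneg {δ : ℝ} (hδ : 0 < δ) (F : Finset (Sym2 V)) (z w : VSet G) :
    0 ≤ pS G δ F z w := by
  by_cases h : zp G z = zm G w
  · exact (pS_pos hδ F h).le
  · exact (pS_zero F h).ge

lemma pS_eq_zero_iff {δ : ℝ} (hδ : 0 < δ) (F : Finset (Sym2 V)) (z w : VSet G) :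
    pS G δ F z w = 0 ↔ ¬ zp G z = zm G w :=
  ⟨fun h h' => (pS_pos hδ F h').ne' h, pS_zero F⟩

lemma exists_kappa {δ : ℝ} (hδ : 0 < δ) :
    ∃ κ : ℝ, 0 < κ ∧ κ ≤ 1 ∧ ∀ (F : Finset (Sym2 V)) (z w : VSet G), zp G z = zm G w →
      κ ≤ pS G δ F z w := by
  let f : Finset (Sym2 V) × VSet G × VSet G → ℝ := fun x =>
    if zp G x.2.1 = zm G x.2.2 then pS G δ x.1 x.2.1 x.2.2 else 1
  have hf : ∀ x, 0 < f x := by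
    intro x
    simp only [f]
    split_ifs with h
    · exact pS_pos hδ _ h
    · norm_num
  by_cases hne : Nonempty (VSet G)
  · obtain ⟨x₀, hx₀⟩ := Finite.exists_min f
    refine ⟨min (f x₀) 1, lt_min (hf _) one_pos, min_le_right _ _, fun F z w h => ?_⟩
    have := hx₀ (F, z, w)
    simp only [f] at this ⊢
    rw [if_pos h] at this
    exact (min_le_left _ _).trans this
  · exact ⟨1, one_pos, le_rfl, fun F z => (hne ⟨z⟩).elim⟩

lemma scrS_insert {v₁ : V} {F : Finset (Sym2 V)} (hF : F ∈ scrS G v₁) {e e' : Sym2 V}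
    (he : e ∈ G.edgeFinset) (he' : e' ∈ F) (hadj : edgeAdj e e') : insert e F ∈ scrS G v₁ := by
  obtain ⟨h1, ⟨e0, he0, hv⟩, h3⟩ := hF
  refine ⟨Finset.insert_subset he h1, ⟨e0, Finset.mem_insert_of_mem he0, hv⟩, ?_⟩
  obtain ⟨v, hve, hve'⟩ := hadj
  have hmono : SimpleGraph.fromEdgeSet (↑F : Set (Sym2 V)) ≤
      SimpleGraph.fromEdgeSet (↑(insert e F) : Set (Sym2 V)) := by
    apply SimpleGraph.fromEdgeSet_mono
    simp
  have key : ∀ x, memVerts (insert e F) x →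
      (SimpleGraph.fromEdgeSet (↑(insert e F) : Set (Sym2 V))).Reachable x v := by
    rintro x ⟨d, hd, hxd⟩
    rcases Finset.mem_insert.1 hd with rfl | hd
    · by_cases hxv : x = v
      · subst hxv; exact SimpleGraph.Reachable.refl _
      · apply SimpleGraph.Adj.reachable
        rw [SimpleGraph.fromEdgeSet_adj]
        refine ⟨?_, hxv⟩
        have : d = s(x, v) := (Sym2.mem_and_mem_iff hxv).1 ⟨hxd, hve⟩
        simp [this]
    · exact (h3 x v ⟨d, hd, hxd⟩ ⟨e', he', hve'⟩).mono hmono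
  intro x y hx hy
  exact (key x hx).trans (key y hy).symm

lemma scrS_singleton {v₁ : V} {e : Sym2 V} (he : e ∈ G.edgeFinset) (hv : v₁ ∈ e) :
    ({e} : Finset (Sym2 V)) ∈ scrS G v₁ := by
  refine ⟨by simpa using he, ⟨e, by simp, hv⟩, ?_⟩
  rintro x y ⟨d, hd, hx⟩ ⟨d', hd', hy⟩
  rw [Finset.mem_singleton] at hd hd'
  subst hd hd'
  by_cases hxy : x = y
  · subst hxy; exact SimpleGraph.Reachable.refl _
  · apply SimpleGraph.Adj.reachable
    rw [SimpleGraph.fromEdgeSet_adj]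
    refine ⟨?_, hxy⟩
    have : d' = s(x, y) := (Sym2.mem_and_mem_iff hxy).1 ⟨hx, hy⟩
    simp [this]

/-- Step relation of the lifted graph restricted to an edge set. -/
def RE (E : Finset (Sym2 V)) (z w : VSet G) : Prop := zp G z = zm G w ∧ w.1.1 ∈ E

lemma lifted_reach_aux {E : Finset (Sym2 V)} (hE : E ⊆ G.edgeFinset) {x y : V}
    (p : (SimpleGraph.fromEdgeSet (↑E : Set (Sym2 V))).Walk x y) :
    ∀ z : VSet G, zp G z = x → ∃ w : VSet G, zp G w = y ∧
      Relation.ReflTransGen (RE E) z w := by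
  induction p with
  | nil => exact fun z hz => ⟨z, hz, .refl⟩
  | cons hadj p ih =>
    intro z hz
    rw [SimpleGraph.fromEdgeSet_adj] at hadj
    have h1 := hE hadj.1
    rw [SimpleGraph.mem_edgeFinset, SimpleGraph.mem_edgeSet] at h1
    obtain ⟨w0, hw0, hw1, hw2⟩ := exists_lift h1
    obtain ⟨w, hw, hr⟩ := ih w0 hw1
    refine ⟨w, hw, Relation.ReflTransGen.head ⟨by rw [hz, hw0], ?_⟩ hr⟩
    rw [hw2]; exact hadj.1

lemma lifted_reach {v₁ : V} {E : Finset (Sym2 V)} (hE : E ∈ scrS G v₁) {z w : VSet G}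
    (hz : z.1.1 ∈ E) (hw : memVerts E (zm G w)) :
    ∃ w' : VSet G, zp G w' = zm G w ∧ Relation.ReflTransGen (RE E) z w' := by
  obtain ⟨p⟩ := hE.2.2 (zp G z) (zm G w) ⟨_, hz, zp_mem z⟩ hw
  exact lifted_reach_aux hE.1 p z rfl

lemma lifted_conn {v₁ : V} {E : Finset (Sym2 V)} (hE : E ∈ scrS G v₁) {z w : VSet G}
    (hz : z.1.1 ∈ E) (hw : w.1.1 ∈ E) : Relation.ReflTransGen (RE E) z w := by
  obtain ⟨w', h1, h2⟩ := lifted_reach hE hz ⟨_, hw, zm_mem w⟩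
  exact h2.tail ⟨h1, hw⟩

end Basics

section Chain

/-- Generic one-step operator. -/
def opr {S I : Type} [Fintype I] (K : S → I → ℝ) (nx : S → I → S) (φ : S → ℝ) : S → ℝ :=
  fun s => ∑ i, K s i * φ (nx s i)

lemma opr_mono {S I : Type} [Fintype I] {K : S → I → ℝ} (hK : ∀ s i, 0 ≤ K s i)
    (nx : S → I → S) {φ ψ : S → ℝ} (h : ∀ s, φ s ≤ ψ s) (s : S) :
    opr K nx φ s ≤ opr K nx ψ s :=
  Finset.sum_le_sum fun i _ => mul_le_mul_of_nonneg_left (h _) (hK s i)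

lemma opr_iter_mono {S I : Type} [Fintype I] {K : S → I → ℝ} (hK : ∀ s i, 0 ≤ K s i)
    (nx : S → I → S) {φ ψ : S → ℝ} (h : ∀ s, φ s ≤ ψ s) (n : ℕ) (s : S) :
    (opr K nx)^[n] φ s ≤ (opr K nx)^[n] ψ s := by
  induction n generalizing s with
  | zero => exact h s
  | succ n ih =>
    rw [Function.iterate_succ_apply', Function.iterate_succ_apply']
    exact opr_mono hK nx ih s

lemma opr_iter_nonneg {S I : Type} [Fintype I] {K : S → I → ℝ} (hK : ∀ s i, 0 ≤ K s i)
    (nx : S → I → S) {φ : S → ℝ} (h : ∀ s, 0 ≤ φ s) (n : ℕ) (s : S) :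
    0 ≤ (opr K nx)^[n] φ s := by
  induction n generalizing s with
  | zero => exact h s
  | succ n ih =>
    rw [Function.iterate_succ_apply']
    exact Finset.sum_nonneg fun i _ => mul_nonneg (hK s i) (ih _)

variable {X : Type} [Fintype X]

lemma harmonic_const {q : X → X → ℝ} (hq0 : ∀ x y, 0 ≤ q x y) (hq1 : ∀ x, ∑ y, q x y = 1)
    (hirr : ∀ x y, Relation.ReflTransGen (fun a b => 0 < q a b) x y)
    (u : X → ℝ) (hu : ∀ x, ∑ y, q x y * u y = u x) (x y : X) : u x = u y := by
  have : Nonempty X := ⟨x⟩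
  obtain ⟨x₀, hx₀⟩ := Finite.exists_max u
  have key : ∀ y, u y = u x₀ := by
    intro y
    induction hirr x₀ y with
    | refl => rfl
    | @tail b c hb hbc ih =>
      have h0 : ∑ y, q b y * (u x₀ - u y) = 0 := by
        simp only [mul_sub, Finset.sum_sub_distrib, hu, ih, ← Finset.sum_mul, hq1]
        ring
      have := (Finset.sum_eq_zero_iff_of_nonneg
        (fun y _ => mul_nonneg (hq0 b y) (sub_nonneg.2 (hx₀ y)))).1 h0 c (Finset.mem_univ _)
      rcases mul_eq_zero.1 this with h | h
      · exact absurd h hbc.ne'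
      · linarith
  rw [key x, key y]

lemma poisson {q : X → X → ℝ} (hq0 : ∀ x y, 0 ≤ q x y) (hq1 : ∀ x, ∑ y, q x y = 1)
    (hirr : ∀ x y, Relation.ReflTransGen (fun a b => 0 < q a b) x y)
    (m : X → ℝ) (hm : ∀ x, 0 < m x) (hinv : ∀ y, ∑ x, m x * q x y = m y)
    (f : X → ℝ) (hf : ∑ x, m x * f x = 0) :
    ∃ u : X → ℝ, ∀ x, u x - ∑ y, q x y * u y = f x := by
  by_cases hX : Nonempty X
  swap
  · exact ⟨0, fun x => (hX ⟨x⟩).elim⟩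
  obtain ⟨x₀⟩ := hX
  let L : (X → ℝ) →ₗ[ℝ] (X → ℝ) :=
    { toFun := fun u x => u x - ∑ y, q x y * u y
      map_add' := by
        intro u v; funext x
        simp only [Pi.add_apply, mul_add, Finset.sum_add_distrib]; ring
      map_smul' := by
        intro c u; funext x
        simp only [Pi.smul_apply, smul_eq_mul, RingHom.id_apply, mul_sub, Finset.mul_sum]
        congr 1
        exact Finset.sum_congr rfl fun y _ => by ring }
  let ell : (X → ℝ) →ₗ[ℝ] ℝ :=
    { toFun := fun u => ∑ x, m x * u x
      map_add' := by
        intro u v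
        simp only [Pi.add_apply, mul_add, Finset.sum_add_distrib]
      map_smul' := by
        intro c u
        simp only [Pi.smul_apply, smul_eq_mul, RingHom.id_apply, Finset.mul_sum]
        exact Finset.sum_congr rfl fun y _ => by ring }
  have hLker : Module.finrank ℝ (LinearMap.ker L) ≤ 1 := by
    have hle : LinearMap.ker L ≤ Submodule.span ℝ {(fun _ => 1 : X → ℝ)} := by
      intro u hu
      rw [LinearMap.mem_ker] at hu
      have hu' : ∀ x, ∑ y, q x y * u y = u x := by
        intro x
        have := congrFun hu x
        simp only [L, LinearMap.coe_mk, AddHom.coe_mk, Pi.zero_apply] at this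
        linarith
      rw [Submodule.mem_span_singleton]
      refine ⟨u x₀, ?_⟩
      funext x
      simp only [Pi.smul_apply, smul_eq_mul, mul_one]
      exact harmonic_const hq0 hq1 hirr u hu' x₀ x
    exact (Submodule.finrank_mono hle).trans (by
      simpa using finrank_span_le_card (R := ℝ) ({(fun _ => 1 : X → ℝ)} : Set (X → ℝ)))
  have hrange : LinearMap.range L ≤ LinearMap.ker ell := by
    rintro _ ⟨u, rfl⟩
    rw [LinearMap.mem_ker]
    simp only [L, ell, LinearMap.coe_mk, AddHom.coe_mk, mul_sub, Finset.sum_sub_distrib,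
      Finset.mul_sum]
    rw [Finset.sum_comm, sub_eq_zero]
    refine Finset.sum_congr rfl fun y _ => ?_
    rw [← hinv y, Finset.sum_mul]
    exact Finset.sum_congr rfl fun x _ => by ring
  have hellrange : Module.finrank ℝ (LinearMap.range ell) = 1 := by
    have : LinearMap.range ell = ⊤ := by
      rw [LinearMap.range_eq_top]
      apply LinearMap.surjective
      intro h0
      have := LinearMap.congr_fun h0 (fun _ => 1)
      simp only [ell, LinearMap.coe_mk, AddHom.coe_mk, mul_one, LinearMap.zero_apply] at this
      have h2 : 0 < ∑ x, m x := Finset.sum_pos (fun x _ => hm x) ⟨x₀, Finset.mem_univ _⟩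
      linarith
    rw [this]; simp
  have e1 := LinearMap.finrank_range_add_finrank_ker L
  have e2 := LinearMap.finrank_range_add_finrank_ker ell
  have heq : LinearMap.range L = LinearMap.ker ell :=
    Submodule.eq_of_le_of_finrank_le hrange (by omega)
  have hfm : f ∈ LinearMap.range L := by
    rw [heq, LinearMap.mem_ker]; exact hf
  obtain ⟨u, hu⟩ := hfm
  exact ⟨u, fun x => congrFun hu x⟩

variable {ι : Type} [Fintype ι]

/-- Operator of the accumulated chain. -/
def accOp (q : X → X → ℝ) (f : X → X → ι → ℝ) :
    (X × (ι → ℝ) → ℝ) → (X × (ι → ℝ) → ℝ) :=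
  opr (fun s w => q s.1 w) (fun s w => (w, s.2 + f s.1 w))

lemma acc_second_moment {q : X → X → ℝ} (hq0 : ∀ x y, 0 ≤ q x y) (hq1 : ∀ x, ∑ y, q x y = 1)
    (hirr : ∀ x y, Relation.ReflTransGen (fun a b => 0 < q a b) x y)
    (m : X → ℝ) (hm : ∀ x, 0 < m x) (hinv : ∀ y, ∑ x, m x * q x y = m y)
    (hm1 : ∑ x, m x = 1)
    (f : X → X → ι → ℝ) (mb : ι → ℝ) (hmb : ∀ j, mb j = ∑ x, ∑ y, m x * q x y * f x y j)
    (j : ι) :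
    ∃ C : ℝ, 0 ≤ C ∧ ∀ (n : ℕ) (x : X) (a : ι → ℝ),
      (accOp q f)^[n] (fun s => (s.2 j - a j - n * mb j) ^ 2) (x, a) ≤ C * (n + 1) := by
  obtain ⟨u, hu⟩ := poisson hq0 hq1 hirr m hm hinv
    (fun x => ∑ y, q x y * (f x y j) - mb j) (by
      simp only [mul_sub, Finset.sum_sub_distrib, ← Finset.sum_mul, hm1]
      rw [hmb j, one_mul, sub_eq_zero]
      simp only [Finset.mul_sum, mul_assoc])
  have hX : Finite (X × X) := inferInstance
  obtain ⟨D, hD⟩ : ∃ D : ℝ, ∀ p : X × X,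
      (f p.1 p.2 j + u p.2 - u p.1 - mb j) ^ 2 ≤ D := by
    obtain ⟨D, hD⟩ := (Set.finite_range
      (fun p : X × X => (f p.1 p.2 j + u p.2 - u p.1 - mb j) ^ 2)).bddAbove
    exact ⟨D, fun p => hD ⟨p, rfl⟩⟩
  obtain ⟨U, hU⟩ : ∃ U : ℝ, ∀ x, |u x| ≤ U := by
    obtain ⟨D, hD⟩ := (Set.finite_range (fun x : X => |u x|)).bddAbove
    exact ⟨D, fun p => hD ⟨p, rfl⟩⟩
  have key : ∀ (n : ℕ) (x : X) (a : ι → ℝ) (b : ℝ),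
      (accOp q f)^[n] (fun s => (s.2 j + u s.1 - b) ^ 2) (x, a) ≤
        (a j + u x + n * mb j - b) ^ 2 + n * D := by
    intro n
    induction n with
    | zero => intro x a b; simp
    | succ n ih =>
      intro x a b
      rw [Function.iterate_succ_apply']
      have hmono := Finset.sum_le_sum (s := Finset.univ) fun y _ =>
        mul_le_mul_of_nonneg_left (ih y (a + f x y) b) (hq0 x y)
      refine hmono.trans ?_
      have hmean : ∑ y, q x y * (f x y j + u y - u x - mb j) = 0 := by
        have := hu x
        simp only [mul_sub, mul_add, Finset.sum_sub_distrib, Finset.sum_add_distrib,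
          ← Finset.sum_mul, hq1]
        linarith
      have hvar : ∑ y, q x y * (f x y j + u y - u x - mb j) ^ 2 ≤ D := by
        calc _ ≤ ∑ y, q x y * D := Finset.sum_le_sum fun y _ =>
              mul_le_mul_of_nonneg_left (hD (x, y)) (hq0 x y)
          _ = D := by rw [← Finset.sum_mul, hq1, one_mul]
      set A := a j + u x + (n + 1) * mb j - b with hA
      have hexp : ∀ y, q x y * (((a + f x y) j + u y + n * mb j - b) ^ 2 + n * D) =
          q x y * (A ^ 2 + n * D) + 2 * A * (q x y * (f x y j + u y - u x - mb j)) +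
            q x y * (f x y j + u y - u x - mb j) ^ 2 := by
        intro y
        simp only [hA, Pi.add_apply]; ring
      simp only [hexp, Finset.sum_add_distrib, ← Finset.mul_sum, ← Finset.sum_mul, hq1, hmean]
      push_cast
      rw [← hA]
      linarith
  have hD0 : ∀ x : X, 0 ≤ D := fun x => (sq_nonneg _).trans (hD (x, x))
  refine ⟨max 0 (8 * U ^ 2 + 2 * D), le_max_left _ _, fun n x a => ?_⟩
  have h1 : (accOp q f)^[n] (fun s => (s.2 j - a j - n * mb j) ^ 2) (x, a) ≤
      (accOp q f)^[n] (fun s => 2 * (s.2 j + u s.1 - (a j + n * mb j)) ^ 2 + 2 * U ^ 2) (x, a) := by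
    refine opr_iter_mono (fun s i => hq0 _ _) _ (fun s => ?_) n _
    have : (u s.1) ^ 2 ≤ U ^ 2 := sq_le_sq' (by linarith [neg_abs_le (u s.1), hU s.1])
      ((le_abs_self _).trans (hU s.1))
    nlinarith [sq_nonneg ((s.2 j - a j - n * mb j) + 2 * u s.1)]
  have h2 : ∀ (n : ℕ) (ψ : X × (ι → ℝ) → ℝ) (k : ℝ) (s),
      (accOp q f)^[n] (fun s => 2 * ψ s + k) s = 2 * (accOp q f)^[n] ψ s + k := by
    intro n ψ k
    induction n with
    | zero => intro s; rfl
    | succ n ih =>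
      intro s
      rw [Function.iterate_succ_apply', Function.iterate_succ_apply']
      simp only [accOp, opr] at ih ⊢
      simp only [ih, mul_add, Finset.sum_add_distrib, ← Finset.sum_mul, hq1, Finset.mul_sum]
      congr 1
      · exact Finset.sum_congr rfl fun y _ => by ring
      · ring
  rw [h2] at h1
  have h3 := key n x a (a j + n * mb j)
  have h4 : (a j + u x + n * mb j - (a j + n * mb j)) ^ 2 ≤ U ^ 2 := by
    have : a j + u x + n * mb j - (a j + n * mb j) = u x := by ring
    rw [this]
    exact sq_le_sq' (by linarith [neg_abs_le (u x), hU x]) ((le_abs_self _).trans (hU x))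
  have hn : (0 : ℝ) ≤ n := Nat.cast_nonneg n
  calc _ ≤ (8 * U ^ 2 + 2 * D) * (n + 1) := by
        have := hD0 x
        nlinarith [sq_nonneg U, mul_nonneg hn (sq_nonneg U)]
    _ ≤ _ := mul_le_mul_of_nonneg_right (le_max_right _ _) (by linarith)

lemma acc_lln {q : X → X → ℝ} (hq0 : ∀ x y, 0 ≤ q x y) (hq1 : ∀ x, ∑ y, q x y = 1)
    (hirr : ∀ x y, Relation.ReflTransGen (fun a b => 0 < q a b) x y)
    (m : X → ℝ) (hm : ∀ x, 0 < m x) (hinv : ∀ y, ∑ x, m x * q x y = m y)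
    (hm1 : ∑ x, m x = 1)
    (f : X → X → ι → ℝ) (mb : ι → ℝ) (hmb : ∀ j, mb j = ∑ x, ∑ y, m x * q x y * f x y j)
    {ε : ℝ} (hε : 0 < ε) :
    ∃ N : ℕ, ∀ n ≥ N, ∀ (x : X) (a : ι → ℝ),
      1 / 2 ≤ (accOp q f)^[n] (fun s => if ∀ j, |s.2 j - a j - n * mb j| ≤ ε * n then 1 else 0)
        (x, a) := by
  choose C hC0 hC using acc_second_moment hq0 hq1 hirr m hm hinv hm1 f mb hmb
  set CC := ∑ j, C j with hCC
  have hCC0 : 0 ≤ CC := Finset.sum_nonneg fun j _ => hC0 j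
  obtain ⟨N, hN⟩ := exists_nat_gt (4 * CC / ε ^ 2)
  refine ⟨N + 1, fun n hn x a => ?_⟩
  have hn1 : (1 : ℝ) ≤ n := by exact_mod_cast (by omega : 1 ≤ n)
  have hnN : 4 * CC / ε ^ 2 < n := hN.trans (by exact_mod_cast (by omega : N < n))
  have hpos : 0 < (ε * n) ^ 2 := by positivity
  have h1 : ∀ s : X × (ι → ℝ),
      (1 : ℝ) + ∑ j, (-(1 / (ε * n) ^ 2)) * (s.2 j - a j - n * mb j) ^ 2 ≤
      if ∀ j, |s.2 j - a j - n * mb j| ≤ ε * n then 1 else 0 := by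
    intro s
    rw [← Finset.mul_sum]
    have hs0 : ∀ j, 0 ≤ (s.2 j - a j - n * mb j) ^ 2 := fun j => sq_nonneg _
    have hs := Finset.sum_nonneg fun j (_ : j ∈ Finset.univ) => hs0 j
    have hp2 : 0 < 1 / (ε * n) ^ 2 := by positivity
    split_ifs with h
    · nlinarith
    · push Not at h
      obtain ⟨j, hj⟩ := h
      have h5 : (ε * n) ^ 2 ≤ (s.2 j - a j - n * mb j) ^ 2 := by
        rw [← sq_abs (s.2 j - a j - n * mb j)]
        exact pow_le_pow_left₀ (by positivity) hj.le 2
      have h6 := Finset.single_le_sum (fun j _ => hs0 j) (Finset.mem_univ j)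
      have h7 : 1 ≤ 1 / (ε * n) ^ 2 * ∑ j, (s.2 j - a j - n * mb j) ^ 2 := by
        rw [one_div, inv_mul_eq_div, le_div_iff₀ hpos]; linarith
      linarith
  refine le_trans ?_ (opr_iter_mono (fun s i => hq0 _ _) _ h1 n (x, a))
  have h2 : ∀ (n : ℕ) (ψ : ι → X × (ι → ℝ) → ℝ) (k : ℝ) (s),
      (accOp q f)^[n] (fun s => 1 + ∑ j, k * ψ j s) s =
        1 + ∑ j, k * (accOp q f)^[n] (ψ j) s := by
    intro n ψ k
    induction n with
    | zero => intro s; rfl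
    | succ n ih =>
      intro s
      simp only [Function.iterate_succ_apply']
      simp only [accOp, opr] at ih ⊢
      simp only [ih, mul_add, Finset.sum_add_distrib, ← Finset.sum_mul, hq1, Finset.mul_sum]
      rw [mul_one, Finset.sum_comm]
      congr 1
      exact Finset.sum_congr rfl fun y _ => Finset.sum_congr rfl fun y _ => by ring
  change _ ≤ (accOp q f)^[n] _ (x, a)
  rw [h2, ← Finset.mul_sum]
  have h8 : ∑ j, (accOp q f)^[n] (fun s => (s.2 j - a j - n * mb j) ^ 2) (x, a) ≤
      CC * (n + 1) := by
    rw [hCC, Finset.sum_mul]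
    exact Finset.sum_le_sum fun j _ => hC j n x a
  have h9 : 1 / (ε * n) ^ 2 * ∑ j, (accOp q f)^[n] (fun s => (s.2 j - a j - n * mb j) ^ 2) (x, a)
      ≤ 1 / 2 := by
    rw [one_div, inv_mul_eq_div, div_le_iff₀ hpos]
    rw [div_lt_iff₀ (by positivity)] at hnN
    nlinarith
  linarith

end Chain

section Stage

/-- Pair-measure form of the relative entropy cost. -/
def Jf {A : Type} [Fintype A] (p M : A → A → ℝ) : ℝ :=
  (∑ z, ∑ w, M z w * Real.log (M z w)) - (∑ z, (∑ w, M z w) * Real.log (∑ w, M z w))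
    - ∑ z, ∑ w, M z w * Real.log (p z w)

lemma Jf_eq {A : Type} [Fintype A] {p M q : A → A → ℝ} {m : A → ℝ}
    (hM : ∀ z w, M z w = m z * q z w) (hq : ∀ z, ∑ w, q z w = 1)
    (hp : ∀ z w, p z w = 0 → q z w = 0) :
    Jf p M = ∑ z, m z * ∑ w, q z w * Real.log (q z w / p z w) := by
  have hrow : ∀ z, ∑ w, M z w = m z := by
    intro z
    simp only [hM, ← Finset.mul_sum, hq, mul_one]
  unfold Jf
  rw [← Finset.sum_sub_distrib, ← Finset.sum_sub_distrib]
  refine Finset.sum_congr rfl fun z _ => ?_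
  rw [hrow]
  have : m z * Real.log (m z) = ∑ w, M z w * Real.log (m z) := by
    rw [← Finset.sum_mul, hrow]
  rw [this, ← Finset.sum_sub_distrib, ← Finset.sum_sub_distrib, Finset.mul_sum]
  refine Finset.sum_congr rfl fun w _ => ?_
  rw [hM]
  by_cases hm : m z = 0
  · simp [hm]
  by_cases hqq : q z w = 0
  · simp [hqq]
  have hpp : p z w ≠ 0 := fun h => hqq (hp z w h)
  rw [Real.log_mul hm hqq, Real.log_div hqq hpp]
  ring

lemma sum_sub_of {A : Type} [Fintype A] (P : A → Prop) [Fintype {a // P a}] (f : A → ℝ)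
    (hf : ∀ a, ¬ P a → f a = 0) : ∑ x : {a // P a}, f x = ∑ a, f a := by
  rw [← Finset.sum_subtype (Finset.univ.filter P) (by simp) f]
  exact Finset.sum_filter_of_ne fun a _ h => by
    by_contra h'
    exact h (hf a h')

lemma sum_sub_le {A : Type} [Fintype A] (P : A → Prop) [Fintype {a // P a}] (f : A → ℝ)
    (hf : ∀ a, 0 ≤ f a) : ∑ x : {a // P a}, f x ≤ ∑ a, f a := by
  rw [← Finset.sum_subtype (Finset.univ.filter P) (by simp) f]
  exact Finset.sum_le_sum_of_subset_of_nonneg (Finset.filter_subset _ _) fun w _ _ => hf w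

variable {V : Type} [Fintype V] [LinearOrder V] {G : SimpleGraph V} [DecidableRel G.Adj]

/-- Augmented state: traversed edges, current lifted vertex, counts. -/
abbrev Stt (G : SimpleGraph V) [DecidableRel G.Adj] : Type :=
  Finset (Sym2 V) × VSet G × (VSet G → ℝ)

/-- Transition operator of the augmented walk. -/
def TT (K : Finset (Sym2 V) → VSet G → VSet G → ℝ) : (Stt G → ℝ) → (Stt G → ℝ) :=
  opr (fun s w => K s.1 s.2.1 w)
    (fun s w => (insert w.1.1 s.1, w, s.2.2 + Pi.single w 1))

/-- Full-support balanced pair measure on `E`. -/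
def FullBal (E : Finset (Sym2 V)) (M : VSet G → VSet G → ℝ) : Prop :=
  (∀ z w, 0 ≤ M z w) ∧ (∀ z w, 0 < M z w ↔ (z.1.1 ∈ E ∧ w.1.1 ∈ E ∧ zp G z = zm G w)) ∧
    ∀ z, ∑ w, M z w = ∑ w, M w z

set_option maxHeartbeats 1000000 in
lemma stage_lower {v₁ : V} {δ : ℝ} (hδ : 0 < δ) {E : Finset (Sym2 V)} (hE : E ∈ scrS G v₁)
    {M : VSet G → VSet G → ℝ} (hM : FullBal E M) {s : ℝ} (hs : s = ∑ z, ∑ w, M z w) (hs0 : 0 < s)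
    {ε : ℝ} (hε : 0 < ε) :
    ∃ N : ℕ, ∀ n ≥ N, ∀ (z : VSet G), z.1.1 ∈ E → ∀ (c : VSet G → ℝ) (φ : Stt G → ℝ),
      (∀ x, 0 ≤ φ x) → ∀ B : ℝ, 0 ≤ B →
      (∀ (w : VSet G) (c' : VSet G → ℝ), w.1.1 ∈ E →
        (∀ x, |c' x - c x - n * ((∑ w, M x w) / s)| ≤ ε * n) → B ≤ φ (E, w, c')) →
      Real.exp (-(n * (Jf (pS G δ E) M / s + ε))) * B ≤ (TT (pS G δ))^[n] φ (E, z, c) := by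
  obtain ⟨hM0, hMs, hMb⟩ := hM
  have hMz : ∀ z w, ¬ (z.1.1 ∈ E ∧ w.1.1 ∈ E ∧ zp G z = zm G w) → M z w = 0 := by
    intro z w h
    by_contra h'
    exact h ((hMs z w).1 (lt_of_le_of_ne (hM0 z w) (Ne.symm h')))
  let X := {z : VSet G // z.1.1 ∈ E}
  set mm : VSet G → ℝ := fun z => ∑ w, M z w with hmm
  have hmm0 : ∀ x : X, 0 < mm x := by
    intro x
    refine Finset.sum_pos' (fun w _ => hM0 _ _) ⟨rev x.1, Finset.mem_univ _, ?_⟩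
    exact (hMs _ _).2 ⟨x.2, x.2, (zm_rev _).symm⟩
  have hmmz : ∀ z : VSet G, ¬ z.1.1 ∈ E → mm z = 0 := by
    intro z hz
    exact Finset.sum_eq_zero fun w _ => hMz _ _ fun h => hz h.1
  let q : X → X → ℝ := fun x y => M x y / mm x
  have hqdef : ∀ x y : X, q x y = M x y / mm x := fun _ _ => rfl
  have hq0 : ∀ x y, 0 ≤ q x y := fun x y => div_nonneg (hM0 _ _) (hmm0 x).le
  have hsumr : ∀ x : VSet G, ∑ y : X, M x y = mm x := fun x =>
    sum_sub_of (fun z : VSet G => z.1.1 ∈ E) (fun w => M x w) fun a ha => hMz _ _ fun h => ha h.2.1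
  have hsumc : ∀ y : VSet G, ∑ x : X, M x y = mm y := fun y => by
    rw [sum_sub_of (fun z : VSet G => z.1.1 ∈ E) (fun w => M w y)
      fun a ha => hMz _ _ fun h => ha h.1]
    exact (hMb y).symm
  have hq1 : ∀ x, ∑ y, q x y = 1 := by
    intro x
    simp only [hqdef]
    rw [← Finset.sum_div, hsumr, div_self (hmm0 x).ne']
  have hqpos : ∀ x y : X, zp G x.1 = zm G y.1 → 0 < q x y := fun x y h =>
    div_pos ((hMs _ _).2 ⟨x.2, y.2, h⟩) (hmm0 x)
  have hirr : ∀ x y, Relation.ReflTransGen (fun a b => 0 < q a b) x y := by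
    have aux : ∀ z w : VSet G, Relation.ReflTransGen (RE E) z w → ∀ (hz : z.1.1 ∈ E),
        ∃ hw : w.1.1 ∈ E, Relation.ReflTransGen (fun a b : X => 0 < q a b) ⟨z, hz⟩ ⟨w, hw⟩ := by
      intro z w h hz
      induction h with
      | refl => exact ⟨hz, .refl⟩
      | tail hab hbc ih =>
        obtain ⟨hb, hr⟩ := ih
        exact ⟨hbc.2, hr.tail (hqpos ⟨_, hb⟩ ⟨_, hbc.2⟩ hbc.1)⟩
    intro x y
    obtain ⟨_, h⟩ := aux _ _ (lifted_conn hE x.2 y.2) x.2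
    exact h
  let m : X → ℝ := fun x => mm x / s
  have hm : ∀ x, 0 < m x := fun x => div_pos (hmm0 x) hs0
  have hmq : ∀ x y : X, m x * q x y = M x y / s := by
    intro x y
    simp only [m, hqdef]
    have := (hmm0 x).ne'
    field_simp
  have hinv : ∀ y, ∑ x, m x * q x y = m y := by
    intro y
    simp only [hmq]
    rw [← Finset.sum_div, hsumc]
  have hm1 : ∑ x, m x = 1 := by
    simp only [m]
    rw [← Finset.sum_div, sum_sub_of (fun z : VSet G => z.1.1 ∈ E) mm hmmz, hs,
      div_self (by rw [← hs]; exact hs0.ne')]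
  let f : X → X → Option (VSet G) → ℝ := fun x y o =>
    match o with
    | none => Real.log (q x y / pS G δ E x y)
    | some a => (Pi.single y.1 1 : VSet G → ℝ) a
  let mb : Option (VSet G) → ℝ := fun o => ∑ x, ∑ y, m x * q x y * f x y o
  have hmbn : mb none = Jf (pS G δ E) M / s := by
    have : Jf (pS G δ E) M = ∑ z, mm z * ∑ w, (if mm z = 0 then (if w = rev z then 1 else 0)
        else M z w / mm z) * Real.log ((if mm z = 0 then (if w = rev z then 1 else 0)
        else M z w / mm z) / pS G δ E z w) := by
      refine Jf_eq (q := fun z w => if mm z = 0 then (if w = rev z then 1 else 0)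
        else M z w / mm z) ?_ ?_ ?_
      · intro z w
        split_ifs with h1 h2
        · rw [h1, zero_mul]
          exact (Finset.sum_eq_zero_iff_of_nonneg fun w _ => hM0 z w).1 h1 w (Finset.mem_univ _)
        · rw [h1, zero_mul]
          exact (Finset.sum_eq_zero_iff_of_nonneg fun w _ => hM0 z w).1 h1 w (Finset.mem_univ _)
        · field_simp
      · intro z
        split_ifs with h1
        · simp
        · rw [← Finset.sum_div, div_self h1]
      · intro z w hp
        rw [pS_eq_zero_iff hδ] at hp
        split_ifs with h1 h2
        · subst h2; exact (hp (zm_rev z).symm).elim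
        · rfl
        · rw [hMz z w fun h => hp h.2.2, zero_div]
    rw [this, ← sum_sub_of (fun z : VSet G => z.1.1 ∈ E) _ (fun a ha => by rw [hmmz a ha, zero_mul]),
      Finset.sum_div]
    simp only [mb]
    refine Finset.sum_congr rfl fun x _ => ?_
    simp only [if_neg (hmm0 x).ne']
    rw [← sum_sub_of (fun z : VSet G => z.1.1 ∈ E) _ (fun a ha => by
      rw [hMz _ _ fun h => ha h.2.1, zero_div, zero_mul]), Finset.mul_sum, Finset.sum_div]
    refine Finset.sum_congr rfl fun y _ => ?_
    simp only [f, m, hqdef]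
    ring
  have hmbs : ∀ a, mb (some a) = mm a / s := by
    intro a
    simp only [mb, f, hmq]
    rw [Finset.sum_comm]
    simp only [← Finset.sum_mul, ← Finset.sum_div, hsumc]
    rw [sum_sub_of (fun z : VSet G => z.1.1 ∈ E)
      (fun y => mm y / s * (Pi.single y 1 : VSet G → ℝ) a) (fun b hb => by
        rw [hmmz b hb]; simp)]
    simp [Pi.single_apply]
  have hcom : ∀ (φ : Stt G → ℝ), (∀ x, 0 ≤ φ x) → ∀ (n : ℕ) (x : X) (a : Option (VSet G) → ℝ),
      (accOp q f)^[n] (fun t => Real.exp (-(t.2 none)) * φ (E, t.1.1, fun v => t.2 (some v))) (x, a)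
        ≤ Real.exp (-(a none)) * (TT (pS G δ))^[n] φ (E, x.1, fun v => a (some v)) := by
    intro φ hφ n
    induction n with
    | zero => intro x a; exact le_rfl
    | succ n ih =>
      intro x a
      rw [Function.iterate_succ_apply', Function.iterate_succ_apply']
      have hnn : ∀ s, 0 ≤ (TT (pS G δ))^[n] φ s :=
        opr_iter_nonneg (fun s i => pS_nonneg hδ _ _ _) _ hφ n
      calc accOp q f _ (x, a) = ∑ y, q x y * (accOp q f)^[n]
            (fun t => Real.exp (-(t.2 none)) * φ (E, t.1.1, fun v => t.2 (some v)))
              (y, a + f x y) := rfl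
        _ ≤ ∑ y : X, Real.exp (-(a none)) * (pS G δ E x y * (TT (pS G δ))^[n] φ
              (insert y.1.1.1 E, y.1, (fun v => a (some v)) + Pi.single y.1 1)) := by
            refine Finset.sum_le_sum fun y _ => ?_
            refine (mul_le_mul_of_nonneg_left (ih y (a + f x y)) (hq0 x y)).trans ?_
            have e1 : insert y.1.1.1 E = E := Finset.insert_eq_of_mem y.2
            have e2 : (fun v => (a + f x y) (some v)) =
                (fun v => a (some v)) + Pi.single y.1 1 := by
              funext v; simp [f]
            rw [e1, e2]
            rw [← mul_assoc, ← mul_assoc]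
            refine mul_le_mul_of_nonneg_right ?_ (hnn _)
            have e3 : (a + f x y) none = a none + Real.log (q x y / pS G δ E x y) := rfl
            rw [e3, neg_add, Real.exp_add]
            rcases (hq0 x y).eq_or_lt with h | h
            · rw [← h, zero_mul]
              exact mul_nonneg (Real.exp_pos _).le (pS_nonneg hδ _ _ _)
            · have hxy : zp G x.1 = zm G y.1 := by
                by_contra h'
                have : M x y = 0 := hMz _ _ fun h => h' h.2.2
                rw [hqdef, this, zero_div] at h
                exact lt_irrefl _ h
              have hp := pS_pos hδ E hxy
              rw [Real.exp_neg (Real.log _), Real.exp_log (div_pos h hp)]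
              apply le_of_eq
              field_simp
        _ = Real.exp (-(a none)) * ∑ y : X, (pS G δ E x y * (TT (pS G δ))^[n] φ
              (insert y.1.1.1 E, y.1, (fun v => a (some v)) + Pi.single y.1 1)) := by
            rw [Finset.mul_sum]
        _ ≤ _ := by
            refine mul_le_mul_of_nonneg_left ?_ (Real.exp_pos _).le
            change _ ≤ ∑ w : VSet G, pS G δ E x w * (TT (pS G δ))^[n] φ
              (insert w.1.1 E, w, (fun v => a (some v)) + Pi.single w 1)
            exact sum_sub_le (fun z : VSet G => z.1.1 ∈ E)
              (fun w : VSet G => pS G δ E x w * (TT (pS G δ))^[n] φ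
              (insert w.1.1 E, w, (fun v => a (some v)) + Pi.single w 1))
              fun w => mul_nonneg (pS_nonneg hδ _ _ _) (hnn _)
  obtain ⟨N, hN⟩ := acc_lln hq0 hq1 hirr m hm hinv hm1 f mb (fun _ => rfl) (half_pos hε)
  obtain ⟨N2, hN2⟩ := exists_nat_gt (2 * Real.log 2 / ε)
  refine ⟨max N N2, fun n hn z hz c φ hφ B hB hBφ => ?_⟩
  let a : Option (VSet G) → ℝ := fun o => match o with
    | none => 0
    | some v => c v
  have h1 := hcom φ hφ n ⟨z, hz⟩ a
  have e0 : Real.exp (-(a none)) = 1 := by simp [a]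
  rw [e0, one_mul] at h1
  refine le_trans ?_ h1
  have h2 := hN n (le_of_max_le_left hn) ⟨z, hz⟩ a
  have hn2 : 2 * Real.log 2 / ε < n := hN2.trans_le (by exact_mod_cast le_of_max_le_right hn)
  set k := Real.exp (-(n * (Jf (pS G δ E) M / s + ε / 2))) * B with hk
  have hk0 : 0 ≤ k := mul_nonneg (Real.exp_pos _).le hB
  have h3 : (accOp q f)^[n] (fun t => k * if ∀ j, |t.2 j - a j - n * mb j| ≤ ε / 2 * n then 1 else 0)
      (⟨z, hz⟩, a) ≤ (accOp q f)^[n]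
        (fun t => Real.exp (-(t.2 none)) * φ (E, t.1.1, fun v => t.2 (some v))) (⟨z, hz⟩, a) := by
    refine opr_iter_mono (fun s i => hq0 _ _) _ (fun t => ?_) n _
    split_ifs with h
    · rw [mul_one, hk]
      refine mul_le_mul ?_ ?_ hB (Real.exp_pos _).le
      · apply Real.exp_le_exp.2
        have := h none
        rw [hmbn] at this
        have e4 : a none = 0 := rfl
        rw [e4, sub_zero] at this
        have := (abs_le.1 this).2
        linarith
      · refine hBφ _ _ t.1.2 fun x => ?_
        have := h (some x)
        rw [hmbs] at this
        refine this.trans ?_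
        have : (0 : ℝ) ≤ n := Nat.cast_nonneg n
        nlinarith
    · rw [mul_zero]
      exact mul_nonneg (Real.exp_pos _).le (hφ _)
  refine le_trans ?_ h3
  have h4 : ∀ (n : ℕ) (ψ : X × (Option (VSet G) → ℝ) → ℝ) (s),
      (accOp q f)^[n] (fun s => k * ψ s) s = k * (accOp q f)^[n] ψ s := by
    intro n ψ
    induction n with
    | zero => intro s; rfl
    | succ n ih =>
      intro s
      rw [Function.iterate_succ_apply', Function.iterate_succ_apply']
      simp only [accOp, opr] at ih ⊢
      simp only [ih, Finset.mul_sum]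
      exact Finset.sum_congr rfl fun y _ => by ring
  rw [h4]
  refine le_trans ?_ (mul_le_mul_of_nonneg_left h2 hk0)
  rw [hk]
  have h5 : Real.exp (-(n * (Jf (pS G δ E) M / s + ε))) ≤
      Real.exp (-(n * (Jf (pS G δ E) M / s + ε / 2))) * (1 / 2) := by
    have e5 : (1 / 2 : ℝ) = Real.exp (-(Real.log 2)) := by
      rw [Real.exp_neg, Real.exp_log two_pos, one_div]
    rw [e5, ← Real.exp_add]
    apply Real.exp_le_exp.2
    rw [div_lt_iff₀ hε] at hn2
    linarith
  nlinarith

end Stage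

section GoodSec
variable {V : Type} [Fintype V] [LinearOrder V] {G : SimpleGraph V} [DecidableRel G.Adj]

/-- Uniform exponential lower bound for the augmented walk started in stage `E`. -/
def Good (G : SimpleGraph V) [DecidableRel G.Adj] (δ : ℝ) (S0 : Set (Finset (Sym2 V)))
    (E : Finset (Sym2 V)) (σ : ℝ) (a : VSet G → ℝ) (J : ℝ) : Prop :=
  ∃ L : ℕ, ∀ ε : ℝ, 0 < ε → ∃ η : ℝ, 0 < η ∧ ∃ N : ℕ, ∀ n : ℕ, N ≤ n → ∀ m : ℕ,
    σ * n + L ≤ m → (m : ℝ) ≤ (σ + η) * n + L → ∀ z : VSet G, z.1.1 ∈ E →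
    ∀ (c : VSet G → ℝ) (φ : Stt G → ℝ), (∀ x, 0 ≤ φ x) → ∀ B : ℝ, 0 ≤ B →
    (∀ (F : Finset (Sym2 V)) (w : VSet G) (c' : VSet G → ℝ), F ∈ S0 →
      (∀ x, |c' x - c x - n * a x| ≤ ε * n) → B ≤ φ (F, w, c')) →
    Real.exp (-(n * (J + ε))) * B ≤ (TT (pS G δ))^[m] φ (E, z, c)

lemma TT_nonneg {δ : ℝ} (hδ : 0 < δ) {φ : Stt G → ℝ} (hφ : ∀ x, 0 ≤ φ x) (m : ℕ) (s : Stt G) :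
    0 ≤ (TT (pS G δ))^[m] φ s :=
  opr_iter_nonneg (fun s i => pS_nonneg hδ _ _ _) _ hφ m s

lemma one_step {δ : ℝ} (hδ : 0 < δ) {κ : ℝ}
    (hκ : ∀ (F : Finset (Sym2 V)) (z w : VSet G), zp G z = zm G w → κ ≤ pS G δ F z w)
    {φ : Stt G → ℝ} (hφ : ∀ x, 0 ≤ φ x) (m : ℕ) (F : Finset (Sym2 V)) {z w : VSet G}
    (h : zp G z = zm G w) (c : VSet G → ℝ) :
    κ * (TT (pS G δ))^[m] φ (insert w.1.1 F, w, c + Pi.single w 1) ≤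
      (TT (pS G δ))^[m + 1] φ (F, z, c) := by
  rw [Function.iterate_succ_apply']
  refine (mul_le_mul_of_nonneg_right (hκ F z w h) (TT_nonneg hδ hφ m _)).trans ?_
  exact Finset.single_le_sum (f := fun w => pS G δ F z w * (TT (pS G δ))^[m] φ
    (insert w.1.1 F, w, c + Pi.single w 1))
    (fun w _ => mul_nonneg (pS_nonneg hδ _ _ _) (TT_nonneg hδ hφ m _)) (Finset.mem_univ w)

lemma single_abs_le (w x : VSet G) : |(Pi.single w 1 : VSet G → ℝ) x| ≤ 1 := by
  rw [Pi.single_apply]; split_ifs <;> simp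

lemma path_lower {δ : ℝ} (hδ : 0 < δ) {κ : ℝ} (hκ0 : 0 < κ)
    (hκ : ∀ (F : Finset (Sym2 V)) (z w : VSet G), zp G z = zm G w → κ ≤ pS G δ F z w)
    {E : Finset (Sym2 V)} {z w : VSet G} (h : Relation.ReflTransGen (RE E) z w) :
    ∃ l : ℕ, ∀ (m : ℕ) (φ : Stt G → ℝ), (∀ x, 0 ≤ φ x) → ∀ c : VSet G → ℝ,
      ∃ c' : VSet G → ℝ, (∀ x, |c' x - c x| ≤ l) ∧
        κ ^ l * (TT (pS G δ))^[m] φ (E, w, c') ≤ (TT (pS G δ))^[m + l] φ (E, z, c) := by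
  induction h with
  | refl => exact ⟨0, fun m φ hφ c => ⟨c, by simp, by simp⟩⟩
  | @tail b w hb hbw ih =>
    obtain ⟨l, hl⟩ := ih
    refine ⟨l + 1, fun m φ hφ c => ?_⟩
    obtain ⟨c', hc', hle⟩ := hl (m + 1) φ hφ c
    refine ⟨c' + Pi.single w 1, fun x => ?_, ?_⟩
    · have := abs_add_le (c' x - c x) ((Pi.single w 1 : VSet G → ℝ) x)
      have h2 := single_abs_le w x
      have h3 := hc' x
      have e : (c' + Pi.single w 1 : VSet G → ℝ) x - c x = c' x - c x + (Pi.single w 1 : VSet G → ℝ) x := by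
        simp only [Pi.add_apply]; ring
      rw [e]; push_cast; linarith
    · have e : m + (l + 1) = m + 1 + l := by ring
      rw [e]
      refine le_trans ?_ hle
      have h1 := one_step hδ hκ hφ m E hbw.1 c'
      rw [Finset.insert_eq_of_mem hbw.2] at h1
      have := mul_le_mul_of_nonneg_left h1 (pow_pos hκ0 l).le
      rw [pow_succ, mul_assoc]
      exact this

lemma good_base {δ : ℝ} (hδ : 0 < δ) {S0 : Set (Finset (Sym2 V))} {E : Finset (Sym2 V)}
    (hE : E ∈ S0) : Good G δ S0 E 0 0 0 := by
  obtain ⟨κ, hκ0, hκ1, hκ⟩ := exists_kappa (G := G) hδ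
  have hlog : 0 ≤ -Real.log κ := by
    have := Real.log_nonpos hκ0.le hκ1; linarith
  refine ⟨0, fun ε hε => ⟨min ε (ε / (1 - Real.log κ)), lt_min hε (by
    apply div_pos hε; linarith), 0, fun n _ m _ hm z hz c φ hφ B hB hBφ => ?_⟩⟩
  have hn : (0 : ℝ) ≤ n := Nat.cast_nonneg n
  simp only [zero_add, Nat.cast_zero, add_zero] at hm
  have key : ∀ (m : ℕ) (z : VSet G), z.1.1 ∈ E → ∀ c : VSet G → ℝ,
      ∃ (w : VSet G) (c' : VSet G → ℝ), (∀ x, |c' x - c x| ≤ m) ∧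
      κ ^ m * φ (E, w, c') ≤ (TT (pS G δ))^[m] φ (E, z, c) := by
    intro m
    induction m with
    | zero => intro z _ c; exact ⟨z, c, by simp, by simp⟩
    | succ m ih =>
      intro z hz c
      obtain ⟨w, c', hc', hle⟩ := ih (rev z) hz (c + Pi.single (rev z) 1)
      refine ⟨w, c', fun x => ?_, ?_⟩
      · have h2 := single_abs_le (rev z) x
        have h3 := hc' x
        have h4 := abs_add_le (c' x - (c + Pi.single (rev z) 1 : VSet G → ℝ) x)
          ((Pi.single (rev z) 1 : VSet G → ℝ) x)
        have e : c' x - (c + Pi.single (rev z) 1 : VSet G → ℝ) x + (Pi.single (rev z) 1 : VSet G → ℝ) x =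
          c' x - c x := by simp only [Pi.add_apply]; ring
        rw [e] at h4
        push_cast; linarith
      · have h1 := one_step hδ hκ hφ m E (zm_rev z).symm c
        have e : insert (rev z).1.1 E = E := Finset.insert_eq_of_mem hz
        rw [e] at h1
        refine le_trans ?_ h1
        rw [pow_succ', mul_assoc]
        exact mul_le_mul_of_nonneg_left hle hκ0.le
  obtain ⟨w, c', hc', hle⟩ := key m z hz c
  refine le_trans ?_ hle
  refine mul_le_mul ?_ ?_ hB (pow_pos hκ0 m).le
  · rw [← Real.exp_log (pow_pos hκ0 m)]
    apply Real.exp_le_exp.2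
    rw [Real.log_pow, zero_add]
    have h1 : (m : ℝ) ≤ ε / (1 - Real.log κ) * n :=
      hm.trans (mul_le_mul_of_nonneg_right (min_le_right _ _) hn)
    have h2 : (m : ℝ) * (1 - Real.log κ) ≤ n * ε := by
      calc _ ≤ ε / (1 - Real.log κ) * n * (1 - Real.log κ) :=
            mul_le_mul_of_nonneg_right h1 (by linarith)
        _ = n * ε := by
          have : (1 - Real.log κ) ≠ 0 := by linarith
          field_simp
    have hm0 : (0 : ℝ) ≤ m := Nat.cast_nonneg m
    nlinarith
  · refine hBφ E w c' hE fun x => ?_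
    simp only [Pi.zero_apply, mul_zero, sub_zero]
    exact (hc' x).trans (hm.trans (mul_le_mul_of_nonneg_right (min_le_left _ _) hn))

lemma good_trans {v₁ : V} {δ : ℝ} (hδ : 0 < δ) {S0 : Set (Finset (Sym2 V))}
    {E : Finset (Sym2 V)} (hE : E ∈ scrS G v₁) {e e' : Sym2 V} (he : e ∈ G.edgeFinset)
    (he' : e' ∈ E) (hadj : edgeAdj e e') {σ : ℝ} (hσ : 0 ≤ σ) {a : VSet G → ℝ} {J : ℝ}
    (hgood : Good G δ S0 (insert e E) σ a J) : Good G δ S0 E σ a J := by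
  obtain ⟨κ, hκ0, hκ1, hκ⟩ := exists_kappa (G := G) hδ
  obtain ⟨v, hve, hve'⟩ := hadj
  obtain ⟨w, hw1, hw2⟩ : ∃ w : VSet G, w.1.1 = e ∧ zm G w = v := by
    obtain ⟨y, rfl⟩ := Sym2.mem_iff_exists.1 hve
    rw [SimpleGraph.mem_edgeFinset, SimpleGraph.mem_edgeSet] at he
    obtain ⟨w, h1, _, h3⟩ := exists_lift he
    exact ⟨w, h3, h1⟩
  have hpath : ∀ z : VSet G, ∃ l : ℕ, z.1.1 ∈ E → ∀ (m : ℕ) (φ : Stt G → ℝ), (∀ x, 0 ≤ φ x) →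
      ∀ c : VSet G → ℝ, ∃ c' : VSet G → ℝ, (∀ x, |c' x - c x| ≤ l) ∧
        κ ^ l * (TT (pS G δ))^[m] φ (insert e E, w, c') ≤
          (TT (pS G δ))^[m + l] φ (E, z, c) := by
    intro z
    by_cases hz : z.1.1 ∈ E
    swap
    · exact ⟨0, fun h => (hz h).elim⟩
    obtain ⟨w', hw', hr⟩ := lifted_reach hE (w := w) hz (by rw [hw2]; exact ⟨e', he', hve'⟩)
    obtain ⟨l, hl⟩ := path_lower hδ hκ0 hκ hr
    refine ⟨l + 1, fun _ m φ hφ c => ?_⟩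
    obtain ⟨c', hc', hle⟩ := hl (m + 1) φ hφ c
    refine ⟨c' + Pi.single w 1, fun x => ?_, ?_⟩
    · have := abs_add_le (c' x - c x) ((Pi.single w 1 : VSet G → ℝ) x)
      have h2 := single_abs_le w x
      have h3 := hc' x
      have e : (c' + Pi.single w 1 : VSet G → ℝ) x - c x = c' x - c x + (Pi.single w 1 : VSet G → ℝ) x := by
        simp only [Pi.add_apply]; ring
      rw [e]; push_cast; linarith
    · have e0 : m + (l + 1) = m + 1 + l := by ring
      rw [e0]
      refine le_trans ?_ hle
      have h1 := one_step hδ hκ hφ m E hw' c'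
      rw [hw1] at h1
      have := mul_le_mul_of_nonneg_left h1 (pow_pos hκ0 l).le
      rw [pow_succ, mul_assoc]
      exact this
  choose l hl using hpath
  set Lt := ∑ z, l z with hLt
  have hlle : ∀ z, l z ≤ Lt := fun z => Finset.single_le_sum (fun _ _ => Nat.zero_le _)
    (Finset.mem_univ z)
  obtain ⟨L, hL⟩ := hgood
  refine ⟨L + Lt, fun ε hε => ?_⟩
  obtain ⟨η, hη, N, hN⟩ := hL (ε / 2) (half_pos hε)
  obtain ⟨N1, hN1⟩ := exists_nat_gt (2 * Lt / η)
  obtain ⟨N2, hN2⟩ := exists_nat_gt (2 * Lt / ε)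
  obtain ⟨N3, hN3⟩ := exists_nat_gt (2 * (Lt * (-Real.log κ)) / ε)
  refine ⟨η / 2, half_pos hη, max N (max N1 (max N2 N3)), fun n hn m hm1 hm2 z hz c φ hφ B hB hBφ => ?_⟩
  have hnN : N ≤ n := (le_max_left _ _).trans hn
  have hn1 : (N1 : ℝ) ≤ n := by
    exact_mod_cast ((le_max_left _ _).trans (le_max_right _ _)).trans hn
  have hn2 : (N2 : ℝ) ≤ n := by
    exact_mod_cast ((le_max_left _ _).trans ((le_max_right _ _).trans (le_max_right _ _))).trans hn
  have hn3 : (N3 : ℝ) ≤ n := by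
    exact_mod_cast ((le_max_right _ _).trans ((le_max_right _ _).trans (le_max_right _ _))).trans hn
  rw [div_lt_iff₀ hη] at hN1
  rw [div_lt_iff₀ hε] at hN2 hN3
  have hlz : ((l z : ℕ) : ℝ) ≤ Lt := by exact_mod_cast hlle z
  have hlz0 : (0 : ℝ) ≤ l z := Nat.cast_nonneg _
  have hml : l z ≤ m := by
    have h0 : 0 ≤ σ * n := mul_nonneg hσ (Nat.cast_nonneg n)
    have hL0 : (0 : ℝ) ≤ L := Nat.cast_nonneg L
    push_cast at hm1
    have : (l z : ℝ) ≤ m := by linarith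
    exact_mod_cast this
  obtain ⟨m', rfl⟩ := Nat.exists_eq_add_of_le' hml
  obtain ⟨c', hc', hle⟩ := hl z hz m' φ hφ c
  refine le_trans ?_ hle
  push_cast at hm1 hm2
  have hw : w.1.1 ∈ insert e E := by rw [hw1]; exact Finset.mem_insert_self _ _
  have h3 := hN n hnN m' (by linarith) (by nlinarith) w hw c' φ hφ B hB (fun F w₁ c₁ hF hc₁ => by
    refine hBφ F w₁ c₁ hF fun x => ?_
    have h4 := abs_add_le (c₁ x - c' x - n * a x) (c' x - c x)
    have e : c₁ x - c' x - n * a x + (c' x - c x) = c₁ x - c x - n * a x := by ring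
    rw [e] at h4
    have h5 := hc₁ x
    have h6 := hc' x
    nlinarith)
  refine le_trans ?_ (mul_le_mul_of_nonneg_left h3 (pow_pos hκ0 _).le)
  rw [← mul_assoc]
  refine mul_le_mul_of_nonneg_right ?_ hB
  rw [← Real.exp_log (pow_pos hκ0 (l z)), ← Real.exp_add]
  apply Real.exp_le_exp.2
  rw [Real.log_pow]
  have hlog : 0 ≤ -Real.log κ := by
    have := Real.log_nonpos hκ0.le hκ1; linarith
  have := mul_le_mul_of_nonneg_right hlz hlog
  nlinarith

lemma good_stage {v₁ : V} {δ : ℝ} (hδ : 0 < δ) {S0 : Set (Finset (Sym2 V))}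
    {E : Finset (Sym2 V)} (hE : E ∈ scrS G v₁) {M : VSet G → VSet G → ℝ} (hM : FullBal E M)
    {s : ℝ} (hs : s = ∑ z, ∑ w, M z w) (hs0 : 0 < s)
    {σ : ℝ} (hσ : 0 ≤ σ) {a : VSet G → ℝ} {J : ℝ}
    (hgood : Good G δ S0 E σ a J) :
    Good G δ S0 E (s + σ) (fun x => (∑ w, M x w) + a x) (Jf (pS G δ E) M + J) := by
  obtain ⟨L, hL⟩ := hgood
  refine ⟨L, fun ε hε => ?_⟩
  set J1 := Jf (pS G δ E) M with hJ1
  -- the stage tolerance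
  have hs1 : 0 < 4 * (s + 1) := by linarith
  set ε1 := ε / (4 * (s + 1)) with hε1
  have hε1p : 0 < ε1 := div_pos hε hs1
  have hε1s : ε1 * s ≤ ε / 4 := by
    rw [hε1, div_mul_eq_mul_div, div_le_iff₀ hs1]; nlinarith
  obtain ⟨η, hη, N, hN⟩ := hL (ε / 4) (by linarith)
  obtain ⟨N0, hN0⟩ := stage_lower hδ hE hM hs hs0 hε1p
  obtain ⟨D, hD⟩ : ∃ D : ℝ, ∀ x : VSet G, |(∑ w, M x w) / s| ≤ D := by
    obtain ⟨D, hD⟩ := (Set.finite_range (fun x : VSet G => |(∑ w, M x w) / s|)).bddAbove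
    exact ⟨D, fun p => hD ⟨p, rfl⟩⟩
  obtain ⟨N1, hN1⟩ := exists_nat_gt (2 / η)
  obtain ⟨N2, hN2⟩ := exists_nat_gt ((N0 + 1) / s)
  obtain ⟨N3, hN3⟩ := exists_nat_gt (4 * |J1 / s| / ε)
  obtain ⟨N4, hN4⟩ := exists_nat_gt (4 * D / ε)
  refine ⟨η / 2, half_pos hη, N + N1 + N2 + N3 + N4,
    fun n hn m hm1 hm2 z hz c φ hφ B hB hBφ => ?_⟩
  rw [div_lt_iff₀ hη] at hN1
  rw [div_lt_iff₀ hs0] at hN2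
  rw [div_lt_iff₀ hε] at hN3 hN4
  have hn1 : (N1 : ℝ) ≤ n := by exact_mod_cast (by omega : N1 ≤ n)
  have hn2 : (N2 : ℝ) ≤ n := by exact_mod_cast (by omega : N2 ≤ n)
  have hn3 : (N3 : ℝ) ≤ n := by exact_mod_cast (by omega : N3 ≤ n)
  have hn4 : (N4 : ℝ) ≤ n := by exact_mod_cast (by omega : N4 ≤ n)
  have hn0 : (0 : ℝ) ≤ n := Nat.cast_nonneg n
  set m1 := ⌊s * n⌋₊ with hm1def
  have hf1 : (m1 : ℝ) ≤ s * n := Nat.floor_le (by positivity)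
  have hf2 : s * n < m1 + 1 := Nat.lt_floor_add_one _
  have hL0 : (0 : ℝ) ≤ L := Nat.cast_nonneg L
  have hσn : 0 ≤ σ * n := mul_nonneg hσ hn0
  have hle : m1 ≤ m := by
    have : (m1 : ℝ) ≤ m := by linarith
    exact_mod_cast this
  have hN0m : N0 ≤ m1 := by
    have h2 : (N2 : ℝ) * s ≤ n * s := mul_le_mul_of_nonneg_right hn2 hs0.le
    have : (N0 : ℝ) < m1 := by linarith
    exact_mod_cast this.le
  obtain ⟨m', rfl⟩ := Nat.exists_eq_add_of_le hle
  push_cast at hm1 hm2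
  rw [Function.iterate_add_apply]
  have hin := hN0 m1 hN0m z hz c ((TT (pS G δ))^[m'] φ) (TT_nonneg hδ hφ m')
    (Real.exp (-(n * (J + ε / 4))) * B) (mul_nonneg (Real.exp_pos _).le hB) (fun w c' hw hc' => by
      refine hN n (by omega) m' (by linarith) ?_ w hw c' φ hφ B hB fun F w₁ c₁ hF hc₁ => ?_
      · have : (N1 : ℝ) * η ≤ n * η := mul_le_mul_of_nonneg_right hn1 hη.le
        nlinarith
      · refine hBφ F w₁ c₁ hF fun x => ?_
        have h4 := abs_add_three (c₁ x - c' x - n * a x)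
          (c' x - c x - m1 * ((∑ w, M x w) / s)) ((m1 - s * n) * ((∑ w, M x w) / s))
        have e : c₁ x - c' x - n * a x + (c' x - c x - m1 * ((∑ w, M x w) / s)) +
            (m1 - s * n) * ((∑ w, M x w) / s) = c₁ x - c x - n * ((∑ w, M x w) + a x) := by
          field_simp
          ring
        rw [e] at h4
        have h5 := hc₁ x
        have h6 := hc' x
        have h7 : |(m1 - s * n) * ((∑ w, M x w) / s)| ≤ D := by
          rw [abs_mul]
          have : |(m1 : ℝ) - s * n| ≤ 1 := by rw [abs_le]; constructor <;> linarith
          calc _ ≤ 1 * |(∑ w, M x w) / s| :=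
                mul_le_mul_of_nonneg_right this (abs_nonneg _)
            _ ≤ D := by rw [one_mul]; exact hD x
        have h8 : ε1 * m1 ≤ ε / 4 * n := by
          calc ε1 * m1 ≤ ε1 * (s * n) := mul_le_mul_of_nonneg_left hf1 hε1p.le
            _ = ε1 * s * n := by ring
            _ ≤ _ := mul_le_mul_of_nonneg_right hε1s hn0
        nlinarith)
  refine le_trans ?_ hin
  rw [← mul_assoc, ← Real.exp_add]
  refine mul_le_mul_of_nonneg_right (Real.exp_le_exp.2 ?_) hB
  have h8 : ε1 * m1 ≤ ε / 4 * n := by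
    calc ε1 * m1 ≤ ε1 * (s * n) := mul_le_mul_of_nonneg_left hf1 hε1p.le
      _ = ε1 * s * n := by ring
      _ ≤ _ := mul_le_mul_of_nonneg_right hε1s hn0
  have h9 : (m1 : ℝ) * (J1 / s) ≤ n * J1 + |J1 / s| := by
    have e : n * J1 = s * n * (J1 / s) := by field_simp
    rw [e]
    have : |((m1 : ℝ) - s * n) * (J1 / s)| ≤ |J1 / s| := by
      rw [abs_mul]
      have : |(m1 : ℝ) - s * n| ≤ 1 := by rw [abs_le]; constructor <;> linarith
      calc _ ≤ 1 * |J1 / s| := mul_le_mul_of_nonneg_right this (abs_nonneg _)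
        _ = _ := one_mul _
    have := (abs_le.1 this).2
    linarith
  nlinarith

end GoodSec

section P5
variable {V : Type} [Fintype V] [LinearOrder V] {G : SimpleGraph V} [DecidableRel G.Adj]

def tw (K : Finset (Sym2 V) → VSet G → VSet G → ℝ) (F : Finset (Sym2 V)) (n : ℕ)
    (g : Fin (n + 1) → VSet G) : ℝ :=
  ∏ i : Fin n, K (F ∪ (Finset.Iic i.castSucc).image (fun j => (g j).1.1)) (g i.castSucc) (g i.succ)

def cnt (n : ℕ) (g : Fin (n + 1) → VSet G) (x : VSet G) : ℝ :=
  ((Finset.univ.filter (fun i => g i = x)).card : ℝ)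

lemma hist_cons (F : Finset (Sym2 V)) (n : ℕ) (z : VSet G) (g : Fin (n + 1) → VSet G)
    (i : Fin (n + 1)) :
    F ∪ (Finset.Iic i.succ).image (fun j => ((Fin.cons z g : Fin (n + 2) → VSet G) j).1.1)
      = insert z.1.1 F ∪ (Finset.Iic i).image (fun j => (g j).1.1) := by
  ext e
  simp only [Finset.mem_union, Finset.mem_image, Finset.mem_Iic, Finset.mem_insert]
  rw [Fin.exists_fin_succ]
  simp only [Fin.cons_zero, Fin.cons_succ, Fin.zero_le, true_and, Fin.succ_le_succ_iff]
  constructor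
  · rintro (h | h | h)
    · exact Or.inl (Or.inr h)
    · exact Or.inl (Or.inl h.symm)
    · exact Or.inr h
  · rintro ((h | h) | h)
    · exact Or.inr (Or.inl h.symm)
    · exact Or.inl h
    · exact Or.inr (Or.inr h)

lemma hist_cons_univ (F : Finset (Sym2 V)) (n : ℕ) (z : VSet G) (g : Fin (n + 1) → VSet G) :
    F ∪ Finset.univ.image (fun j => ((Fin.cons z g : Fin (n + 2) → VSet G) j).1.1)
      = insert z.1.1 F ∪ Finset.univ.image (fun j => (g j).1.1) := by
  have h := hist_cons F n z g (Fin.last n)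
  have h1 : Finset.Iic (Fin.last n) = Finset.univ := by ext x; simp [Fin.le_last]
  have h2 : Finset.Iic (Fin.last n).succ = Finset.univ := by ext x; simp [Fin.le_last]
  rw [h1, h2] at h
  exact h

lemma tw_cons (K : Finset (Sym2 V) → VSet G → VSet G → ℝ) (F : Finset (Sym2 V)) (n : ℕ)
    (z : VSet G) (g : Fin (n + 1) → VSet G) :
    tw K F (n + 1) (Fin.cons z g) = K (insert z.1.1 F) z (g 0) * tw K (insert z.1.1 F) n g := by
  unfold tw
  rw [Fin.prod_univ_succ]
  congr 1
  · congr 1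
    ext e
    simp only [Finset.mem_union, Finset.mem_image, Finset.mem_Iic, Finset.mem_insert]
    rw [Fin.exists_fin_succ]
    simp [eq_comm, or_comm]
  · refine Finset.prod_congr rfl fun i _ => ?_
    rw [← Fin.succ_castSucc, hist_cons]
    simp [Fin.cons_succ]

lemma cnt_cons (n : ℕ) (z : VSet G) (g : Fin (n + 1) → VSet G) (x : VSet G) :
    cnt (n + 1) (Fin.cons z g) x = (Pi.single z 1 : VSet G → ℝ) x + cnt n g x := by
  unfold cnt
  rw [Finset.card_filter, Finset.card_filter, Fin.sum_univ_succ]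
  push_cast
  simp only [Fin.cons_zero, Fin.cons_succ]
  congr 1
  simp only [Pi.single_apply]
  simp [eq_comm]

lemma ident (K : Finset (Sym2 V) → VSet G → VSet G → ℝ) (Φ : Stt G → ℝ) (n : ℕ) :
    ∀ (F : Finset (Sym2 V)) (c : VSet G → ℝ) (z : VSet G),
    ∑ g : Fin (n + 1) → VSet G, (if g 0 = z then
      tw K F n g * Φ (F ∪ Finset.univ.image (fun j => (g j).1.1), g (Fin.last n), c + cnt n g)
      else 0) = (TT K)^[n] Φ (insert z.1.1 F, z, c + Pi.single z 1) := by
  induction n with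
  | zero =>
    intro F c z
    rw [← (Equiv.funUnique (Fin 1) (VSet G)).symm.sum_comp]
    simp only [Equiv.funUnique_symm_apply, uniqueElim_const, Function.iterate_zero, id]
    rw [Finset.sum_ite_eq']
    simp only [Finset.mem_univ, if_true, tw, Finset.univ_eq_empty, Finset.prod_empty, one_mul]
    congr 2
    · ext e; simp [or_comm, eq_comm]
    · congr 1
      ext x
      simp [cnt, Pi.single_apply, eq_comm]
      split_ifs <;> simp
  | succ n ih =>
    intro F c z
    rw [Function.iterate_succ_apply']
    simp only [TT, opr]
    simp only [TT, opr] at ih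
    rw [← (Fin.consEquiv (fun _ : Fin (n + 2) => VSet G)).sum_comp, Fintype.sum_prod_type]
    simp only [Fin.consEquiv_apply, Fin.cons_zero]
    rw [Finset.sum_eq_single z]
    · simp only [if_true, hist_cons_univ]
      simp only [← ih]
      simp only [Finset.mul_sum, mul_ite, mul_zero]
      rw [Finset.sum_comm]
      refine Finset.sum_congr rfl fun g _ => ?_
      rw [Finset.sum_ite_eq]
      simp only [Finset.mem_univ, if_true]
      have : c + cnt (n + 1) (Fin.cons z g) = c + Pi.single z 1 + cnt n g := by
        ext x
        simp only [Pi.add_apply, cnt_cons]; ring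
      have hc : (Fin.consEquiv fun _ : Fin (n + 2) => VSet G) (z, g) = Fin.cons z g := rfl
      rw [hc, this, tw_cons, ← Fin.succ_last, Fin.cons_succ]
      ring
    · intro b _ hb
      simp [hb]
    · simp

lemma liftTraj_eq (δ : ℝ) (z : VSet G) (n : ℕ) (g : Fin (n + 1) → VSet G) :
    liftTraj G δ z n g = if g 0 = z then tw (pS G δ) ∅ n g else 0 := by
  unfold liftTraj tw
  simp only [Finset.empty_union]

lemma TT_one_le {K : Finset (Sym2 V) → VSet G → VSet G → ℝ} (hK : ∀ F z w, 0 ≤ K F z w)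
    (hK1 : ∀ F z, ∑ w, K F z w ≤ 1) (n : ℕ) : ∀ s, (TT K)^[n] (fun _ => 1) s ≤ 1 := by
  induction n with
  | zero => intro s; simp
  | succ n ih =>
    intro s
    rw [Function.iterate_succ_apply']
    simp only [TT, opr] at ih ⊢
    refine le_trans (Finset.sum_le_sum fun w _ => ?_) (hK1 s.1 s.2.1)
    exact le_trans (mul_le_mul_of_nonneg_left (ih _) (hK _ _ _)) (by simp)

lemma tw_nonneg {K : Finset (Sym2 V) → VSet G → VSet G → ℝ} (hK : ∀ F z w, 0 ≤ K F z w)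
    (F : Finset (Sym2 V)) (n : ℕ) (g : Fin (n + 1) → VSet G) : 0 ≤ tw K F n g :=
  Finset.prod_nonneg fun _ _ => hK _ _ _

lemma tw_sum_le {K : Finset (Sym2 V) → VSet G → VSet G → ℝ} (hK : ∀ F z w, 0 ≤ K F z w)
    (hK1 : ∀ F z, ∑ w, K F z w ≤ 1) (n : ℕ) (z : VSet G) :
    ∑ g : Fin (n + 1) → VSet G, (if g 0 = z then tw K ∅ n g else 0) ≤ 1 := by
  have := ident K (fun _ => 1) n ∅ 0 z
  simp only [mul_one] at this
  rw [this]
  exact TT_one_le hK hK1 n _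
end P5

section P6
variable {V : Type} [Fintype V] [LinearOrder V] {G : SimpleGraph V} [DecidableRel G.Adj]

lemma h_near {A : Type} [Fintype A] {h : ProbMeas A → ℝ} (hcont : Continuous h) (μ : ProbMeas A)
    {ε : ℝ} (hε : 0 < ε) : ∃ r : ℝ, 0 < r ∧ ∀ ν : ProbMeas A, (∀ x, |ν.1 x - μ.1 x| < r) →
      |h ν - h μ| < ε := by
  obtain ⟨r, hr, H⟩ := Metric.continuous_iff.1 hcont μ ε hε
  refine ⟨r, hr, fun ν hν => ?_⟩
  have := H ν (by
    rw [Subtype.dist_eq, dist_pi_lt_iff hr]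
    intro x
    rw [Real.dist_eq]; exact hν x)
  rwa [Real.dist_eq] at this

lemma prob_le_one {A : Type} [Fintype A] (μ : ProbMeas A) (x : A) : μ.1 x ≤ 1 := by
  refine le_trans ?_ μ.2.2.le
  exact Finset.single_le_sum (f := μ.1) (fun i _ => μ.2.1 i) (Finset.mem_univ x)

lemma Wres_lt {δ : ℝ} (hδ : 0 < δ) {S0 : Set (Finset (Sym2 V))} {z : VSet G}
    {h : ProbMeas (VSet G) → ℝ} (hcont : Continuous h) (μ : ProbMeas (VSet G)) {J : ℝ}
    (hgood : Good G δ S0 {z.1.1} 1 μ.1 J) {A : ℝ} (hA : J + h μ < A) :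
    ∀ᶠ n in atTop, Wres G δ z S0 h n < (A : EReal) := by
  obtain ⟨L, hL⟩ := hgood
  set ε0 := (A - (J + h μ)) / 4 with hε0
  have hε0p : 0 < ε0 := by rw [hε0]; linarith
  obtain ⟨r, hr, Hr⟩ := h_near hcont μ hε0p
  set ε := min ε0 (r / 2) with hεd
  have hε : 0 < ε := lt_min hε0p (by linarith)
  have hε1 : ε ≤ ε0 := min_le_left _ _
  have hε2 : ε ≤ r / 2 := min_le_right _ _
  obtain ⟨η, hη, N, HN⟩ := hL ε hε
  have t1 : Tendsto (fun m : ℕ => ((L : ℝ) + 2) / ((m : ℝ) + 1)) atTop (𝓝 0) :=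
    (tendsto_const_div_atTop_nhds_zero_nat ((L : ℝ) + 2)).comp (tendsto_add_atTop_nat 1) |>.congr
      (fun m => by simp)
  have t2 : Tendsto (fun m : ℕ => (((L : ℝ) + 1) * |J + ε|) / ((m : ℝ) + 1)) atTop (𝓝 0) :=
    (tendsto_const_div_atTop_nhds_zero_nat (((L : ℝ) + 1) * |J + ε|)).comp
      (tendsto_add_atTop_nat 1) |>.congr (fun m => by simp)
  have e1 := t1.eventually (gt_mem_nhds (show (0 : ℝ) < r / 2 by linarith))
  have e2 := t2.eventually (gt_mem_nhds hε0p)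
  filter_upwards [e1, e2, eventually_ge_atTop (N + L)] with m h1 h2 h3
  obtain ⟨n, rfl⟩ : ∃ n, m = n + L := ⟨m - L, by omega⟩
  have hn : N ≤ n := by omega
  set φ : Stt G → ℝ := fun s => if s.1 ∈ S0 ∧
    ∀ x, |s.2.2 x - (Pi.single z 1 : VSet G → ℝ) x - n * μ.1 x| ≤ ε * n then 1 else 0 with hφ
  have key := HN n hn (n + L) (by push_cast; linarith) (by
      push_cast
      have : 0 ≤ η * n := by positivity
      linarith) z (by simp) (Pi.single z 1) φ
    (fun x => by simp only [hφ]; split_ifs <;> norm_num) 1 (by norm_num)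
    (fun F w c' hF hc => by
      simp only [hφ]
      rw [if_pos ⟨hF, hc⟩])
  have hid := ident (pS G δ) φ (n + L) ∅ 0 z
  simp only [zero_add, insert_empty_eq] at hid
  rw [← hid, mul_one] at key
  clear hid
  have hm1 : (0 : ℝ) < ((n + L : ℕ) : ℝ) + 1 := by positivity
  have hμ0 := μ.2.1
  -- pointwise comparison
  have pw : ∀ g : Fin (n + L + 1) → VSet G,
      0 < φ (∅ ∪ Finset.univ.image (fun j => (g j).1.1), g (Fin.last (n + L)), cnt (n + L) g) →
      empMeas (n + L) g ∈ CC G S0 ∧ h (empMeas (n + L) g) ≤ h μ + ε0 := by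
    intro g hg
    simp only [hφ, Finset.empty_union] at hg
    split_ifs at hg with hc
    · refine ⟨⟨_, hc.1, fun w hw => ?_⟩, ?_⟩
      · by_contra hcon
        apply hw
        have : (Finset.univ.filter (fun i => g i = w)) = ∅ := by
          rw [Finset.filter_eq_empty_iff]
          intro i _ hi
          exact hcon (Finset.mem_image.2 ⟨i, Finset.mem_univ _, by rw [hi]⟩)
        simp only [empMeas]
        have h0 : (Finset.univ.filter (fun i => g i = w)).card = 0 := by rw [this]; rfl
        rw [div_eq_zero_iff]
        left
        exact_mod_cast (by convert h0)
      · have := Hr (empMeas (n + L) g) (fun x => ?_)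
        · linarith [(abs_lt.1 this).2]
        · have hx := hc.2 x
          have hex : (empMeas (n + L) g).1 x = cnt (n + L) g x / (((n + L : ℕ) : ℝ) + 1) := by
            simp only [empMeas, cnt]
          have hs := single_abs_le z x
          have hμ1 := prob_le_one μ x
          have hμ0 := μ.2.1 x
          rw [hex, div_sub' hm1.ne', abs_div, abs_of_pos hm1, div_lt_iff₀ hm1]
          rw [div_lt_iff₀ hm1] at h1
          push_cast at h1 hm1 ⊢
          have hLn : (0 : ℝ) ≤ L := by positivity
          have hn0 : (0 : ℝ) ≤ n := by positivity
          have q1 : 0 ≤ (L : ℝ) * μ.1 x := by positivity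
          have q2 : (L : ℝ) * μ.1 x ≤ L := by nlinarith
          have q3 : ε * n ≤ r / 2 * n := by nlinarith
          have q4 : 0 ≤ r * L := by positivity
          rw [abs_le] at hx hs
          rw [abs_lt]
          constructor
          · nlinarith
          · nlinarith
    · simp at hg
  set SS := ∑ g : Fin (n + L + 1) → VSet G, (if g 0 = z then
      tw (pS G δ) ∅ (n + L) g * φ (∅ ∪ Finset.univ.image (fun j => (g j).1.1),
        g (Fin.last (n + L)), cnt (n + L) g) else 0) with hSS
  have hφ01 : ∀ s, φ s = 0 ∨ φ s = 1 := fun s => by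
    simp only [hφ]; split_ifs <;> simp
  have twn : ∀ g, 0 ≤ tw (pS G δ) ∅ (n + L) g := fun g => tw_nonneg (pS_nonneg hδ) _ _ _
  have c1 : SS ≤ ∑ g : Fin (n + L + 1) → VSet G,
      (if empMeas (n + L) g ∈ CC G S0 then liftTraj G δ z (n + L) g else 0) := by
    refine Finset.sum_le_sum fun g _ => ?_
    rw [liftTraj_eq]
    rcases hφ01 (∅ ∪ Finset.univ.image (fun j => (g j).1.1), g (Fin.last (n + L)), cnt (n + L) g)
      with h0 | h0
    · rw [h0]
      have := twn g
      split_ifs <;> simp [this]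
    · rw [if_pos (pw g (by rw [h0]; norm_num)).1, h0, mul_one]
  have c2 : Real.exp (-(((n + L : ℕ) : ℝ) + 1) * (h μ + ε0)) * SS ≤
      ∑ g : Fin (n + L + 1) → VSet G, (if empMeas (n + L) g ∈ CC G S0 then
        Real.exp (-(((n + L : ℕ) : ℝ) + 1) * h (empMeas (n + L) g)) * liftTraj G δ z (n + L) g
        else 0) := by
    rw [Finset.mul_sum]
    refine Finset.sum_le_sum fun g _ => ?_
    rw [liftTraj_eq]
    rcases hφ01 (∅ ∪ Finset.univ.image (fun j => (g j).1.1), g (Fin.last (n + L)), cnt (n + L) g)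
      with h0 | h0
    · rw [h0]
      have := twn g
      have hh : 0 ≤ Real.exp (-(((n + L : ℕ) : ℝ) + 1) * h (empMeas (n + L) g)) *
        tw (pS G δ) ∅ (n + L) g := by positivity
      split_ifs <;> first | (simp only [mul_zero]; exact hh) | simp
    · have := pw g (by rw [h0]; norm_num)
      rw [if_pos this.1, h0, mul_one]
      refine mul_le_mul_of_nonneg_right ?_ (by have := twn g; split_ifs <;> simp [this])
      rw [Real.exp_le_exp]
      nlinarith [this.2]
  have hSSp : 0 < SS := lt_of_lt_of_le (Real.exp_pos _) key
  unfold Wres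
  rw [if_pos (lt_of_lt_of_le hSSp c1)]
  rw [EReal.coe_lt_coe_iff]
  set TTs := ∑ g : Fin (n + L + 1) → VSet G, (if empMeas (n + L) g ∈ CC G S0 then
        Real.exp (-(((n + L : ℕ) : ℝ) + 1) * h (empMeas (n + L) g)) * liftTraj G δ z (n + L) g
        else 0) with hTTs
  have c3 : Real.exp (-(((n + L : ℕ) : ℝ) + 1) * (h μ + ε0) + -(n * (J + ε))) ≤ TTs := by
    rw [Real.exp_add]
    exact le_trans (mul_le_mul_of_nonneg_left key (Real.exp_pos _).le) c2
  have c4 : -(((n + L : ℕ) : ℝ) + 1) * (h μ + ε0) + -(n * (J + ε)) ≤ Real.log TTs := by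
    rw [Real.le_log_iff_exp_le (lt_of_lt_of_le (Real.exp_pos _) c3)]
    exact c3
  rw [neg_lt, ← div_eq_inv_mul, lt_div_iff₀ hm1]
  refine lt_of_lt_of_le ?_ c4
  rw [div_lt_iff₀ hm1] at h2
  push_cast at h2 hm1 ⊢
  have hab := neg_abs_le (J + ε)
  have hL1 : (0 : ℝ) ≤ (L : ℝ) + 1 := by positivity
  have q5 : -((L + 1) * |J + ε|) ≤ (L + 1) * (J + ε) := by nlinarith
  have q6 : A = J + h μ + 4 * ε0 := by rw [hε0]; ring
  have q7 : (ε - ε0) * (n + L + 1) ≤ 0 := mul_nonpos_of_nonpos_of_nonneg (by linarith) hm1.le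
  have q8 : 0 < ε0 * (n + L + 1) := by positivity
  rw [q6]
  nlinarith

lemma good_chain {v₁ : V} {δ : ℝ} (hδ : 0 < δ) {S0 : Set (Finset (Sym2 V))} (K : ℕ) :
    ∀ (f : ℕ → Finset (Sym2 V)) (M : ℕ → VSet G → VSet G → ℝ)
    (_ : ∀ k ≤ K, f k ∈ scrS G v₁)
    (_ : ∀ k < K, ∃ e ∈ G.edgeFinset, ∃ e' ∈ f k, edgeAdj e e' ∧ f (k + 1) = insert e (f k))
    (_ : f K ∈ S0) (_ : ∀ k ≤ K, FullBal (f k) (M k))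
    (_ : ∀ k ≤ K, 0 < ∑ z, ∑ w, M k z w),
    Good G δ S0 (f 0) (∑ j ∈ Finset.range (K + 1), ∑ z, ∑ w, M j z w)
      (fun x => ∑ j ∈ Finset.range (K + 1), ∑ w, M j x w)
      (∑ j ∈ Finset.range (K + 1), Jf (pS G δ (f j)) (M j)) := by
  induction K with
  | zero =>
    intro f M h1 h2 h3 h4 h5
    have := good_stage hδ (h1 0 le_rfl) (h4 0 le_rfl) rfl (h5 0 le_rfl) le_rfl
      (good_base (G := G) (δ := δ) hδ h3)
    simpa using this
  | succ K ih =>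
    intro f M h1 h2 h3 h4 h5
    have i1 := ih (fun k => f (k + 1)) (fun k => M (k + 1)) (fun k hk => h1 _ (by omega))
      (fun k hk => h2 _ (by omega)) h3 (fun k hk => h4 _ (by omega)) (fun k hk => h5 _ (by omega))
    obtain ⟨e, he, e', he', hadj, hfe⟩ := h2 0 (by omega)
    simp only [zero_add] at i1 hfe
    rw [hfe] at i1
    have hσ : 0 ≤ ∑ j ∈ Finset.range (K + 1), ∑ z, ∑ w, M (j + 1) z w :=
      Finset.sum_nonneg fun j hj => (h5 _ (by have := Finset.mem_range.1 hj; omega)).le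
    have i2 := good_trans hδ (h1 0 (by omega)) he he' hadj hσ i1
    have i3 := good_stage hδ (h1 0 (by omega)) (h4 0 (by omega)) rfl (h5 0 (by omega)) hσ i2
    rw [Finset.sum_range_succ' _ (K + 1), Finset.sum_range_succ' _ (K + 1), add_comm,
      add_comm (∑ k ∈ Finset.range (K + 1), Jf (pS G δ (f (k + 1))) (M (k + 1)))]
    convert i3 using 2 with x
    rw [Finset.sum_range_succ' _ (K + 1), add_comm]

lemma Jf_cont {A : Type} [Fintype A] (p : A → A → ℝ) : Continuous (Jf p) := by
  unfold Jf
  have h1 : ∀ z w : A, Continuous fun M : A → A → ℝ => M z w * Real.log (M z w) := fun z w =>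
    Real.continuous_mul_log.comp ((continuous_apply w).comp (continuous_apply z))
  have h0 : ∀ z w : A, Continuous fun M : A → A → ℝ => M z w := fun z w =>
    (continuous_apply w).comp (continuous_apply z)
  have h2 : ∀ z : A, Continuous fun M : A → A → ℝ => (∑ w, M z w) * Real.log (∑ w, M z w) :=
    fun z => Real.continuous_mul_log.comp (continuous_finset_sum _ fun w _ => h0 z w)
  refine (Continuous.sub ?_ ?_).sub ?_
  · exact continuous_finset_sum _ fun z _ => continuous_finset_sum _ fun w _ => h1 z w
  · exact continuous_finset_sum _ fun z _ => h2 z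
  · exact continuous_finset_sum _ fun z _ => continuous_finset_sum _ fun w _ =>
      (h0 z w).mul continuous_const

lemma exists_U {E : Finset (Sym2 V)} (hE : E ⊆ G.edgeFinset) (hne : E.Nonempty) :
    ∃ U : VSet G → VSet G → ℝ, FullBal E U ∧ ∑ z, ∑ w, U z w = 1 := by
  set A : Finset (VSet G) := Finset.univ.filter (fun z => z.1.1 ∈ E) with hA
  have hAmem : ∀ z : VSet G, z ∈ A ↔ z.1.1 ∈ E := fun z => by simp [hA]
  have hAne : A.Nonempty := by
    obtain ⟨e, he⟩ := hne
    exact ⟨(⟨e, hE he⟩, true), by simp [hA, he]⟩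
  set a : ℝ := (A.card : ℝ) with ha
  have ha0 : 0 < a := by rw [ha]; exact_mod_cast hAne.card_pos
  set d : V → ℝ := fun v => ∑ w : VSet G, if w.1.1 ∈ E ∧ v = zm G w then (1 : ℝ) else 0 with hd
  have hdrev : ∀ v, d v = ∑ w : VSet G, if w.1.1 ∈ E ∧ zp G w = v then (1 : ℝ) else 0 := by
    intro v
    have hinv : Function.Involutive (rev : VSet G → VSet G) := fun z => by simp [rev]
    rw [hd]
    simp only
    rw [← Equiv.sum_comp (hinv.toPerm)]
    refine Finset.sum_congr rfl fun w _ => ?_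
    simp only [Function.Involutive.coe_toPerm, zm_rev]
    have : (rev w).1 = w.1 := rfl
    rw [this]
    simp [eq_comm]
  have hdpos : ∀ z : VSet G, z.1.1 ∈ E → 0 < d (zp G z) := by
    intro z hz
    rw [hdrev]
    refine Finset.sum_pos' (fun w _ => by split_ifs <;> norm_num) ⟨z, Finset.mem_univ _, ?_⟩
    simp [hz]
  set U : VSet G → VSet G → ℝ := fun z w =>
    if z.1.1 ∈ E ∧ w.1.1 ∈ E ∧ zp G z = zm G w then (a * d (zp G z))⁻¹ else 0 with hU
  have row : ∀ z, ∑ w, U z w = if z.1.1 ∈ E then a⁻¹ else 0 := by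
    intro z
    by_cases hz : z.1.1 ∈ E
    · have : ∀ w, U z w = (a * d (zp G z))⁻¹ * (if w.1.1 ∈ E ∧ zp G z = zm G w then (1:ℝ) else 0) := by
        intro w
        simp only [hU, hz, true_and]
        split_ifs <;> simp
      simp only [this, ← Finset.mul_sum]
      rw [if_pos hz]
      have hd0 := hdpos z hz
      change (a * d (zp G z))⁻¹ * d (zp G z) = a⁻¹
      field_simp
    · simp [hU, hz]
  have col : ∀ z, ∑ w, U w z = if z.1.1 ∈ E then a⁻¹ else 0 := by
    intro z
    by_cases hz : z.1.1 ∈ E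
    · have : ∀ w, U w z = (a * d (zm G z))⁻¹ * (if w.1.1 ∈ E ∧ zp G w = zm G z then (1:ℝ) else 0) := by
        intro w
        simp only [hU, hz, true_and]
        split_ifs with h1
        · rw [h1.2]; simp
        · simp
      simp only [this, ← Finset.mul_sum]
      rw [if_pos hz, ← hdrev]
      have hd0 := hdpos (rev z) hz
      rw [zp_rev] at hd0
      field_simp
    · simp [hU, hz]
  refine ⟨U, ⟨?_, ?_, ?_⟩, ?_⟩
  · intro z w
    simp only [hU]
    split_ifs with h1
    · have := hdpos z h1.1
      positivity
    · exact le_rfl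
  · intro z w
    constructor
    · intro h1
      by_contra hc
      simp [hU, hc] at h1
    · intro h1
      simp only [hU, if_pos h1]
      have := hdpos z h1.1
      positivity
  · intro z; rw [row, col]
  · simp only [row]
    rw [← Finset.sum_filter, Finset.sum_const, nsmul_eq_mul]
    change a * a⁻¹ = 1
    field_simp
end P6

section P7
variable {V : Type} [Fintype V] [LinearOrder V] {G : SimpleGraph V} [DecidableRel G.Adj]

lemma seqE_grow {v₁ : V} {Es : Fin G.edgeFinset.card → Finset (Sym2 V)} (hEs : Es ∈ seqE G v₁)
    {k l : Fin G.edgeFinset.card} (hkl : (k : ℕ) + 1 = (l : ℕ)) :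
    ∃ e ∈ G.edgeFinset, ∃ e' ∈ Es k, edgeAdj e e' ∧ Es l = insert e (Es k) := by
  obtain ⟨h1, h2, h3, h4, h5⟩ := hEs
  obtain ⟨e, he, hsub⟩ := Finset.ssubset_iff.1 (h3 k l hkl)
  have hel : e ∈ Es l := hsub (Finset.mem_insert_self _ _)
  obtain ⟨e', he', hadj⟩ := h5 k l hkl e (Finset.mem_sdiff.2 ⟨hel, he⟩)
  refine ⟨e, h1 l hel, e', he', hadj, (Finset.eq_of_subset_of_card_le hsub ?_).symm⟩
  rw [Finset.card_insert_of_notMem he, h2, h2]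
  omega

lemma seqE_scrS {v₁ : V} {Es : Fin G.edgeFinset.card → Finset (Sym2 V)} (hEs : Es ∈ seqE G v₁)
    (k : Fin G.edgeFinset.card) : Es k ∈ scrS G v₁ := by
  obtain ⟨k, hk⟩ := k
  induction k with
  | zero =>
    obtain ⟨h1, h2, h3, h4, h5⟩ := id hEs
    obtain ⟨e, he, hv⟩ := h4 ⟨0, hk⟩ rfl
    obtain ⟨e2, h⟩ := Finset.card_eq_one.1 (h2 ⟨0, hk⟩)
    rw [h] at he ⊢
    have : e = e2 := by simpa using he
    subst this
    exact scrS_singleton (h1 ⟨0, hk⟩ (by rw [h]; simp)) hv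
  | succ k ih =>
    obtain ⟨e, he, e', he', hadj, heq⟩ := seqE_grow hEs (k := ⟨k, by omega⟩) (l := ⟨k + 1, hk⟩) rfl
    rw [heq]
    exact scrS_insert (ih _) he he' hadj

lemma sum_cut {b K : ℕ} (hK : K < b) (X : ℕ → ℝ) (hX : ∀ j, K < j → j < b → X j = 0) :
    ∑ j ∈ Finset.range (K + 1), X j = ∑ k : Fin b, X k := by
  rw [← Finset.sum_range]
  refine Finset.sum_subset (fun j hj => ?_) (fun j hj hj' => ?_)
  · simp only [Finset.mem_range] at hj ⊢; omega
  · simp only [Finset.mem_range] at hj hj'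
    exact hX j (by omega) hj

lemma upper_core {v₁ : V} {δ : ℝ} (hδ : 0 < δ) {S0 : Set (Finset (Sym2 V))} {z : VSet G}
    {h : ProbMeas (VSet G) → ℝ} (hcont : Continuous h) (μ : ProbMeas (VSet G))
    (μs : Fin G.edgeFinset.card → ProbMeas (VSet G)) (r : Fin G.edgeFinset.card → ℝ)
    (Es : Fin G.edgeFinset.card → Finset (Sym2 V))
    (qs : Fin G.edgeFinset.card → VSet G → VSet G → ℝ)
    (hEs : Es ∈ seqE G v₁) (h0 : ∀ k : Fin G.edgeFinset.card, (k : ℕ) = 0 → Es k = {z.1.1})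
    (hr0 : ∀ k, 0 ≤ r k) (hrS : ∀ k, Es k ∉ S0 → r k = 0) (hr1 : ∑ k, r k = 1)
    (hsupp : ∀ k w, (μs k).1 w ≠ 0 → w.1.1 ∈ Es k)
    (hμ : ∀ w, ∑ k, r k * (μs k).1 w = μ.1 w)
    (hq : ∀ k, qs k ∈ TS G) (hinv : ∀ k, Invariant (μs k).1 (qs k)) {A : ℝ}
    (hA : ∑ k, Jf (pS G δ (Es k)) (fun z w => r k * (μs k).1 z * qs k z w) + h μ < A) :
    ∀ᶠ n in atTop, Wres G δ z S0 h n < (A : EReal) := by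
  -- top index
  obtain ⟨K, hKS, hKmax⟩ : ∃ K : Fin G.edgeFinset.card, Es K ∈ S0 ∧ ∀ j : Fin G.edgeFinset.card, K < j → r j = 0 := by
    have hne : (Finset.univ.filter (fun k : Fin G.edgeFinset.card => Es k ∈ S0)).Nonempty := by
      by_contra hc
      rw [Finset.not_nonempty_iff_eq_empty, Finset.filter_eq_empty_iff] at hc
      have : ∑ k, r k = 0 := Finset.sum_eq_zero fun k hk => hrS k (hc hk)
      linarith
    refine ⟨Finset.max' _ hne, (Finset.mem_filter.1 (Finset.max'_mem _ hne)).2, fun j hj => ?_⟩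
    by_contra hc
    have hj' : Es j ∈ S0 := by
      by_contra hc'
      exact hc (hrS j hc')
    have := Finset.le_max' (Finset.univ.filter (fun k : Fin G.edgeFinset.card => Es k ∈ S0)) j (by simp [hj'])
    exact absurd hj (not_lt.2 this)
  have hKb : (K : ℕ) < G.edgeFinset.card := K.2
  set f : ℕ → Finset (Sym2 V) := fun j => if hj : j < G.edgeFinset.card then Es ⟨j, hj⟩ else ∅ with hf
  have hfk : ∀ j (hj : j < G.edgeFinset.card), f j = Es ⟨j, hj⟩ := fun j hj => by simp [hf, hj]
  set M0 : ℕ → VSet G → VSet G → ℝ := fun j z w => if hj : j < G.edgeFinset.card then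
    r ⟨j, hj⟩ * (μs ⟨j, hj⟩).1 z * qs ⟨j, hj⟩ z w else 0 with hM0
  have hMk : ∀ j (hj : j < G.edgeFinset.card), M0 j = fun z w => r ⟨j, hj⟩ * (μs ⟨j, hj⟩).1 z * qs ⟨j, hj⟩ z w :=
    fun j hj => by simp [hM0, hj]
  have hMrow : ∀ j (hj : j < G.edgeFinset.card) x, ∑ w, M0 j x w = r ⟨j, hj⟩ * (μs ⟨j, hj⟩).1 x := by
    intro j hj x
    rw [hMk j hj]
    simp only [← Finset.mul_sum]
    rw [(hq _).2.1, mul_one]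
  have hMcol : ∀ j (hj : j < G.edgeFinset.card) x, ∑ w, M0 j w x = r ⟨j, hj⟩ * (μs ⟨j, hj⟩).1 x := by
    intro j hj x
    rw [hMk j hj]
    simp only [mul_assoc, ← Finset.mul_sum]
    rw [hinv _ x]
  have hMnn : ∀ j (hj : j < G.edgeFinset.card) z w, 0 ≤ M0 j z w := by
    intro j hj z w
    rw [hMk j hj]
    exact mul_nonneg (mul_nonneg (hr0 _) ((μs _).2.1 _)) ((hq _).1 _ _)
  have hMsup : ∀ j (hj : j < G.edgeFinset.card) z w, M0 j z w ≠ 0 →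
      z.1.1 ∈ f j ∧ w.1.1 ∈ f j ∧ zp G z = zm G w := by
    intro j hj z w hne
    have hpos : 0 < M0 j z w := lt_of_le_of_ne (hMnn j hj z w) (Ne.symm hne)
    have hcol : ∑ x, M0 j x w ≠ 0 := by
      refine ne_of_gt (lt_of_lt_of_le hpos ?_)
      exact Finset.single_le_sum (f := fun x => M0 j x w) (fun i _ => hMnn j hj i w)
        (Finset.mem_univ z)
    rw [hMcol j hj] at hcol
    rw [hMk j hj] at hne
    rw [hfk j hj]
    simp only [ne_eq, mul_eq_zero, not_or] at hne hcol
    exact ⟨hsupp _ _ hne.1.2, hsupp _ _ hcol.2, (hq _).2.2 _ _ hne.2⟩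
  have hscr : ∀ j (hj : j < G.edgeFinset.card), f j ∈ scrS G v₁ := fun j hj => by
    rw [hfk j hj]; exact seqE_scrS hEs _
  have hUex : ∀ j, ∃ U : VSet G → VSet G → ℝ, j < G.edgeFinset.card → FullBal (f j) U ∧ ∑ z, ∑ w, U z w = 1 := by
    intro j
    by_cases hj : j < G.edgeFinset.card
    · obtain ⟨U, hU⟩ := exists_U (hscr j hj).1 (by
        obtain ⟨e, he, _⟩ := (hscr j hj).2.1
        exact ⟨e, he⟩)
      exact ⟨U, fun _ => hU⟩
    · exact ⟨0, fun h => absurd h hj⟩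
  choose U hU using hUex
  set κ : ℝ := ((K : ℕ) : ℝ) + 1 with hκ
  have hκ0 : 0 < κ := by positivity
  set Me : ℝ → ℕ → VSet G → VSet G → ℝ := fun ε j z w =>
    (1 - ε) * M0 j z w + ε / κ * U j z w with hMe
  set JJ : ℝ → ℝ := fun ε => ∑ j ∈ Finset.range ((K : ℕ) + 1), Jf (pS G δ (f j)) (Me ε j) with hJJ
  have hJcont : Continuous JJ := by
    refine continuous_finset_sum _ fun j _ => (Jf_cont _).comp ?_
    refine continuous_pi fun z => continuous_pi fun w => ?_
    simp only [hMe]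
    fun_prop
  have hJ0 : JJ 0 = ∑ k, Jf (pS G δ (Es k)) (fun z w => r k * (μs k).1 z * qs k z w) := by
    simp only [hJJ]
    rw [sum_cut hKb]
    · refine Finset.sum_congr rfl fun k _ => ?_
      rw [hfk k k.2]
      congr 1
      ext z w
      simp only [hMe]
      rw [hMk k k.2]; simp
    · intro j hj hjb
      have : Me 0 j = fun z w => 0 := by
        ext z w
        simp only [hMe]
        rw [hMk j hjb, hKmax ⟨j, hjb⟩ hj]
        simp
      rw [this]
      simp [Jf]
  have hμrow : ∀ x, ∑ j ∈ Finset.range ((K : ℕ) + 1), ∑ w, M0 j x w = μ.1 x := by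
    intro x
    rw [sum_cut hKb]
    · rw [← hμ x]
      exact Finset.sum_congr rfl fun k _ => hMrow k k.2 x
    · intro j hj hjb
      rw [hMrow j hjb, hKmax ⟨j, hjb⟩ hj, zero_mul]
  set ε0 := (A - (JJ 0 + h μ)) / 3 with hε0
  have hε0p : 0 < ε0 := by rw [hε0, hJ0]; linarith
  obtain ⟨ρ, hρ, Hρ⟩ := h_near hcont μ hε0p
  have ev : ∀ᶠ ε in 𝓝[>] (0 : ℝ), JJ ε < JJ 0 + ε0 ∧ ε < ρ ∧ ε < 1 ∧ 0 < ε := by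
    have e1 : ∀ᶠ ε in 𝓝 (0 : ℝ), JJ ε < JJ 0 + ε0 :=
      (hJcont.tendsto 0).eventually (gt_mem_nhds (by linarith))
    have e2 : ∀ᶠ ε in 𝓝 (0 : ℝ), ε < ρ := gt_mem_nhds hρ
    have e3 : ∀ᶠ ε in 𝓝 (0 : ℝ), ε < 1 := gt_mem_nhds one_pos
    filter_upwards [e1.filter_mono nhdsWithin_le_nhds, e2.filter_mono nhdsWithin_le_nhds,
      e3.filter_mono nhdsWithin_le_nhds, self_mem_nhdsWithin] with ε h1 h2 h3 h4
    exact ⟨h1, h2, h3, h4⟩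
  obtain ⟨ε, hε1, hε2, hε3, hε4⟩ := ev.exists
  have hrowE : ∀ j x, ∑ w, Me ε j x w = (1 - ε) * ∑ w, M0 j x w + ε / κ * ∑ w, U j x w := by
    intro j x
    simp only [hMe, Finset.sum_add_distrib, Finset.mul_sum]
  have hmassE : ∀ j, ∑ x, ∑ w, Me ε j x w
      = (1 - ε) * (∑ x, ∑ w, M0 j x w) + ε / κ * ∑ x, ∑ w, U j x w := by
    intro j
    simp only [hrowE, Finset.sum_add_distrib, Finset.mul_sum]
  have hεκ : 0 < ε / κ := by positivity
  have hFB : ∀ k ≤ (K : ℕ), FullBal (f k) (Me ε k) := by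
    intro k hk
    have hkb : k < G.edgeFinset.card := by omega
    obtain ⟨⟨u1, u2, u3⟩, u4⟩ := hU k hkb
    refine ⟨?_, ?_, ?_⟩
    · intro z w
      exact add_nonneg (mul_nonneg (by linarith) (hMnn k hkb z w)) (mul_nonneg hεκ.le (u1 z w))
    · intro z w
      rw [← u2 z w]
      constructor
      · intro hp
        by_contra hc
        have hU0 : U k z w = 0 := le_antisymm (not_lt.1 hc) (u1 z w)
        have hM00 : M0 k z w ≠ 0 := by
          intro hz0
          simp [hMe, hU0, hz0] at hp
        exact hc ((u2 z w).2 (hMsup k hkb z w hM00))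
      · intro hp
        exact add_pos_of_nonneg_of_pos (mul_nonneg (by linarith) (hMnn k hkb z w))
          (mul_pos hεκ hp)
    · intro z
      rw [hrowE, hMrow k hkb, u3 z]
      simp only [hMe, Finset.sum_add_distrib, ← Finset.mul_sum]
      rw [hMcol k hkb]
  have hmp : ∀ k ≤ (K : ℕ), 0 < ∑ z, ∑ w, Me ε k z w := by
    intro k hk
    have hkb : k < G.edgeFinset.card := by omega
    rw [hmassE, (hU k hkb).2]
    have : 0 ≤ ∑ x, ∑ w, M0 k x w :=
      Finset.sum_nonneg fun x _ => Finset.sum_nonneg fun w _ => hMnn k hkb x w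
    have := mul_nonneg (show 0 ≤ 1 - ε by linarith) this
    linarith
  have good := good_chain (G := G) (v₁ := v₁) hδ (S0 := S0) (K : ℕ) f (Me ε)
    (fun k hk => hscr k (by omega))
    (fun k hk => by
      rw [hfk k (by omega), hfk (k + 1) (by omega)]
      exact seqE_grow hEs rfl)
    (by rw [hfk K hKb]; exact hKS) hFB hmp
  have hf0 : f 0 = {z.1.1} := by rw [hfk 0 (by omega)]; exact h0 _ rfl
  set u : VSet G → ℝ := fun x => ∑ j ∈ Finset.range ((K : ℕ) + 1), κ⁻¹ * ∑ w, U j x w with hu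
  have hmarg : ∀ x, ∑ j ∈ Finset.range ((K : ℕ) + 1), ∑ w, Me ε j x w
      = (1 - ε) * μ.1 x + ε * u x := by
    intro x
    simp only [hrowE, Finset.sum_add_distrib, ← Finset.mul_sum, hμrow, hu]
    rw [div_eq_mul_inv, mul_assoc]
  have hu0 : ∀ x, 0 ≤ u x := by
    intro x
    refine Finset.sum_nonneg fun j hj => mul_nonneg (by positivity) (Finset.sum_nonneg fun w _ => ?_)
    exact (hU j (by have := Finset.mem_range.1 hj; omega)).1.1 x w
  have hu1 : ∑ x, u x = 1 := by
    simp only [hu]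
    rw [Finset.sum_comm]
    rw [Finset.sum_congr rfl (g := fun _ => κ⁻¹)]
    · rw [Finset.sum_const, Finset.card_range, nsmul_eq_mul]
      push_cast
      change κ * κ⁻¹ = 1
      field_simp
    · intro j hj
      rw [← Finset.mul_sum, (hU j (by have := Finset.mem_range.1 hj; omega)).2, mul_one]
  let ν : ProbMeas (VSet G) := ⟨fun x => (1 - ε) * μ.1 x + ε * u x,
    fun x => add_nonneg (mul_nonneg (by linarith) (μ.2.1 x)) (mul_nonneg hε4.le (hu0 x)), by
      rw [Finset.sum_add_distrib, ← Finset.mul_sum, ← Finset.mul_sum, hu1, μ.2.2]; ring⟩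
  have hux : ∀ x, u x ≤ 1 := prob_le_one ⟨u, hu0, hu1⟩
  have hmass : ∑ j ∈ Finset.range ((K : ℕ) + 1), ∑ x, ∑ w, Me ε j x w = 1 := by
    rw [Finset.sum_comm]
    simp only [hmarg]
    exact ν.2.2
  rw [hf0, hmass] at good
  have hνe : (fun x => ∑ j ∈ Finset.range ((K : ℕ) + 1), ∑ w, Me ε j x w) = ν.1 := by
    ext x; exact hmarg x
  rw [hνe] at good
  refine Wres_lt hδ hcont ν good ?_
  change JJ ε + h ν < A
  have hhν := Hρ ν (fun x => by
    have e : ν.1 x - μ.1 x = ε * (u x - μ.1 x) := by simp only [ν]; ring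
    rw [e, abs_mul, abs_of_pos hε4]
    have : |u x - μ.1 x| ≤ 1 := by
      rw [abs_le]
      constructor <;> linarith [hu0 x, hux x, μ.2.1 x, prob_le_one μ x]
    nlinarith)
  have := (abs_lt.1 hhν).2
  have : A = JJ 0 + h μ + 3 * ε0 := by rw [hε0]; ring
  linarith

lemma ereal_sum {ι : Type} (s : Finset ι) (f : ι → ℝ) :
    ((∑ i ∈ s, f i : ℝ) : EReal) = ∑ i ∈ s, (f i : EReal) := by
  induction s using Finset.induction_on with
  | empty => simp
  | insert a s ha ih => rw [Finset.sum_insert ha, Finset.sum_insert ha, EReal.coe_add, ih]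

lemma relEntInt_coe {δ : ℝ} (hδ : 0 < δ) (E : Finset (Sym2 V)) (ν : VSet G → ℝ)
    {q : VSet G → VSet G → ℝ} (hq : q ∈ TS G) :
    relEntInt ν q (pS G δ E) =
      ((∑ z, ν z * ∑ w, q z w * Real.log (q z w / pS G δ E z w) : ℝ) : EReal) := by
  unfold relEntInt
  rw [ereal_sum]
  refine Finset.sum_congr rfl fun z _ => ?_
  rw [EReal.coe_mul]
  congr 1
  unfold relEnt
  rw [if_pos]
  intro w hw
  by_contra hc
  exact ((pS_eq_zero_iff hδ E z w).1 hw) (hq.2.2 z w hc)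

lemma cost_coe {δ : ℝ} (hδ : 0 < δ) (E : Finset (Sym2 V)) (r : ℝ) (ν : VSet G → ℝ)
    {q : VSet G → VSet G → ℝ} (hq : q ∈ TS G) :
    ((r : ℝ) : EReal) * relEntInt ν q (pS G δ E) =
      ((Jf (pS G δ E) (fun z w => r * ν z * q z w) : ℝ) : EReal) := by
  rw [relEntInt_coe hδ E ν hq, ← EReal.coe_mul, Finset.mul_sum]
  congr 1
  rw [Jf_eq (m := fun z => r * ν z) (q := q) (fun z w => rfl) hq.2.1]
  · exact Finset.sum_congr rfl fun z _ => by ring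
  · intro z w hw
    by_contra hc
    exact ((pS_eq_zero_iff hδ E z w).1 hw) (hq.2.2 z w hc)

lemma upper_bound {v₁ : V} {δ : ℝ} (hδ : 0 < δ) {S0 : Set (Finset (Sym2 V))} {z : VSet G}
    {h : ProbMeas (VSet G) → ℝ} (hcont : Continuous h) {A : ℝ}
    (hA : sInf ((fun μ => LamZ G v₁ δ S0 z μ + ((h μ : ℝ) : EReal)) '' CC G S0) < (A : EReal)) :
    ∀ᶠ n in atTop, Wres G δ z S0 h n < (A : EReal) := by
  obtain ⟨_, ⟨μ, hμ, rfl⟩, hlt⟩ := sInf_lt_iff.1 hA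
  simp only at hlt
  have hlt2 : LamZ G v₁ δ S0 z μ < ((A - h μ : ℝ) : EReal) := by
    by_contra hc
    rw [not_lt] at hc
    have := add_le_add_left hc ((h μ : ℝ) : EReal)
    rw [← EReal.coe_add] at this
    simp only [sub_add_cancel] at this
    exact absurd hlt (not_lt.2 this)
  unfold LamZ at hlt2
  obtain ⟨c, ⟨μs, r, Es, qs, h1, h2, h3, h4, h5, h6, h7, h8, h9, rfl⟩, hc⟩ := sInf_lt_iff.1 hlt2
  refine upper_core hδ hcont μ μs r Es qs h1 h2 h3 h4 h5 h6 h7 h8 h9 ?_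
  simp only [cost_coe hδ _ _ _ (h8 _)] at hc
  rw [← ereal_sum, EReal.coe_lt_coe_iff] at hc
  linarith
end P7

section P8
variable {V : Type} [Fintype V] [LinearOrder V] {G : SimpleGraph V} [DecidableRel G.Adj]

def Grow (G : SimpleGraph V) [DecidableRel G.Adj] (F F' : Finset (Sym2 V)) : Prop :=
  ∃ e ∈ G.edgeFinset, e ∉ F ∧ (∃ e' ∈ F, edgeAdj e e') ∧ F' = insert e F

lemma exists_grow (hG : G.Connected) {F : Finset (Sym2 V)} (hF : F ⊆ G.edgeFinset)
    (hne : F.Nonempty) (hno : ¬ ∃ F', Grow G F F') : F = G.edgeFinset := by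
  have key : ∀ x y, memVerts F x → G.Adj x y → s(x, y) ∈ F := by
    rintro x y ⟨e', he', hx⟩ hxy
    by_contra hc
    exact hno ⟨_, s(x, y), by simpa using hxy, hc, ⟨e', he', x, by simp, hx⟩, rfl⟩
  obtain ⟨e0, he0⟩ := hne
  obtain ⟨v, hv⟩ : ∃ v, v ∈ e0 := by
    induction e0 using Sym2.ind with
    | _ a b => exact ⟨a, by simp⟩
  have all : ∀ y, memVerts F y := by
    intro y
    have hr := hG.preconnected v y
    rw [SimpleGraph.reachable_iff_reflTransGen] at hr
    induction hr with
    | refl => exact ⟨e0, he0, hv⟩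
    | tail _ hadj ih => exact ⟨_, key _ _ ih hadj, by simp⟩
  refine Finset.Subset.antisymm hF fun e he => ?_
  induction e using Sym2.ind with
  | _ a b => exact key a b (all a) (by simpa using he)

def ext1 (G : SimpleGraph V) [DecidableRel G.Adj] (F : Finset (Sym2 V)) : Finset (Sym2 V) :=
  if h : ∃ F', Grow G F F' then h.choose else F

lemma chain_ext (hG : G.Connected) (n : ℕ) : ∀ (H : Fin (n + 1) → Finset (Sym2 V)),
    (∀ i, H i ⊆ G.edgeFinset) → (∀ i, (H i).Nonempty) →
    (∀ i : Fin n, H i.succ = H i.castSucc ∨ Grow G (H i.castSucc) (H i.succ)) →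
    ∃ f : ℕ → Finset (Sym2 V), f 0 = H 0 ∧
      (∀ j, Grow G (f j) (f (j + 1)) ∨ (f j = G.edgeFinset ∧ f (j + 1) = G.edgeFinset)) ∧
      ∀ i, ∃ j, f j = H i := by
  induction n with
  | zero =>
    intro H h1 h2 _
    have hinv : ∀ j, (ext1 G)^[j] (H 0) ⊆ G.edgeFinset ∧ ((ext1 G)^[j] (H 0)).Nonempty ∧
        (Grow G ((ext1 G)^[j] (H 0)) ((ext1 G)^[j + 1] (H 0)) ∨
        ((ext1 G)^[j] (H 0) = G.edgeFinset ∧ (ext1 G)^[j + 1] (H 0) = G.edgeFinset)) := by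
      have step : ∀ F, F ⊆ G.edgeFinset → F.Nonempty →
          (Grow G F (ext1 G F) ∨ (F = G.edgeFinset ∧ ext1 G F = G.edgeFinset)) := by
        intro F hF hne
        by_cases h : ∃ F', Grow G F F'
        · left
          have : ext1 G F = h.choose := by simp [ext1, h]
          rw [this]; exact h.choose_spec
        · right
          have h3 := exists_grow hG hF hne h
          have : ext1 G F = F := by unfold ext1; rw [dif_neg h]
          rw [this]; exact ⟨h3, h3⟩
      intro j
      induction j with
      | zero => exact ⟨h1 0, h2 0, step _ (h1 0) (h2 0)⟩
      | succ j ih =>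
        obtain ⟨i1, i2, i3⟩ := ih
        have hh : (ext1 G)^[j + 1] (H 0) ⊆ G.edgeFinset ∧ ((ext1 G)^[j + 1] (H 0)).Nonempty := by
          rcases i3 with ⟨e, he, hne, _, heq⟩ | ⟨_, h4⟩
          · rw [heq]
            exact ⟨Finset.insert_subset he i1, Finset.insert_nonempty _ _⟩
          · rw [h4]
            exact ⟨subset_rfl, i2.mono i1⟩
        refine ⟨hh.1, hh.2, ?_⟩
        rw [Function.iterate_succ_apply' _ (j + 1)]
        exact step _ hh.1 hh.2
    refine ⟨fun j => (ext1 G)^[j] (H 0), rfl, fun j => (hinv j).2.2, fun i => ⟨0, ?_⟩⟩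
    have : i = 0 := Fin.ext (by omega)
    rw [this]; rfl
  | succ n ih =>
    intro H h1 h2 h3
    obtain ⟨f, f0, f1, f2⟩ := ih (fun i => H i.succ) (fun i => h1 _) (fun i => h2 _)
      (fun i => by
        have := h3 i.succ
        simpa using this)
    rcases h3 0 with h | h
    · simp only [Fin.castSucc_zero] at h
      refine ⟨f, by rw [f0, h], f1, fun i => ?_⟩
      refine Fin.cases ⟨0, by rw [f0, h]⟩ (fun i => f2 i) i
    · simp only [Fin.castSucc_zero] at h
      refine ⟨fun j => Nat.casesOn j (H 0) f, rfl, fun j => ?_, fun i => ?_⟩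
      · cases j with
        | zero => left; simpa [f0] using h
        | succ j => exact f1 j
      · refine Fin.cases ⟨0, rfl⟩ (fun i => ?_) i
        obtain ⟨j, hj⟩ := f2 i
        exact ⟨j + 1, hj⟩

lemma chain_seqE {v₁ : V} {e0 : Sym2 V} (he0 : e0 ∈ G.edgeFinset) (hv : v₁ ∈ e0)
    {f : ℕ → Finset (Sym2 V)} (hf0 : f 0 = {e0})
    (hf : ∀ j, Grow G (f j) (f (j + 1)) ∨ (f j = G.edgeFinset ∧ f (j + 1) = G.edgeFinset)) :
    ∃ Es ∈ seqE G v₁, (∀ k : Fin G.edgeFinset.card, (k : ℕ) = 0 → Es k = {e0}) ∧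
      ∀ j, ∃ k, Es k = f j := by
  have hsub : ∀ j, f j ⊆ G.edgeFinset := by
    intro j
    induction j with
    | zero => rw [hf0]; simpa using he0
    | succ j ih =>
      rcases hf j with ⟨e, he, hne, _, heq⟩ | ⟨_, h4⟩
      · rw [heq]; exact Finset.insert_subset he ih
      · rw [h4]
  have hcard : ∀ j, j < G.edgeFinset.card → (f j).card = j + 1 := by
    intro j
    induction j with
    | zero => intro _; rw [hf0]; simp
    | succ j ih =>
      intro hj
      have i1 := ih (by omega)
      rcases hf j with ⟨e, he, hne, _, heq⟩ | ⟨h3, h4⟩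
      · rw [heq, Finset.card_insert_of_notMem hne, i1]
      · rw [h3] at i1; omega
  have hgrow : ∀ j, j + 1 < G.edgeFinset.card → Grow G (f j) (f (j + 1)) := by
    intro j hj
    rcases hf j with h | ⟨h3, h4⟩
    · exact h
    · have := hcard j (by omega)
      rw [h3] at this; omega
  have hb : 0 < G.edgeFinset.card := Finset.card_pos.2 ⟨e0, he0⟩
  have htop : ∀ j, G.edgeFinset.card ≤ j + 1 → f j = G.edgeFinset := by
    intro j hj
    obtain ⟨d, rfl⟩ : ∃ d, j = G.edgeFinset.card - 1 + d := ⟨j - (G.edgeFinset.card - 1), by omega⟩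
    clear hj
    induction d with
    | zero =>
      refine Finset.eq_of_subset_of_card_le (hsub _) ?_
      rw [hcard _ (by omega)]; omega
    | succ d ih =>
      rcases hf (G.edgeFinset.card - 1 + d) with ⟨e, he, hne, _, heq⟩ | ⟨h3, h4⟩
      · rw [ih] at hne; exact absurd he hne
      · exact h4
  refine ⟨fun k => f k, ⟨fun k => hsub _, fun k => hcard _ k.2, ?_, ?_, ?_⟩, ?_, ?_⟩
  · intro k l hkl
    have hl := l.2
    obtain ⟨e, he, hne, _, heq⟩ := hgrow k (by omega)
    simp only [← hkl]
    rw [heq]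
    exact Finset.ssubset_insert hne
  · intro k hk
    simp only [hk, hf0]
    exact ⟨e0, by simp, hv⟩
  · intro k l hkl
    have hl := l.2
    obtain ⟨e, he, hne, ⟨e', he', hadj⟩, heq⟩ := hgrow k (by omega)
    simp only [← hkl]
    rw [heq]
    intro e2 he2
    have : e2 = e := by
      simp only [Finset.mem_sdiff, Finset.mem_insert] at he2
      tauto
    rw [this]
    exact ⟨e', he', hadj⟩
  · intro k hk
    simp only [hk, hf0]
  · intro j
    by_cases hj : j < G.edgeFinset.card
    · exact ⟨⟨j, hj⟩, rfl⟩
    · refine ⟨⟨G.edgeFinset.card - 1, by omega⟩, ?_⟩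
      simp only
      rw [htop _ (by omega), htop j (by omega)]

lemma seqE_mono {v₁ : V} {Es : Fin G.edgeFinset.card → Finset (Sym2 V)} (hEs : Es ∈ seqE G v₁)
    {k l : Fin G.edgeFinset.card} (hkl : k ≤ l) : Es k ⊆ Es l := by
  obtain ⟨k, hk⟩ := k
  obtain ⟨l, hl⟩ := l
  have hkl' : k ≤ l := hkl
  clear hkl
  induction l, hkl' using Nat.le_induction with
  | base => exact subset_rfl
  | succ l hkl ih =>
    exact (ih (by omega)).trans (hEs.2.2.1 ⟨l, by omega⟩ ⟨l + 1, hl⟩ rfl).subset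

lemma lower_L {v₁ : V} {δ : ℝ} (hδ : 0 < δ) {S0 : Set (Finset (Sym2 V))} {z0 : VSet G}
    (t : Finset (Sym2 V) → VSet G → VSet G → ℝ) (ht0 : ∀ F z w, 0 ≤ t F z w)
    (ht1 : ∑ F, ∑ z, ∑ w, t F z w = 1) (hbal : ∀ F z, ∑ w, t F z w = ∑ w, t F w z)
    (hsup : ∀ F z w, t F z w ≠ 0 → zp G z = zm G w ∧ z.1.1 ∈ F ∧ F ∈ S0)
    (Es : Fin G.edgeFinset.card → Finset (Sym2 V)) (hEs : Es ∈ seqE G v₁)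
    (hE0 : ∀ k : Fin G.edgeFinset.card, (k : ℕ) = 0 → Es k = {z0.1.1})
    (hran : ∀ F z w, t F z w ≠ 0 → ∃ k, Es k = F)
    (μ : ProbMeas (VSet G)) (hμ : ∀ x, μ.1 x = ∑ F, ∑ w, t F x w) :
    μ ∈ CC G S0 ∧ LamZ G v₁ δ S0 z0 μ ≤ ((∑ F, Jf (pS G δ F) (t F) : ℝ) : EReal) := by
  have hinj : Function.Injective Es := by
    intro k l hkl
    have h1 := hEs.2.1 k
    have h2 := hEs.2.1 l
    rw [hkl] at h1
    exact Fin.ext (by omega)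
  have hoff : ∀ F, F ∉ Set.range Es → t F = 0 := by
    intro F hF
    ext z w
    by_contra hc
    obtain ⟨k, hk⟩ := hran F z w hc
    exact hF ⟨k, hk⟩
  set m : Fin G.edgeFinset.card → VSet G → ℝ := fun k x => ∑ w, t (Es k) x w with hm
  have hm0 : ∀ k x, 0 ≤ m k x := fun k x => Finset.sum_nonneg fun w _ => ht0 _ _ _
  have hmt : ∀ k x w, m k x = 0 → t (Es k) x w = 0 := by
    intro k x w h
    exact (Finset.sum_eq_zero_iff_of_nonneg (fun w _ => ht0 _ _ _)).1 h w (Finset.mem_univ _)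
  set r : Fin G.edgeFinset.card → ℝ := fun k => ∑ x, m k x with hr
  have hr0 : ∀ k, 0 ≤ r k := fun k => Finset.sum_nonneg fun x _ => hm0 k x
  have hrm : ∀ k x, r k = 0 → m k x = 0 := by
    intro k x h
    exact (Finset.sum_eq_zero_iff_of_nonneg (fun w _ => hm0 _ _)).1 h x (Finset.mem_univ _)
  have hmsup : ∀ k x, m k x ≠ 0 → x.1.1 ∈ Es k ∧ Es k ∈ S0 := by
    intro k x h
    obtain ⟨w, _, hw⟩ := Finset.exists_ne_zero_of_sum_ne_zero h
    exact (hsup _ _ _ hw).2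
  have hr1 : ∑ k, r k = 1 := by
    rw [← ht1]
    exact Fintype.sum_of_injective Es hinj r (fun F => ∑ z, ∑ w, t F z w)
      (fun F hF => by simp [hoff F hF]) (fun k => rfl)
  -- measures
  have hμs : ∀ k, ∃ ν : ProbMeas (VSet G), (∀ x, r k * ν.1 x = m k x) ∧
      (∀ x, ν.1 x ≠ 0 → x.1.1 ∈ Es k) ∧ (r k = 0 → ∀ x, ν.1 (rev x) = ν.1 x) := by
    intro k
    by_cases hk : r k = 0
    · obtain ⟨e, he, _⟩ := (seqE_scrS hEs k).2.1
      have heG := (seqE_scrS hEs k).1 he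
      refine ⟨⟨fun x => if x.1.1 = e then 1 / 2 else 0, fun x => by
        dsimp only; split_ifs <;> norm_num, ?_⟩,
        ?_, ?_, ?_⟩
      · rw [Fintype.sum_prod_type]
        simp only [Finset.sum_const, Finset.card_univ, Fintype.card_bool, nsmul_eq_mul]
        rw [Finset.sum_eq_single ⟨e, heG⟩]
        · norm_num
        · intro b _ hb
          have : b.1 ≠ e := fun h => hb (Subtype.ext h)
          simp [this]
        · simp
      · intro x; rw [hk, zero_mul, hrm k x hk]
      · intro x hx
        by_cases hxe : x.1.1 = e
        · rw [hxe]; exact he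
        · simp [hxe] at hx
      · intro _ x; rfl
    · refine ⟨⟨fun x => m k x / r k, fun x => div_nonneg (hm0 k x) (hr0 k), ?_⟩, ?_, ?_, ?_⟩
      · rw [← Finset.sum_div]; exact div_self hk
      · intro x; field_simp
      · intro x hx
        refine (hmsup k x ?_).1
        intro h0; simp [h0] at hx
      · intro h0; exact absurd h0 hk
  choose μs h1 h2 h3 using hμs
  set q : Fin G.edgeFinset.card → VSet G → VSet G → ℝ := fun k x w =>
    if m k x = 0 then (if w = rev x then 1 else 0) else t (Es k) x w / m k x with hq
  have hmq : ∀ k x w, m k x * q k x w = t (Es k) x w := by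
    intro k x w
    by_cases h0 : m k x = 0
    · rw [h0, zero_mul, hmt k x w h0]
    · simp only [hq, if_neg h0]; field_simp
  have hTS : ∀ k, q k ∈ TS G := by
    intro k
    refine ⟨fun x w => ?_, fun x => ?_, fun x w hw => ?_⟩
    · simp only [hq]
      split_ifs
      · norm_num
      · norm_num
      · exact div_nonneg (ht0 _ _ _) (hm0 _ _)
    · by_cases h0 : m k x = 0
      · simp [hq, h0]
      · simp only [hq, if_neg h0]
        rw [← Finset.sum_div]; exact div_self h0
    · by_cases h0 : m k x = 0
      · simp only [hq, if_pos h0] at hw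
        have : w = rev x := by by_contra hc; simp [hc] at hw
        rw [this, zm_rev]
      · simp only [hq, if_neg h0] at hw
        refine (hsup (Es k) x w ?_).1
        intro h; simp [h] at hw
  have hInv : ∀ k, Invariant (μs k).1 (q k) := by
    intro k y
    by_cases hk : r k = 0
    · have hrr : ∀ x : VSet G, rev (rev x) = x := fun x => by simp [rev]
      have : ∀ x, (μs k).1 x * q k x y = if x = rev y then (μs k).1 y else 0 := by
        intro x
        simp only [hq, if_pos (hrm k x hk)]
        by_cases hx : x = rev y
        · rw [hx, if_pos (hrr y).symm, if_pos rfl, h3 k hk, mul_one]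
        · have : y ≠ rev x := fun h => hx (by rw [h, hrr])
          simp [hx, this]
      simp [this]
    · have : r k * ∑ x, (μs k).1 x * q k x y = r k * (μs k).1 y := by
        rw [Finset.mul_sum, h1]
        simp only [← mul_assoc, h1, hmq]
        rw [hm]; exact (hbal _ _).symm
      exact mul_left_cancel₀ hk this
  have hmarg : ∀ w, ∑ k, r k * (μs k).1 w = μ.1 w := by
    intro x
    rw [hμ x]
    exact Fintype.sum_of_injective Es hinj _ (fun F => ∑ w, t F x w)
      (fun F hF => by simp [hoff F hF]) (fun k => h1 k x)
  have hrS : ∀ k, Es k ∉ S0 → r k = 0 := by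
    intro k hk
    refine Finset.sum_eq_zero fun x _ => ?_
    by_contra hc
    exact hk (hmsup k x hc).2
  constructor
  · have hne : (Finset.univ.filter (fun k => Es k ∈ S0)).Nonempty := by
      by_contra hc
      rw [Finset.not_nonempty_iff_eq_empty, Finset.filter_eq_empty_iff] at hc
      have : ∑ k, r k = 0 := Finset.sum_eq_zero fun k hk => hrS k (hc hk)
      linarith
    refine ⟨Es (Finset.max' _ hne), (Finset.mem_filter.1 (Finset.max'_mem _ hne)).2, ?_⟩
    intro x hx
    rw [← hmarg] at hx
    obtain ⟨k, _, hk⟩ := Finset.exists_ne_zero_of_sum_ne_zero hx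
    rw [h1] at hk
    have := hmsup k x hk
    exact seqE_mono hEs (Finset.le_max' _ k (by simp [this.2])) this.1
  · refine sInf_le ⟨μs, r, Es, q, hEs, hE0, hr0, hrS, hr1, h2, hmarg, hTS, hInv, ?_⟩
    simp only [cost_coe hδ _ _ _ (hTS _), h1, hmq]
    rw [← ereal_sum]
    congr 1
    exact (Fintype.sum_of_injective Es hinj _ (fun F => Jf (pS G δ F) (t F))
      (fun F hF => by rw [hoff F hF]; simp [Jf]) (fun k => rfl)).symm
end P8

section P9
variable {V : Type} [Fintype V] [LinearOrder V] {G : SimpleGraph V} [DecidableRel G.Adj]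

abbrev Tri (G : SimpleGraph V) [DecidableRel G.Adj] : Type :=
  Finset (Sym2 V) × VSet G × VSet G

def Hs (n : ℕ) (g : Fin (n + 1) → VSet G) (i : Fin (n + 1)) : Finset (Sym2 V) :=
  (Finset.Iic i).image (fun j => (g j).1.1)

def tau (n : ℕ) (g : Fin (n + 1) → VSet G) (i : Fin n) : Tri G :=
  (Hs n g i.castSucc, g i.castSucc, g i.succ)

def Nn (n : ℕ) (g : Fin (n + 1) → VSet G) (x : Tri G) : ℕ :=
  (Finset.univ.filter (fun i => tau n g i = x)).card

def tt (n : ℕ) (g : Fin (n + 1) → VSet G) (F : Finset (Sym2 V)) (z w : VSet G) : ℝ :=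
  (Nn n g (F, z, w) : ℝ) / ((n : ℝ) + 1)

lemma Nn_sum (n : ℕ) (g : Fin (n + 1) → VSet G) (f : Tri G → ℝ) :
    ∑ x, (Nn n g x : ℝ) * f x = ∑ i, f (tau n g i) := by
  have : ∀ x, (Nn n g x : ℝ) * f x = ∑ i, if tau n g i = x then f x else 0 := by
    intro x
    unfold Nn
    rw [Finset.card_filter]
    push_cast
    rw [Finset.sum_mul]
    exact Finset.sum_congr rfl fun i _ => by split_ifs <;> simp
  simp only [this]
  rw [Finset.sum_comm]
  refine Finset.sum_congr rfl fun i _ => ?_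
  rw [Finset.sum_eq_single (tau n g i)]
  · rw [if_pos rfl]
  · intro b _ hb
    rw [if_neg (Ne.symm hb)]
  · intro hb
    exact absurd (Finset.mem_univ _) hb

lemma tri_sum (f : Tri G → ℝ) : ∑ x, f x = ∑ F, ∑ z, ∑ w, f (F, z, w) := by
  rw [Fintype.sum_prod_type]
  refine Finset.sum_congr rfl fun F _ => ?_
  rw [Fintype.sum_prod_type]

lemma Nn_le (n : ℕ) (g : Fin (n + 1) → VSet G) (x : Tri G) : Nn n g x ≤ n := by
  unfold Nn
  exact (Finset.card_le_univ _).trans (by simp)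

def qN (N : Tri G → ℕ) (F : Finset (Sym2 V)) (z w : VSet G) : ℝ :=
  (N (F, z, w) : ℝ) / ∑ w', (N (F, z, w') : ℝ)

lemma qN_nonneg (N : Tri G → ℕ) (F : Finset (Sym2 V)) (z w : VSet G) : 0 ≤ qN N F z w := by
  unfold qN
  exact div_nonneg (by positivity) (Finset.sum_nonneg fun _ _ => by positivity)

lemma qN_sum (N : Tri G → ℕ) (F : Finset (Sym2 V)) (z : VSet G) : ∑ w, qN N F z w ≤ 1 := by
  unfold qN
  rw [← Finset.sum_div]
  exact div_self_le_one _

lemma Jf_form {A : Type} [Fintype A] (p M : A → A → ℝ) (hM : ∀ z w, 0 ≤ M z w) :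
    Jf p M = ∑ z, ∑ w, M z w * (Real.log (M z w / ∑ w', M z w') - Real.log (p z w)) := by
  unfold Jf
  rw [← Finset.sum_sub_distrib, ← Finset.sum_sub_distrib]
  refine Finset.sum_congr rfl fun z _ => ?_
  rw [Finset.sum_mul, ← Finset.sum_sub_distrib, ← Finset.sum_sub_distrib]
  refine Finset.sum_congr rfl fun w _ => ?_
  rcases (hM z w).eq_or_lt with h0 | h0
  · rw [← h0]; simp
  · have : 0 < ∑ w', M z w' := lt_of_lt_of_le h0
      (Finset.single_le_sum (f := fun w => M z w) (fun i _ => hM z i) (Finset.mem_univ w))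
    rw [Real.log_div h0.ne' this.ne']
    ring

lemma tw_exp {K : Finset (Sym2 V) → VSet G → VSet G → ℝ} (n : ℕ) (g : Fin (n + 1) → VSet G)
    (hK : ∀ i : Fin n, 0 < K (tau n g i).1 (tau n g i).2.1 (tau n g i).2.2) :
    tw K ∅ n g = Real.exp (∑ x : Tri G, (Nn n g x : ℝ) * Real.log (K x.1 x.2.1 x.2.2)) := by
  rw [Nn_sum n g (fun x => Real.log (K x.1 x.2.1 x.2.2)), Real.exp_sum]
  unfold tw
  refine Finset.prod_congr rfl fun i _ => ?_
  rw [Real.exp_log (hK i), Finset.empty_union]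
  rfl

lemma tt_nonneg (n : ℕ) (g : Fin (n + 1) → VSet G) (F : Finset (Sym2 V)) (z w : VSet G) :
    0 ≤ tt n g F z w := by unfold tt; positivity

lemma Nn_tau_pos (n : ℕ) (g : Fin (n + 1) → VSet G) (i : Fin n) : 0 < Nn n g (tau n g i) :=
  Finset.card_pos.2 ⟨i, by simp⟩

lemma tw_type {δ : ℝ} (hδ : 0 < δ) (n : ℕ) (g : Fin (n + 1) → VSet G)
    (hg : ∀ i : Fin n, zp G (g i.castSucc) = zm G (g i.succ)) :
    tw (pS G δ) ∅ n g = tw (qN (Nn n g)) ∅ n g *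
      Real.exp (-(((n : ℝ) + 1) * ∑ F, Jf (pS G δ F) (tt n g F))) := by
  have hn : (0 : ℝ) < (n : ℝ) + 1 := by positivity
  rw [tw_exp (K := pS G δ) n g (fun i => pS_pos hδ _ (hg i)), tw_exp (K := qN (Nn n g)) n g]
  · rw [← Real.exp_add]
    congr 1
    simp only [Jf_form _ _ (tt_nonneg n g _)]
    have e1 : ((n : ℝ) + 1) * ∑ F, ∑ z, ∑ w, tt n g F z w *
        (Real.log (tt n g F z w / ∑ w', tt n g F z w') - Real.log (pS G δ F z w)) =
        ∑ x : Tri G, (Nn n g x : ℝ) * (Real.log (qN (Nn n g) x.1 x.2.1 x.2.2)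
          - Real.log (pS G δ x.1 x.2.1 x.2.2)) := by
      rw [tri_sum]
      simp only [Finset.mul_sum]
      refine Finset.sum_congr rfl fun F _ => Finset.sum_congr rfl fun z _ =>
        Finset.sum_congr rfl fun w _ => ?_
      have e2 : tt n g F z w / ∑ w', tt n g F z w' = qN (Nn n g) F z w := by
        unfold tt qN
        rw [← Finset.sum_div, div_div_div_cancel_right₀ hn.ne']
      rw [e2, ← mul_assoc]
      congr 1
      unfold tt
      field_simp
    rw [e1, ← sub_eq_add_neg, ← Finset.sum_sub_distrib]
    exact Finset.sum_congr rfl fun x _ => by ring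
  · intro i
    unfold qN
    have := Nn_tau_pos n g i
    have h1 : (0 : ℝ) < (Nn n g (tau n g i) : ℝ) := by exact_mod_cast this
    refine div_pos h1 (lt_of_lt_of_le h1 ?_)
    exact Finset.single_le_sum
      (f := fun w => (Nn n g ((tau n g i).1, (tau n g i).2.1, w) : ℝ))
      (fun _ _ => by positivity) (Finset.mem_univ (tau n g i).2.2)

lemma steps_of_pos {δ : ℝ} {n : ℕ} {g : Fin (n + 1) → VSet G}
    (hg : tw (pS G δ) ∅ n g ≠ 0) (i : Fin n) : zp G (g i.castSucc) = zm G (g i.succ) := by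
  by_contra hc
  exact hg (Finset.prod_eq_zero (Finset.mem_univ i) (pS_zero _ hc))

lemma method_types {δ : ℝ} (hδ : 0 < δ) {S0 : Set (Finset (Sym2 V))} {z : VSet G}
    (h : ProbMeas (VSet G) → ℝ) (n : ℕ) (a : ℝ)
    (hyp : ∀ g : Fin (n + 1) → VSet G, g 0 = z → tw (pS G δ) ∅ n g ≠ 0 →
      empMeas n g ∈ CC G S0 → a ≤ ∑ F, Jf (pS G δ F) (tt n g F) + h (empMeas n g)) :
    ∑ g : Fin (n + 1) → VSet G, (if empMeas n g ∈ CC G S0 then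
        Real.exp (-((n : ℝ) + 1) * h (empMeas n g)) * liftTraj G δ z n g else 0) ≤
      ((n : ℝ) + 1) ^ (Fintype.card (Tri G)) * Real.exp (-((n : ℝ) + 1) * a) := by
  have hn : (0 : ℝ) < (n : ℝ) + 1 := by positivity
  let NF : (Fin (n + 1) → VSet G) → (Tri G → Fin (n + 1)) := fun g x =>
    ⟨Nn n g x, Nat.lt_succ_of_le (Nn_le n g x)⟩
  have s1 : ∑ g : Fin (n + 1) → VSet G, (if empMeas n g ∈ CC G S0 then
        Real.exp (-((n : ℝ) + 1) * h (empMeas n g)) * liftTraj G δ z n g else 0) ≤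
      ∑ g : Fin (n + 1) → VSet G, Real.exp (-((n : ℝ) + 1) * a) *
        (if g 0 = z then tw (qN (fun x => (NF g x : ℕ))) ∅ n g else 0) := by
    refine Finset.sum_le_sum fun g _ => ?_
    rw [liftTraj_eq]
    have hq : 0 ≤ tw (qN (fun x => (NF g x : ℕ))) ∅ n g := tw_nonneg (qN_nonneg _) _ _ _
    by_cases h0 : g 0 = z
    · simp only [h0, if_true]
      have hrhs : 0 ≤ Real.exp (-((n : ℝ) + 1) * a) * tw (qN (fun x => (NF g x : ℕ))) ∅ n g := by
        positivity
      split_ifs with hC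
      · by_cases ht : tw (pS G δ) ∅ n g = 0
        · rw [ht, mul_zero]; exact hrhs
        · have := hyp g h0 ht hC
          rw [tw_type hδ n g (steps_of_pos ht)]
          change _ * (tw (qN (fun x => (NF g x : ℕ))) ∅ n g * _) ≤ _
          rw [mul_comm (tw (qN (fun x => (NF g x : ℕ))) ∅ n g), ← mul_assoc, ← Real.exp_add]
          refine mul_le_mul_of_nonneg_right ?_ hq
          rw [Real.exp_le_exp]
          nlinarith
      · exact hrhs
    · simp [h0]
  refine s1.trans ?_
  rw [← Finset.mul_sum, mul_comm]
  refine mul_le_mul_of_nonneg_right ?_ (Real.exp_pos _).le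
  rw [← Finset.sum_fiberwise Finset.univ NF]
  have s2 : ∀ N : Tri G → Fin (n + 1), ∑ g ∈ Finset.univ.filter (fun g => NF g = N),
      (if g 0 = z then tw (qN (fun x => (NF g x : ℕ))) ∅ n g else 0) ≤ 1 := by
    intro N
    refine le_trans ?_ (tw_sum_le (qN_nonneg (fun x => (N x : ℕ))) (qN_sum _) n z)
    rw [Finset.sum_congr rfl (g := fun g =>
      if g 0 = z then tw (qN (fun x => (N x : ℕ))) ∅ n g else 0)]
    · refine Finset.sum_le_sum_of_subset_of_nonneg (Finset.filter_subset _ _) fun g _ _ => ?_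
      split_ifs
      · exact tw_nonneg (qN_nonneg _) _ _ _
      · exact le_rfl
    · intro g hg
      rw [(Finset.mem_filter.1 hg).2]
  refine (Finset.sum_le_sum fun N _ => s2 N).trans ?_
  rw [Finset.sum_const, Finset.card_univ, Fintype.card_fun, Fintype.card_fin]
  simp
end P9

section P10
variable {V : Type} [Fintype V] [LinearOrder V] {G : SimpleGraph V} [DecidableRel G.Adj]

lemma mem_Hs {n : ℕ} {g : Fin (n + 1) → VSet G} {i : Fin (n + 1)} {e : Sym2 V} :
    e ∈ Hs n g i ↔ ∃ j ≤ i, (g j).1.1 = e := by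
  unfold Hs
  simp only [Finset.mem_image, Finset.mem_Iic]

lemma Hs_zero (n : ℕ) (g : Fin (n + 1) → VSet G) : Hs n g 0 = {(g 0).1.1} := by
  ext e
  rw [mem_Hs, Finset.mem_singleton]
  constructor
  · rintro ⟨j, hj, rfl⟩
    rw [Fin.le_zero_iff.1 hj]
  · rintro rfl
    exact ⟨0, le_rfl, rfl⟩

lemma Hs_succ (n : ℕ) (g : Fin (n + 1) → VSet G) (i : Fin n) :
    Hs n g i.succ = insert (g i.succ).1.1 (Hs n g i.castSucc) := by
  ext e
  rw [Finset.mem_insert, mem_Hs, mem_Hs]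
  constructor
  · rintro ⟨j, hj, rfl⟩
    by_cases h : j = i.succ
    · left; rw [h]
    · right
      refine ⟨j, ?_, rfl⟩
      have : (j : ℕ) ≠ i + 1 := fun h' => h (Fin.ext (by simpa using h'))
      rw [Fin.le_def] at hj ⊢
      simp only [Fin.val_succ, Fin.val_castSucc] at hj ⊢
      omega
  · rintro (rfl | ⟨j, hj, rfl⟩)
    · exact ⟨_, le_rfl, rfl⟩
    · refine ⟨j, ?_, rfl⟩
      rw [Fin.le_def] at hj ⊢
      simp only [Fin.val_succ, Fin.val_castSucc] at hj ⊢
      omega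

lemma Hs_self (n : ℕ) (g : Fin (n + 1) → VSet G) (i : Fin (n + 1)) : (g i).1.1 ∈ Hs n g i :=
  mem_Hs.2 ⟨i, le_rfl, rfl⟩

lemma Hs_sub (n : ℕ) (g : Fin (n + 1) → VSet G) (i : Fin (n + 1)) : Hs n g i ⊆ G.edgeFinset := by
  intro e he
  obtain ⟨j, _, rfl⟩ := mem_Hs.1 he
  exact (g j).1.2

lemma step_adj {x y : VSet G} (h : zp G x = zm G y) : edgeAdj y.1.1 x.1.1 :=
  ⟨zm G y, zm_mem y, h ▸ zp_mem x⟩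

lemma Hs_step {n : ℕ} {g : Fin (n + 1) → VSet G}
    (hg : ∀ i : Fin n, zp G (g i.castSucc) = zm G (g i.succ)) (i : Fin n) :
    Hs n g i.succ = Hs n g i.castSucc ∨ Grow G (Hs n g i.castSucc) (Hs n g i.succ) := by
  rw [Hs_succ]
  by_cases h : (g i.succ).1.1 ∈ Hs n g i.castSucc
  · left; exact Finset.insert_eq_self.2 h
  · right
    exact ⟨_, (g i.succ).1.2, h, ⟨_, Hs_self n g i.castSucc, step_adj (hg i)⟩, rfl⟩

lemma Hs_scrS {n : ℕ} {g : Fin (n + 1) → VSet G} {v₁ : V}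
    (hg : ∀ i : Fin n, zp G (g i.castSucc) = zm G (g i.succ)) (h0 : zm G (g 0) = v₁)
    (i : Fin (n + 1)) : Hs n g i ∈ scrS G v₁ := by
  induction i using Fin.induction with
  | zero =>
    rw [Hs_zero]
    exact scrS_singleton (g 0).1.2 (h0 ▸ zm_mem (g 0))
  | succ i ih =>
    rw [Hs_succ]
    exact scrS_insert ih (g i.succ).1.2 (Hs_self n g i.castSucc) (step_adj (hg i))

lemma emp_apply (n : ℕ) (g : Fin (n + 1) → VSet G) (x : VSet G) :
    (empMeas n g).1 x = (∑ i, if g i = x then (1 : ℝ) else 0) / ((n : ℝ) + 1) := by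
  unfold empMeas
  simp only [Finset.card_filter]
  push_cast
  rfl

lemma emp_ne (n : ℕ) (g : Fin (n + 1) → VSet G) (i : Fin (n + 1)) :
    (empMeas n g).1 (g i) ≠ 0 := by
  rw [emp_apply]
  have h1 : (0 : ℝ) < ∑ j, if g j = g i then (1 : ℝ) else 0 := by
    refine lt_of_lt_of_le one_pos ?_
    have := Finset.single_le_sum (f := fun j => if g j = g i then (1 : ℝ) else 0)
      (fun j _ => by split_ifs <;> norm_num) (Finset.mem_univ i)
    simpa using this
  exact (div_pos h1 (by positivity)).ne'

lemma Hs_S0 {n : ℕ} {g : Fin (n + 1) → VSet G} {v₁ : V} {S0 : Set (Finset (Sym2 V))}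
    (hS0sub : S0 ⊆ scrS G v₁) (hS0dec : DecreasingIn G v₁ S0)
    (hg : ∀ i : Fin n, zp G (g i.castSucc) = zm G (g i.succ)) (h0 : zm G (g 0) = v₁)
    (hC : empMeas n g ∈ CC G S0) (i : Fin (n + 1)) : Hs n g i ∈ S0 := by
  obtain ⟨F, hF, hsup⟩ := hC
  refine hS0dec _ F (Hs_scrS hg h0 i) (hS0sub hF) ?_ hF
  intro e he
  obtain ⟨j, _, rfl⟩ := mem_Hs.1 he
  exact hsup _ (emp_ne n g j)

lemma tt_ne {n : ℕ} {g : Fin (n + 1) → VSet G} {F : Finset (Sym2 V)} {z w : VSet G}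
    (h : tt n g F z w ≠ 0) : ∃ i : Fin n, Hs n g i.castSucc = F ∧ g i.castSucc = z ∧
      g i.succ = w := by
  by_contra hc
  push Not at hc
  apply h
  unfold tt
  have : Nn n g (F, z, w) = 0 := by
    unfold Nn
    rw [Finset.card_eq_zero, Finset.filter_eq_empty_iff]
    intro i _ hi
    simp only [tau, Prod.mk.injEq] at hi
    exact hc i hi.1 hi.2.1 hi.2.2
  rw [this]; simp

lemma Nn_real (n : ℕ) (g : Fin (n + 1) → VSet G) (F : Finset (Sym2 V)) (z w : VSet G) :
    (Nn n g (F, z, w) : ℝ) = ∑ i : Fin n,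
      if Hs n g i.castSucc = F ∧ g i.castSucc = z ∧ g i.succ = w then (1 : ℝ) else 0 := by
  unfold Nn
  rw [Finset.card_filter]
  push_cast
  refine Finset.sum_congr rfl fun i _ => ?_
  simp only [tau, Prod.mk.injEq]

lemma sum_pick {A : Type} [Fintype A] {Q : A → Prop} [DecidablePred Q] {P : Prop} [Decidable P]
    (a : A) (hQ : ∀ w, Q w ↔ P ∧ a = w) :
    ∑ w, (if Q w then (1 : ℝ) else 0) = if P then 1 else 0 := by
  rw [Finset.sum_eq_single a]
  · congr 1
    exact propext ((hQ a).trans (and_iff_left rfl))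
  · intro b _ hb
    rw [if_neg]
    intro h
    exact hb ((hQ b).1 h).2.symm
  · intro h
    exact absurd (Finset.mem_univ _) h

lemma Nn_row (n : ℕ) (g : Fin (n + 1) → VSet G) (F : Finset (Sym2 V)) (z : VSet G) :
    ∑ w, (Nn n g (F, z, w) : ℝ) = ∑ i : Fin n,
      if Hs n g i.castSucc = F ∧ g i.castSucc = z then (1 : ℝ) else 0 := by
  simp only [Nn_real]
  rw [Finset.sum_comm]
  refine Finset.sum_congr rfl fun i _ => ?_
  exact sum_pick (g i.succ) fun w => by tauto

lemma Nn_col (n : ℕ) (g : Fin (n + 1) → VSet G) (F : Finset (Sym2 V)) (z : VSet G) :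
    ∑ w, (Nn n g (F, w, z) : ℝ) = ∑ i : Fin n,
      if Hs n g i.castSucc = F ∧ g i.succ = z then (1 : ℝ) else 0 := by
  simp only [Nn_real]
  rw [Finset.sum_comm]
  refine Finset.sum_congr rfl fun i _ => ?_
  exact sum_pick (g i.castSucc) fun w => by tauto

lemma Nn_marg (n : ℕ) (g : Fin (n + 1) → VSet G) (z : VSet G) :
    ∑ F, ∑ w, (Nn n g (F, z, w) : ℝ) = ∑ i : Fin n,
      if g i.castSucc = z then (1 : ℝ) else 0 := by
  simp only [Nn_row]
  rw [Finset.sum_comm]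
  refine Finset.sum_congr rfl fun i _ => ?_
  exact sum_pick (Hs n g i.castSucc) fun w => by tauto

lemma tt_marg (n : ℕ) (g : Fin (n + 1) → VSet G) (x : VSet G) :
    |(empMeas n g).1 x - ∑ F, ∑ w, tt n g F x w| ≤ 1 / ((n : ℝ) + 1) := by
  have hn : (0 : ℝ) < (n : ℝ) + 1 := by positivity
  unfold tt
  simp only [← Finset.sum_div]
  rw [Nn_marg, emp_apply, ← sub_div, abs_div, abs_of_pos hn, Fin.sum_univ_castSucc]
  refine div_le_div_of_nonneg_right ?_ hn.le
  rw [add_sub_cancel_left]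
  split_ifs <;> simp

lemma tt_total (n : ℕ) (g : Fin (n + 1) → VSet G) :
    ∑ F, ∑ z, ∑ w, tt n g F z w = 1 - 1 / ((n : ℝ) + 1) := by
  have hn : (0 : ℝ) < (n : ℝ) + 1 := by positivity
  unfold tt
  simp only [← Finset.sum_div]
  rw [← tri_sum (fun x => (Nn n g x : ℝ))]
  have := Nn_sum n g (fun _ => 1)
  simp only [mul_one] at this
  rw [this]
  simp
  field_simp
  ring

lemma tt_bal (n : ℕ) (g : Fin (n + 1) → VSet G) (F : Finset (Sym2 V)) (z : VSet G) :
    |∑ w, tt n g F z w - ∑ w, tt n g F w z| ≤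
      ((Fintype.card (Sym2 V) : ℝ) + 1) / ((n : ℝ) + 1) := by
  have hn : (0 : ℝ) < (n : ℝ) + 1 := by positivity
  unfold tt
  simp only [← Finset.sum_div]
  rw [Nn_row, Nn_col, ← sub_div, abs_div, abs_of_pos hn]
  refine div_le_div_of_nonneg_right ?_ hn.le
  set a : Fin (n + 1) → ℝ := fun j => if Hs n g j = F ∧ g j = z then (1 : ℝ) else 0 with ha
  have ha01 : ∀ j, 0 ≤ a j ∧ a j ≤ 1 := by
    intro j; simp only [ha]; split_ifs <;> norm_num
  set k : Fin (n + 1) → ℝ := fun j => ((Hs n g j).card : ℝ) with hk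
  have t1 : ∑ i : Fin n, a i.castSucc - ∑ i : Fin n, a i.succ = a 0 - a (Fin.last n) := by
    have e1 := Fin.sum_univ_succ a
    have e2 := Fin.sum_univ_castSucc a
    linarith
  have t2 : ∑ i : Fin n, k i.succ - ∑ i : Fin n, k i.castSucc = k (Fin.last n) - k 0 := by
    have e1 := Fin.sum_univ_succ k
    have e2 := Fin.sum_univ_castSucc k
    linarith
  have kl : k (Fin.last n) ≤ Fintype.card (Sym2 V) := by
    simp only [hk]
    exact_mod_cast Finset.card_le_univ _
  have k0 : 0 ≤ k 0 := by simp only [hk]; positivity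
  have t3 : |∑ i : Fin n, a i.succ - ∑ i : Fin n,
      (if Hs n g i.castSucc = F ∧ g i.succ = z then (1 : ℝ) else 0)| ≤
      ∑ i : Fin n, k i.succ - ∑ i : Fin n, k i.castSucc := by
    rw [← Finset.sum_sub_distrib, ← Finset.sum_sub_distrib]
    refine (Finset.abs_sum_le_sum_abs _ _).trans (Finset.sum_le_sum fun i _ => ?_)
    simp only [ha, hk]
    rw [Hs_succ]
    by_cases h : (g i.succ).1.1 ∈ Hs n g i.castSucc
    · rw [Finset.insert_eq_self.2 h]; simp
    · rw [Finset.card_insert_of_notMem h]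
      push_cast
      split_ifs <;> simp
  have t4 : |a 0 - a (Fin.last n)| ≤ 1 := by
    have h1 := ha01 0
    have h2 := ha01 (Fin.last n)
    rw [abs_le]; constructor <;> linarith [h1.1, h1.2, h2.1, h2.2]
  rw [← t1] at t4
  change |∑ i : Fin n, a i.castSucc - _| ≤ _
  have := abs_sub_le (∑ i : Fin n, a i.castSucc) (∑ i : Fin n, a i.succ) (∑ i : Fin n,
      (if Hs n g i.castSucc = F ∧ g i.succ = z then (1 : ℝ) else 0))
  linarith

lemma tt_le_one (n : ℕ) (g : Fin (n + 1) → VSet G) (F : Finset (Sym2 V)) (z w : VSet G) :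
    tt n g F z w ≤ 1 := by
  unfold tt
  rw [div_le_one (by positivity)]
  have : (Nn n g (F, z, w) : ℝ) ≤ n := by exact_mod_cast Nn_le n g _
  linarith

lemma tt_chain (hG : G.Connected) {v₁ : V} {n : ℕ} {g : Fin (n + 1) → VSet G}
    (hg : ∀ i : Fin n, zp G (g i.castSucc) = zm G (g i.succ)) (h0 : zm G (g 0) = v₁) :
    ∃ Es ∈ seqE G v₁, (∀ k : Fin G.edgeFinset.card, (k : ℕ) = 0 → Es k = {(g 0).1.1}) ∧
      ∀ i, ∃ k, Es k = Hs n g i := by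
  obtain ⟨f, hf0, hf, hfi⟩ := chain_ext hG n (Hs n g) (Hs_sub n g)
    (fun i => ⟨_, Hs_self n g i⟩) (Hs_step hg)
  rw [Hs_zero] at hf0
  obtain ⟨Es, hEs, hE0, hr⟩ := chain_seqE (G := G) (v₁ := v₁) (g 0).1.2 (h0 ▸ zm_mem (g 0)) hf0 hf
  refine ⟨Es, hEs, hE0, fun i => ?_⟩
  obtain ⟨j, hj⟩ := hfi i
  obtain ⟨k, hk⟩ := hr j
  exact ⟨k, hk.trans hj⟩
end P10

section P11
variable {V : Type} [Fintype V] [LinearOrder V] {G : SimpleGraph V} [DecidableRel G.Adj]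

lemma lb_key (hG : G.Connected) {v₁ : V} {δ : ℝ} (hδ : 0 < δ) {S0 : Set (Finset (Sym2 V))}
    (hS0sub : S0 ⊆ scrS G v₁) (hS0dec : DecreasingIn G v₁ S0) {z : VSet G} (hz : zm G z = v₁)
    {h : ProbMeas (VSet G) → ℝ} (hcont : Continuous h) {a : ℝ}
    (ha : (a : EReal) <
      sInf ((fun μ => LamZ G v₁ δ S0 z μ + ((h μ : ℝ) : EReal)) '' CC G S0)) :
    ∀ᶠ n : ℕ in atTop, ∀ g : Fin (n + 1) → VSet G, g 0 = z → tw (pS G δ) ∅ n g ≠ 0 →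
      empMeas n g ∈ CC G S0 → a ≤ ∑ F, Jf (pS G δ F) (tt n g F) + h (empMeas n g) := by
  by_contra hc
  rw [Filter.not_eventually] at hc
  obtain ⟨φ, hφ, hP⟩ := Filter.extraction_of_frequently_atTop hc
  push Not at hP
  choose g hg0 hgt hgC hga using hP
  have hst := fun k => steps_of_pos (hgt k)
  have hmem : ∀ k, tt (φ k) (g k) ∈ Set.Icc (0 : Finset (Sym2 V) → VSet G → VSet G → ℝ) 1 :=
    fun k => ⟨fun F x y => tt_nonneg _ _ F x y, fun F x y => tt_le_one _ _ F x y⟩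
  obtain ⟨t, ht, ψ, hψ, hlim⟩ := isCompact_Icc.tendsto_subseq hmem
  have hθ : Tendsto (fun k => φ (ψ k)) atTop atTop := (hφ.comp hψ).tendsto_atTop
  have hinv : ∀ c : ℝ, Tendsto (fun k => c / ((φ (ψ k) : ℝ) + 1)) atTop (𝓝 0) := by
    intro c
    have := (tendsto_natCast_atTop_atTop (R := ℝ)).comp hθ
    exact Tendsto.div_atTop tendsto_const_nhds
      (tendsto_atTop_add_const_right _ _ this)
  have hent : ∀ F x y, Tendsto (fun k => tt (φ (ψ k)) (g (ψ k)) F x y) atTop (𝓝 (t F x y)) := by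
    intro F x y
    exact tendsto_pi_nhds.1 (tendsto_pi_nhds.1 (tendsto_pi_nhds.1 hlim F) x) y
  have ht0 : ∀ F x y, 0 ≤ t F x y := fun F x y => ht.1 F x y
  have ht1 : ∑ F, ∑ x, ∑ y, t F x y = 1 := by
    have l1 : Tendsto (fun k => ∑ F, ∑ x, ∑ y, tt (φ (ψ k)) (g (ψ k)) F x y) atTop
        (𝓝 (∑ F, ∑ x, ∑ y, t F x y)) :=
      tendsto_finsetSum _ fun F _ => tendsto_finsetSum _ fun x _ =>
        tendsto_finsetSum _ fun y _ => hent F x y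
    simp only [tt_total] at l1
    have l2 := (tendsto_const_nhds (x := (1 : ℝ))).sub (hinv 1)
    rw [sub_zero] at l2
    exact tendsto_nhds_unique l1 l2
  have hbal : ∀ F x, ∑ y, t F x y = ∑ y, t F y x := by
    intro F x
    have l1 : Tendsto (fun k => ∑ y, tt (φ (ψ k)) (g (ψ k)) F x y -
        ∑ y, tt (φ (ψ k)) (g (ψ k)) F y x) atTop (𝓝 (∑ y, t F x y - ∑ y, t F y x)) :=
      (tendsto_finsetSum _ fun y _ => hent F x y).sub
        (tendsto_finsetSum _ fun y _ => hent F y x)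
    have l2 := squeeze_zero_norm (f := fun k => ∑ y, tt (φ (ψ k)) (g (ψ k)) F x y -
        ∑ y, tt (φ (ψ k)) (g (ψ k)) F y x) (fun k => tt_bal (φ (ψ k)) (g (ψ k)) F x)
      (hinv ((Fintype.card (Sym2 V) : ℝ) + 1))
    exact sub_eq_zero.1 (tendsto_nhds_unique l1 l2)
  have hmsum : ∑ x, ∑ F, ∑ w, t F x w = 1 := by rw [Finset.sum_comm]; exact ht1
  let μ : ProbMeas (VSet G) := ⟨fun x => ∑ F, ∑ w, t F x w,
    fun x => Finset.sum_nonneg fun F _ => Finset.sum_nonneg fun w _ => ht0 F x w, hmsum⟩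
  have hemp : Tendsto (fun k => empMeas (φ (ψ k)) (g (ψ k))) atTop (𝓝 μ) := by
    rw [tendsto_subtype_rng, tendsto_pi_nhds]
    intro x
    have l1 : Tendsto (fun k => ∑ F, ∑ w, tt (φ (ψ k)) (g (ψ k)) F x w) atTop
        (𝓝 (∑ F, ∑ w, t F x w)) :=
      tendsto_finsetSum _ fun F _ => tendsto_finsetSum _ fun w _ => hent F x w
    have l2 := squeeze_zero_norm (f := fun k => (empMeas (φ (ψ k)) (g (ψ k))).1 x -
        ∑ F, ∑ w, tt (φ (ψ k)) (g (ψ k)) F x w) (fun k => tt_marg (φ (ψ k)) (g (ψ k)) x) (hinv 1)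
    have l3 := l2.add l1
    simp only [sub_add_cancel, zero_add] at l3
    exact l3
  have hev : ∀ᶠ k in atTop, ∀ F x y, t F x y ≠ 0 → tt (φ (ψ k)) (g (ψ k)) F x y ≠ 0 := by
    rw [eventually_all]
    intro F
    rw [eventually_all]
    intro x
    rw [eventually_all]
    intro y
    by_cases h0 : t F x y = 0
    · exact Eventually.of_forall fun k hk => absurd h0 hk
    · filter_upwards [(hent F x y).eventually_ne h0] with k hk _
      exact hk
  obtain ⟨k, hk⟩ := hev.exists
  have hzm : zm G (g (ψ k) 0) = v₁ := by rw [hg0, hz]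
  obtain ⟨Es, hEs, hE0, hEr⟩ := tt_chain hG (hst (ψ k)) hzm
  rw [hg0] at hE0
  have hL := lower_L (S0 := S0) hδ t ht0 ht1 hbal (by
    intro F x y hne
    obtain ⟨i, rfl, rfl, rfl⟩ := tt_ne (hk F x y hne)
    exact ⟨hst (ψ k) i, Hs_self _ _ _, Hs_S0 hS0sub hS0dec (hst (ψ k)) hzm (hgC (ψ k)) _⟩)
    Es hEs hE0 (by
      intro F x y hne
      obtain ⟨i, rfl, rfl, rfl⟩ := tt_ne (hk F x y hne)
      exact hEr _) μ (fun x => rfl)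
  have hJ : Tendsto (fun k => ∑ F, Jf (pS G δ F) (tt (φ (ψ k)) (g (ψ k)) F) +
      h (empMeas (φ (ψ k)) (g (ψ k)))) atTop (𝓝 (∑ F, Jf (pS G δ F) (t F) + h μ)) := by
    refine Tendsto.add (tendsto_finsetSum _ fun F _ => ?_) ((hcont.tendsto μ).comp hemp)
    exact ((Jf_cont (pS G δ F)).tendsto (t F)).comp (tendsto_pi_nhds.1 hlim F)
  have hle : ∑ F, Jf (pS G δ F) (t F) + h μ ≤ a :=
    le_of_tendsto hJ (Eventually.of_forall fun k => (hga (ψ k)).le)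
  have h1 : sInf ((fun μ => LamZ G v₁ δ S0 z μ + ((h μ : ℝ) : EReal)) '' CC G S0) ≤ (a : EReal) := by
    refine (sInf_le (Set.mem_image_of_mem _ hL.1)).trans ?_
    refine (add_le_add_left hL.2 _).trans ?_
    rw [← EReal.coe_add]
    exact EReal.coe_le_coe_iff.2 hle
  exact absurd ha (not_lt.2 h1)

lemma lower_bound (hG : G.Connected) {v₁ : V} {δ : ℝ} (hδ : 0 < δ) {S0 : Set (Finset (Sym2 V))}
    (hS0sub : S0 ⊆ scrS G v₁) (hS0dec : DecreasingIn G v₁ S0) {z : VSet G} (hz : zm G z = v₁)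
    {h : ProbMeas (VSet G) → ℝ} (hcont : Continuous h) {a a' : ℝ} (haa : a < a')
    (ha : (a' : EReal) <
      sInf ((fun μ => LamZ G v₁ δ S0 z μ + ((h μ : ℝ) : EReal)) '' CC G S0)) :
    ∀ᶠ n : ℕ in atTop, (a : EReal) < Wres G δ z S0 h n := by
  have hlog : Tendsto (fun n : ℕ => (Fintype.card (Tri G) : ℝ) *
      (Real.log ((n : ℝ) + 1) / ((n : ℝ) + 1))) atTop (𝓝 0) := by
    have l1 : Tendsto (fun x : ℝ => Real.log x / x) atTop (𝓝 0) :=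
      Real.isLittleO_log_id_atTop.tendsto_div_nhds_zero
    have l2 : Tendsto (fun n : ℕ => (n : ℝ) + 1) atTop atTop :=
      tendsto_atTop_add_const_right _ _ tendsto_natCast_atTop_atTop
    have l3 := (l1.comp l2).const_mul (Fintype.card (Tri G) : ℝ)
    rw [mul_zero] at l3
    exact l3
  filter_upwards [lb_key hG hδ hS0sub hS0dec hz hcont ha,
    hlog.eventually_lt_const (sub_pos.2 haa)] with n hn hl
  have hn0 : (0 : ℝ) < (n : ℝ) + 1 := by positivity
  have hm := method_types hδ h n a' hn
  unfold Wres
  split_ifs with hpos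
  · rw [EReal.coe_lt_coe_iff]
    have hs : 0 < ∑ g : Fin (n + 1) → VSet G, (if empMeas n g ∈ CC G S0 then
        Real.exp (-((n : ℝ) + 1) * h (empMeas n g)) * liftTraj G δ z n g else 0) := by
      have hnn : ∀ g, 0 ≤ liftTraj G δ z n g := by
        intro g
        rw [liftTraj_eq]
        split_ifs
        · exact tw_nonneg (fun F x y => pS_nonneg hδ F x y) _ _ _
        · exact le_rfl
      obtain ⟨g, _, hg⟩ := Finset.exists_ne_zero_of_sum_ne_zero hpos.ne'
      refine Finset.sum_pos' (fun g _ => ?_) ⟨g, Finset.mem_univ _, ?_⟩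
      · split_ifs
        · exact mul_nonneg (Real.exp_pos _).le (hnn g)
        · exact le_rfl
      · split_ifs at hg ⊢ with hC
        · exact mul_pos (Real.exp_pos _) (lt_of_le_of_ne (hnn g) (Ne.symm hg))
        · exact absurd rfl hg
    have hlg := Real.log_le_log hs hm
    rw [Real.log_mul (by positivity) (Real.exp_pos _).ne', Real.log_exp, Real.log_pow] at hlg
    have h2 := mul_le_mul_of_nonneg_left hlg (inv_nonneg.2 hn0.le)
    have h3 : ((n : ℝ) + 1)⁻¹ * ((Fintype.card (Tri G) : ℝ) * Real.log ((n : ℝ) + 1) +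
        -((n : ℝ) + 1) * a') = (Fintype.card (Tri G) : ℝ) *
      (Real.log ((n : ℝ) + 1) / ((n : ℝ) + 1)) - a' := by
      field_simp
      ring
    rw [h3] at h2
    linarith
  · exact EReal.coe_lt_top _
end P11

/-- Generalized Laplace principle for the restricted logarithmic
Laplace functionals `W^n_{𝒮₀}(z)`. -/
theorem orrw_laplace_principle {V : Type} [Fintype V] [LinearOrder V]
    (G : SimpleGraph V) [DecidableRel G.Adj] (hG : G.Connected)
    (hV : 3 ≤ Fintype.card V) (v₁ : V) (δ : ℝ) (hδ : 0 < δ)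
    (S0 : Set (Finset (Sym2 V))) (hS0ne : S0.Nonempty) (hS0sub : S0 ⊆ scrS G v₁)
    (hS0dec : DecreasingIn G v₁ S0)
    (z : VSet G) (hz : zm G z = v₁)
    (h : ProbMeas (VSet G) → ℝ) (hcont : Continuous h) (hbdd : ∃ M : ℝ, ∀ μ, |h μ| ≤ M) :
    Tendsto (fun n : ℕ => Wres G δ z S0 h n) atTop
      (nhds (sInf ((fun μ => LamZ G v₁ δ S0 z μ + ((h μ : ℝ) : EReal)) '' CC G S0))) := by
  rw [tendsto_order]
  constructor
  · intro b hb
    obtain ⟨a', hba', ha'⟩ := EReal.lt_iff_exists_real_btwn.1 hb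
    obtain ⟨a, hba, haa'⟩ := EReal.lt_iff_exists_real_btwn.1 hba'
    filter_upwards [lower_bound hG hδ hS0sub hS0dec hz hcont (EReal.coe_lt_coe_iff.1 haa') ha']
      with n hn
    exact hba.trans hn
  · intro b hb
    obtain ⟨A, hA, hAb⟩ := EReal.lt_iff_exists_real_btwn.1 hb
    filter_upwards [upper_bound hδ hcont hA] with n hn
    exact hn.trans hAb

end ORRW
end
end

section
/- Let 𝒮₀ be a nonempty decreasing subset of 𝒮 and δ>0. For every μ∈𝒫(V_S): Λ_{δ,𝒮₀}(μ) < ∞ if and only if μ∈𝒞(𝒮₀) and there exists q∈𝒯_S with μq=μ. -/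
open scoped BigOperators Classical ENNReal
open Filter Topology

noncomputable section
namespace ORRW

lemma exists_adj_edge {V : Type} (A B : Finset (Sym2 V)) (hne : A.Nonempty) (hAB : A ⊂ B)
    (hB : ∀ x y : V, memVerts B x → memVerts B y →
      (SimpleGraph.fromEdgeSet (↑B : Set (Sym2 V))).Reachable x y) :
    ∃ e ∈ B, e ∉ A ∧ ∃ e' ∈ A, edgeAdj e e' := by
  obtain ⟨e, heB, heA⟩ := Finset.exists_of_ssubset hAB
  obtain ⟨a, ha⟩ := hne
  have hex : ∀ e : Sym2 V, ∃ v, v ∈ e := fun e => by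
    induction e with
    | _ x y => exact ⟨x, Sym2.mem_mk_left x y⟩
  obtain ⟨u, hu⟩ := hex a
  obtain ⟨x, hx⟩ := hex e
  by_cases hxA : memVerts A x
  · obtain ⟨e', he', hxe'⟩ := hxA
    exact ⟨e, heB, heA, e', he', x, hx, hxe'⟩
  obtain ⟨w⟩ := hB u x ⟨a, hAB.1 ha, hu⟩ ⟨e, heB, hx⟩
  obtain ⟨d, hd, h1, h2⟩ := w.exists_boundary_dart {v | memVerts A v} ⟨a, ha, hu⟩ hxA
  have hadj := d.adj
  rw [SimpleGraph.fromEdgeSet_adj] at hadj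
  obtain ⟨e', he', hxe'⟩ := h1
  refine ⟨s(d.fst, d.snd), by simpa using hadj.1, fun hmem => h2 ⟨_, hmem, Sym2.mem_mk_right _ _⟩,
    e', he', d.fst, Sym2.mem_mk_left _ _, hxe'⟩

lemma exists_seq {V : Type} [Fintype V] [DecidableEq V]
    (G : SimpleGraph V) [DecidableRel G.Adj] (hG : G.Connected) (v₁ : V)
    (F : Finset (Sym2 V)) (hF : F ∈ scrS G v₁) :
    ∃ Es ∈ seqE G v₁, (∃ k, Es k = F) ∧ ∃ e, ∀ k, e ∈ Es k := by
  obtain ⟨hFE, ⟨e0, he0, hv⟩, hconn⟩ := hF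
  have hE : ∀ x y : V, memVerts G.edgeFinset x → memVerts G.edgeFinset y →
      (SimpleGraph.fromEdgeSet (↑G.edgeFinset : Set (Sym2 V))).Reachable x y := by
    intro x y _ _
    have : SimpleGraph.fromEdgeSet (↑G.edgeFinset : Set (Sym2 V)) = G := by
      rw [SimpleGraph.coe_edgeFinset, SimpleGraph.fromEdgeSet_edgeSet]
    rw [this]
    exact hG.preconnected x y
  let good : Finset (Sym2 V) → Prop := fun A => e0 ∈ A ∧ A ⊆ G.edgeFinset ∧ (A ⊆ F ∨ F ⊆ A)
  have step : ∀ A : Finset (Sym2 V), ∃ A' : Finset (Sym2 V), good A → A ≠ G.edgeFinset →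
      (good A' ∧ A ⊂ A' ∧ A'.card = A.card + 1 ∧ ∀ e ∈ A', e ∉ A → ∃ e' ∈ A, edgeAdj e e') := by
    intro A
    by_cases hA : good A
    swap
    · exact ⟨A, fun h => absurd h hA⟩
    by_cases hAE : A = G.edgeFinset
    · exact ⟨A, fun _ h => absurd hAE h⟩
    have key : ∃ e ∈ G.edgeFinset, e ∉ A ∧ (∃ e' ∈ A, edgeAdj e e') ∧
        (insert e A ⊆ F ∨ F ⊆ insert e A) := by
      by_cases hFA : F ⊆ A
      · obtain ⟨e, h1, h2, h3⟩ := exists_adj_edge A G.edgeFinset ⟨e0, hA.1⟩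
          (Finset.ssubset_iff_subset_ne.2 ⟨hA.2.1, hAE⟩) hE
        exact ⟨e, h1, h2, h3, Or.inr (hFA.trans (Finset.subset_insert _ _))⟩
      · have hAF : A ⊆ F := hA.2.2.resolve_right hFA
        obtain ⟨e, h1, h2, h3⟩ := exists_adj_edge A F ⟨e0, hA.1⟩ ⟨hAF, hFA⟩ hconn
        exact ⟨e, hFE h1, h2, h3, Or.inl (Finset.insert_subset h1 hAF)⟩
    obtain ⟨e, h1, h2, h3, h4⟩ := key
    refine ⟨insert e A, fun _ _ => ⟨⟨Finset.mem_insert_of_mem hA.1,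
      Finset.insert_subset h1 hA.2.1, h4⟩, Finset.ssubset_insert h2,
      Finset.card_insert_of_notMem h2, ?_⟩⟩
    intro e' he' hn
    rcases Finset.mem_insert.1 he' with rfl | h
    · exact h3
    · exact absurd h hn
  choose f hf using step
  let s : ℕ → Finset (Sym2 V) := fun n => f^[n] {e0}
  have s0 : s 0 = {e0} := rfl
  have ss : ∀ n, s (n + 1) = f (s n) := fun n => Function.iterate_succ_apply' f n _
  have main : ∀ n, n < G.edgeFinset.card → good (s n) ∧ (s n).card = n + 1 := by
    intro n
    induction n with
    | zero =>
      intro _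
      refine ⟨⟨by simp [s0], ?_, Or.inl ?_⟩, by simp [s0]⟩
      · rw [s0]; exact Finset.singleton_subset_iff.2 (hFE he0)
      · rw [s0]; exact Finset.singleton_subset_iff.2 he0
    | succ n ih =>
      intro hn
      obtain ⟨g, hc⟩ := ih (by omega)
      have hne : s n ≠ G.edgeFinset := fun h => by rw [h] at hc; omega
      obtain ⟨g', _, hc', _⟩ := hf (s n) g hne
      rw [ss]
      exact ⟨g', by rw [hc', hc]⟩
  have main2 : ∀ n, n + 1 < G.edgeFinset.card →
      s n ⊂ s (n + 1) ∧ ∀ e ∈ s (n + 1), e ∉ s n → ∃ e' ∈ s n, edgeAdj e e' := by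
    intro n hn
    obtain ⟨g, hc⟩ := main n (by omega)
    have hne : s n ≠ G.edgeFinset := fun h => by rw [h] at hc; omega
    obtain ⟨_, h1, _, h2⟩ := hf (s n) g hne
    rw [ss]
    exact ⟨h1, h2⟩
  refine ⟨fun k => s k, ⟨fun k => (main k k.2).1.2.1, fun k => (main k k.2).2, ?_, ?_, ?_⟩,
    ?_, e0, fun k => (main k k.2).1.1⟩
  · intro k l hkl
    have := (main2 k (by have := l.2; omega)).1
    rwa [hkl] at this
  · intro k hk
    exact ⟨e0, (main k k.2).1.1, hv⟩
  · intro k l hkl e he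
    have := (main2 k (by have := l.2; omega)).2
    rw [hkl] at this
    rw [Finset.mem_sdiff] at he
    exact this e he.1 he.2
  · have hpos : 0 < F.card := Finset.card_pos.2 ⟨e0, he0⟩
    have hle : F.card ≤ G.edgeFinset.card := Finset.card_le_card hFE
    refine ⟨⟨F.card - 1, by omega⟩, ?_⟩
    obtain ⟨g, hc⟩ := main (F.card - 1) (by omega)
    show s (F.card - 1) = F
    rcases g.2.2 with h | h
    · exact Finset.eq_of_subset_of_card_le h (by omega)
    · exact (Finset.eq_of_subset_of_card_le h (by omega)).symm

/-- Reversal of an oriented edge. -/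
def flipZ {V : Type} [Fintype V] [LinearOrder V]
    (G : SimpleGraph V) [DecidableRel G.Adj] (z : VSet G) : VSet G := (z.1, !z.2)

/-- The kernel that deterministically reverses the orientation. -/
def flipK {V : Type} [Fintype V] [LinearOrder V]
    (G : SimpleGraph V) [DecidableRel G.Adj] (z w : VSet G) : ℝ := if w = flipZ G z then 1 else 0

lemma flipK_mem {V : Type} [Fintype V] [LinearOrder V]
    (G : SimpleGraph V) [DecidableRel G.Adj] : flipK G ∈ TS G := by
  refine ⟨fun z w => ?_, fun z => ?_, fun z w h => ?_⟩
  · unfold flipK; split_ifs <;> norm_num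
  · simp [flipK]
  · unfold flipK at h
    have : w = flipZ G z := by
      by_contra hh
      simp [hh] at h
    subst this
    obtain ⟨e, b⟩ := z
    cases b <;> simp [zp, zm, flipZ]

lemma exists_flip_inv {V : Type} [Fintype V] [LinearOrder V]
    (G : SimpleGraph V) [DecidableRel G.Adj] (e : Sym2 V) (he : e ∈ G.edgeFinset) :
    ∃ ν : ProbMeas (VSet G), (∀ z, ν.1 z ≠ 0 → z.1.1 = e) ∧ Invariant ν.1 (flipK G) := by
  refine ⟨⟨fun z => if z.1 = ⟨e, he⟩ then 1 / 2 else 0, fun z => ?_, ?_⟩, ?_, ?_⟩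
  · dsimp only; split_ifs <;> norm_num
  · rw [Fintype.sum_prod_type]
    simp
  · intro z hz
    by_contra hh
    apply hz
    have : z.1 ≠ ⟨e, he⟩ := fun h => hh (by rw [h])
    simp [this]
  · intro y
    have : ∀ x : VSet G, y = flipZ G x ↔ x = flipZ G y := by
      rintro ⟨a, b⟩
      obtain ⟨a', b'⟩ := y
      cases b <;> cases b' <;> simp [flipZ, eq_comm]
    simp only [flipK, this]
    rw [Finset.sum_eq_single (flipZ G y)]
    · simp [flipZ]
    · intro x _ hx; rw [if_neg hx, mul_zero]
    · simp

lemma relEntInt_ne_top {V : Type} [Fintype V] [LinearOrder V]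
    (G : SimpleGraph V) [DecidableRel G.Adj] (δ : ℝ) (hδ : 0 < δ) (F : Finset (Sym2 V))
    (ν : VSet G → ℝ) (q : VSet G → VSet G → ℝ) (hq : q ∈ TS G) :
    relEntInt ν q (pS G δ F) < ⊤ := by
  have hg : ∀ e, 0 < gw δ F e := fun e => by unfold gw; split_ifs <;> [exact hδ; norm_num]
  have hac : ∀ z w, pS G δ F z w = 0 → q z w = 0 := by
    intro z w h
    by_contra hne
    have hzw := hq.2.2 z w hne
    rw [pS, if_pos hzw] at h
    have hs : 0 < ∑ w : VSet G, (if zp G z = zm G w then gw δ F w.1.1 else 0) := by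
      refine Finset.sum_pos' (fun i _ => ?_) ⟨w, Finset.mem_univ _, ?_⟩
      · split_ifs <;> [exact (hg _).le; exact le_rfl]
      · rw [if_pos hzw]; exact hg _
    exact (div_pos (hg _) hs).ne' h
  have hcoe : ∀ f : VSet G → ℝ, ((∑ z, f z : ℝ) : EReal) = ∑ z, (f z : EReal) := fun f =>
    map_sum (⟨⟨Real.toEReal, EReal.coe_zero⟩, EReal.coe_add⟩ : ℝ →+ EReal) f Finset.univ
  have : relEntInt ν q (pS G δ F) =
      ((∑ z, ν z * ∑ w, q z w * Real.log (q z w / pS G δ F z w) : ℝ) : EReal) := by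
    rw [relEntInt, hcoe]
    refine Finset.sum_congr rfl fun z _ => ?_
    rw [relEnt, if_pos (hac z), EReal.coe_mul]
  rw [this]
  exact EReal.coe_lt_top _

lemma seqE_mono_s12 {V : Type} [Fintype V] [DecidableEq V]
    (G : SimpleGraph V) [DecidableRel G.Adj] (v₁ : V) (Es) (h : Es ∈ seqE G v₁) :
    ∀ k l, k ≤ l → Es k ⊆ Es l := by
  have : ∀ n : ℕ, ∀ k l : Fin G.edgeFinset.card, (l : ℕ) = k + n → Es k ⊆ Es l := by
    intro n
    induction n with
    | zero => intro k l hkl; rw [show l = k from Fin.ext (by simpa using hkl)]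
    | succ n ih =>
      intro k l hkl
      have hl := l.2
      exact (ih k ⟨k + n, by omega⟩ rfl).trans
        (h.2.2.1 ⟨k + n, by omega⟩ l (by simp only; omega)).1
  intro k l hkl
  exact this (l - k) k l (by have : (k : ℕ) ≤ l := hkl; omega)

/-- `Λ_{δ,𝒮₀}(μ) < ∞` iff `μ ∈ 𝒞(𝒮₀)` and `μ` is invariant for
some `q ∈ 𝒯_S`. -/
theorem orrw_Lam_finite_iff {V : Type} [Fintype V] [LinearOrder V]
    (G : SimpleGraph V) [DecidableRel G.Adj] (hG : G.Connected)
    (hV : 3 ≤ Fintype.card V) (v₁ : V) (δ : ℝ) (hδ : 0 < δ)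
    (S0 : Set (Finset (Sym2 V))) (hS0ne : S0.Nonempty) (hS0sub : S0 ⊆ scrS G v₁)
    (hS0dec : DecreasingIn G v₁ S0) :
    ∀ μ : ProbMeas (VSet G),
      Lam G v₁ δ S0 μ < ⊤ ↔ (μ ∈ CC G S0 ∧ ∃ q ∈ TS G, Invariant μ.1 q) := by
  intro μ
  constructor
  · intro h
    rw [Lam, sInf_lt_iff] at h
    obtain ⟨c, ⟨μs, r, Es, qs, hEs, hr0, hrS, hr1, hsupp, hmix, hqT, hinv, -⟩, -⟩ := h
    constructor
    · have hne : (Finset.univ.filter (fun k => r k ≠ 0)).Nonempty := by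
        by_contra hh
        rw [Finset.not_nonempty_iff_eq_empty, Finset.filter_eq_empty_iff] at hh
        have : ∑ k, r k = 0 := Finset.sum_eq_zero fun k hk => not_not.1 (hh hk)
        rw [hr1] at this
        exact one_ne_zero this
      obtain ⟨l, hl, hmax⟩ := Finset.exists_max_image _ id hne
      refine ⟨Es l, ?_, ?_⟩
      · by_contra hh
        exact (Finset.mem_filter.1 hl).2 (hrS l hh)
      · intro z hz
        rw [← hmix z] at hz
        obtain ⟨k, _, hk⟩ := Finset.exists_ne_zero_of_sum_ne_zero hz
        have hrk := left_ne_zero_of_mul hk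
        exact seqE_mono_s12 G v₁ Es hEs k l (hmax k (by simp [hrk]))
          (hsupp k z (right_ne_zero_of_mul hk))
    · have hfl := flipK_mem G
      refine ⟨fun z w => if μ.1 z = 0 then flipK G z w else
        (∑ k, r k * (μs k).1 z * qs k z w) / μ.1 z, ⟨?_, ?_, ?_⟩, ?_⟩
      · intro z w
        dsimp only
        split_ifs
        · exact hfl.1 z w
        · exact div_nonneg (Finset.sum_nonneg fun k _ => mul_nonneg
            (mul_nonneg (hr0 k) ((μs k).2.1 z)) ((hqT k).1 z w)) (μ.2.1 z)
      · intro z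
        dsimp only
        split_ifs with h0
        · exact hfl.2.1 z
        · rw [← Finset.sum_div, Finset.sum_comm]
          simp only [← Finset.mul_sum, (hqT _).2.1 z, mul_one, hmix]
          exact div_self h0
      · intro z w hne
        dsimp only at hne
        split_ifs at hne with h0
        · exact hfl.2.2 z w hne
        · have := left_ne_zero_of_mul (by rwa [div_eq_mul_inv] at hne)
          obtain ⟨k, _, hk⟩ := Finset.exists_ne_zero_of_sum_ne_zero this
          exact (hqT k).2.2 z w (right_ne_zero_of_mul hk)
      · intro y
        have h1 : ∀ x, μ.1 x * (if μ.1 x = 0 then flipK G x y else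
            (∑ k, r k * (μs k).1 x * qs k x y) / μ.1 x) = ∑ k, r k * (μs k).1 x * qs k x y := by
          intro x
          split_ifs with h0
          · rw [h0, zero_mul]
            symm
            have h2 := hmix x
            rw [h0, Finset.sum_eq_zero_iff_of_nonneg
              (fun k _ => mul_nonneg (hr0 k) ((μs k).2.1 x))] at h2
            exact Finset.sum_eq_zero fun k hk => by rw [h2 k hk, zero_mul]
          · exact mul_div_cancel₀ _ h0
        simp only [h1]
        rw [Finset.sum_comm, ← hmix y]
        refine Finset.sum_congr rfl fun k _ => ?_
        rw [← hinv k y, Finset.mul_sum]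
        exact Finset.sum_congr rfl fun x _ => by ring
  · rintro ⟨⟨F, hFS, hsupp⟩, q, hq, hinv⟩
    obtain ⟨Es, hEs, ⟨k0, hk0⟩, e, he⟩ := exists_seq G hG v₁ F (hS0sub hFS)
    obtain ⟨ν, hν, hνinv⟩ := exists_flip_inv G e (hEs.1 k0 (he k0))
    rw [Lam, sInf_lt_iff]
    refine ⟨_, ⟨fun k => if k = k0 then μ else ν, fun k => if k = k0 then 1 else 0, Es,
      fun k => if k = k0 then q else flipK G, hEs, ?_, ?_, ?_, ?_, ?_, ?_, ?_, rfl⟩, ?_⟩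
    · intro k; dsimp only; split_ifs <;> norm_num
    · intro k hk
      have : k ≠ k0 := by rintro rfl; exact hk (hk0 ▸ hFS)
      simp [this]
    · simp
    · intro k z hz
      by_cases hk : k = k0
      · subst hk
        simp only [if_true] at hz
        rw [hk0]; exact hsupp z hz
      · simp only [hk, if_false] at hz
        rw [hν z hz]; exact he k
    · intro z
      rw [Finset.sum_eq_single k0]
      · simp
      · intro k _ hk; simp [hk]
      · simp
    · intro k; dsimp only; split_ifs
      · exact hq
      · exact flipK_mem G
    · intro k; dsimp only; split_ifs
      · exact hinv
      · exact hνinv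
    · rw [Finset.sum_eq_single k0]
      · simpa using relEntInt_ne_top G δ hδ (Es k0) μ.1 q hq
      · intro k _ hk; simp [hk]
      · simp


end ORRW
end
end
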